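/- Let α be an irrational vector in ℝ² and let S be a convex polygon in ℝ² (the convex hull of finitely many points, with nonempty interior). Then S is a bounded remainder set with respect to α if and only if S is centrally symmetric and for each pair of parallel edges e and e′ of S the following two conditions hold: (1) there exist a point on e and a point on e′ that differ by a vector in ℤα + ℤ²; (2) if the midpoints of e and e′ do not differ by a vector in ℤα + ℤ², then the edge vectors of e and e′ themselves belong to ℤα + ℤ². -/

import Mathlib

/-!
# Convex polygons of bounded remainder

The link between the two sides of the equivalence is that moving a point `x` across the polygon
changes `χ_S` by the signed number of edges crossed.

*Sufficiency.* For a fixed displacement `d`, the difference `χ_S (x + d) - χ_S x` is the sum over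
the edges of plus or minus the multiplicity function of the parallelogram `PS d a b` swept by the
edge (`ind_diff`, `mf_diff`). In a centrally symmetric polygon opposite edges occur with opposite
signs. The arithmetic conditions allow one to carry an edge to the opposite one either by a
translation from `ℤα + ℤ²`, or, when the edge vector belongs to `ℤα + ℤ²`, by sliding the edge along
its line followed by such a translation. Both operations change Birkhoff sums by a bounded amount
(`edge_pair`), so the Birkhoff sums of `S` at `x + d` and `x` differ boundedly (`bs_var`). Averaging
over `d` in the unit square replaces the first of them by `n · Leb S` (`brs_of_var`).

*Necessity.* If the discrepancies are bounded, then there is a nonempty open set `B` at whose return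
times they are at most `1 / 4` (`small_returns`). Comparing two points on either side of the line of
an edge, the numbers of visits of an orbit segment with endpoints in `B` to the edge and to the
opposite face differ by at most `1 / 2`, hence agree (`sum_balance`). Kronecker's theorem (`visits`)
supplies arbitrarily long orbit segments of this kind, so the edge and the opposite face contain
equally many points of each coset of `ℤα + ℤ²` that is generic, in particular avoids the vertices
(`hits_eq`). As `ℤα + ℤ²` meets a line in a cyclic group (`lin_cyclic`), this is a
statement about counting points of translates of a cyclic group in two intervals; it forces equal
lengths and the arithmetic conditions (`one_dim`, `opposite`). Finally, if every edge has an
opposite edge of the same length, then opposite faces are exchanged by a point reflection whose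
center is locally constant in the direction of the faces, hence constant, and `S` is centrally
symmetric (`symm_of_opposite`).
-/

open MeasureTheory

/-- The multiplicity function of the projection of `S ⊆ ℝ^d` to the torus `ℝ^d/ℤ^d`,
viewed as a `ℤ^d`-periodic function on `ℝ^d`. -/
noncomputable def multFn {d : ℕ} (S : Set (Fin d → ℝ)) (x : Fin d → ℝ) : ℝ :=
  ∑' k : Fin d → ℤ, Set.indicator S (fun _ => (1 : ℝ)) (x + fun i => (k i : ℝ))

/-- The discrepancy `∑_{k=0}^{n-1} χ_S(x + k v) − n · Leb(S)`. -/
noncomputable def disc {d : ℕ} (v : Fin d → ℝ) (S : Set (Fin d → ℝ)) (n : ℕ)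
    (x : Fin d → ℝ) : ℝ :=
  (∑ k ∈ Finset.range n, multFn S (x + (k : ℝ) • v)) - n * (volume S).toReal

/-- `S` is a bounded remainder set with respect to the vector `v`. -/
def IsBRS {d : ℕ} (v : Fin d → ℝ) (S : Set (Fin d → ℝ)) : Prop :=
  ∃ C : ℝ, ∀ᵐ x : Fin d → ℝ, ∀ n : ℕ, 1 ≤ n → |disc v S n x| ≤ C

/-- `α ∈ ℝ^d` is an irrational vector: `1, α₁, …, α_d` are linearly independent over `ℚ`. -/
def IsIrrationalVector {d : ℕ} (α : Fin d → ℝ) : Prop :=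
  ∀ (n₀ : ℤ) (n : Fin d → ℤ), (n₀ : ℝ) + ∑ i, (n i : ℝ) * α i = 0 → n₀ = 0 ∧ n = 0

/-- The subgroup `ℤα + ℤ^d` of `ℝ^d`. -/
def lat {d : ℕ} (α : Fin d → ℝ) : Set (Fin d → ℝ) :=
  {v | ∃ (q : ℤ) (p : Fin d → ℤ), v = (q : ℝ) • α + fun i => (p i : ℝ)}

/-- The parallelepiped spanned by the vectors `v 1, …, v d`. -/
def paral {d : ℕ} (v : Fin d → Fin d → ℝ) : Set (Fin d → ℝ) :=
  {x | ∃ t : Fin d → ℝ, (∀ k, 0 ≤ t k ∧ t k < 1) ∧ x = ∑ k, t k • v k}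

/-- A `ℤ^d`-periodic function on `ℝ^d`, i.e. a function on the torus. -/
def IsZdPeriodic {d : ℕ} (g : (Fin d → ℝ) → ℝ) : Prop :=
  ∀ (x : Fin d → ℝ) (k : Fin d → ℤ), g (x + fun i => (k i : ℝ)) = g x

/-- `g` is a transfer function for `S` with respect to `v`:
a function on the torus with `χ_S(x) − Leb S = g(x) − g(x−v)` a.e. -/
def IsTransfer {d : ℕ} (v : Fin d → ℝ) (S : Set (Fin d → ℝ)) (g : (Fin d → ℝ) → ℝ) : Prop :=
  IsZdPeriodic g ∧
    ∀ᵐ x : Fin d → ℝ, multFn S x - (volume S).toReal = g x - g (x - v)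

/-- A bounded function whose set of discontinuity points is Lebesgue-null. -/
def RiemannIntegrableFn {d : ℕ} (g : (Fin d → ℝ) → ℝ) : Prop :=
  (∃ M : ℝ, ∀ x, |g x| ≤ M) ∧ volume {x | ¬ ContinuousAt g x} = 0

/-- A bounded set is Riemann measurable if its boundary is Lebesgue-null. -/
def IsRiemannMeasurable {d : ℕ} (S : Set (Fin d → ℝ)) : Prop :=
  Bornology.IsBounded S ∧ volume (frontier S) = 0

/-- `S` and `S'` are equidecomposable, with pieces satisfying the predicate `P`,
using translations by vectors in `Γ`. -/
def EquidecompBy {d : ℕ} (P : Set (Fin d → ℝ) → Prop)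
    (S S' : Set (Fin d → ℝ)) (Γ : Set (Fin d → ℝ)) : Prop :=
  ∃ (N : ℕ) (A : Fin N → Set (Fin d → ℝ)) (γ : Fin N → Fin d → ℝ),
    (∀ i, P (A i)) ∧ (∀ i, γ i ∈ Γ) ∧
    (∀ i j, i ≠ j → volume (A i ∩ A j) = 0) ∧
    volume (symmDiff S (⋃ i, A i)) = 0 ∧
    (∀ i j, i ≠ j → volume (((fun x => x + γ i) '' A i) ∩ ((fun x => x + γ j) '' A j)) = 0) ∧
    volume (symmDiff S' (⋃ i, (fun x => x + γ i) '' A i)) = 0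

/-- A set is centrally symmetric if it equals its reflection about some point `c`. -/
def IsCentrallySymmetric {d : ℕ} (A : Set (Fin d → ℝ)) : Prop :=
  ∃ c : Fin d → ℝ, ∀ x, x ∈ A ↔ (2 : ℝ) • c - x ∈ A


/-- `[a,b]` (with `a ≠ b`) is an edge of `S`, i.e. a one-dimensional exposed face. -/
def IsEdgeOf (S : Set (Fin 2 → ℝ)) (a b : Fin 2 → ℝ) : Prop :=
  a ≠ b ∧ IsExposed ℝ S (segment ℝ a b)

/-! ### Kronecker's theorem on the two-dimensional torus -/

/-- The integer vector `m` viewed in the plane. -/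
def zv (m : Fin 2 → ℤ) : Fin 2 → ℝ := fun i => (m i : ℝ)

@[simp] lemma zv_apply (m : Fin 2 → ℤ) (i : Fin 2) : zv m i = (m i : ℝ) := rfl
@[simp] lemma zv_add (m n : Fin 2 → ℤ) : zv (m + n) = zv m + zv n := by ext i; simp
@[simp] lemma zv_neg (m : Fin 2 → ℤ) : zv (-m) = -zv m := by ext i; simp
@[simp] lemma zv_sub (m n : Fin 2 → ℤ) : zv (m - n) = zv m - zv n := by ext i; simp
@[simp] lemma zv_zero : zv 0 = 0 := by ext i; simp

lemma irr2 {α : Fin 2 → ℝ} (hα : IsIrrationalVector α) (n0 a b : ℤ)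
    (h : (n0 : ℝ) + a * α 0 + b * α 1 = 0) : n0 = 0 ∧ a = 0 ∧ b = 0 := by
  have := hα n0 ![a, b] (by simp [Fin.sum_univ_two]; linarith)
  refine ⟨this.1, ?_, ?_⟩
  · simpa using congrFun this.2 0
  · simpa using congrFun this.2 1

lemma IsIrrationalVector.neg' {α : Fin 2 → ℝ} (hα : IsIrrationalVector α) :
    IsIrrationalVector (-α) := by
  intro n0 n h
  have := hα n0 (-n) (by simpa [Fin.sum_univ_two] using h)
  exact ⟨this.1, by simpa using this.2⟩

open Filter Topology in
/-- Along the orbit of `α`, the exponential sums of a nontrivial character stay bounded, so the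
Cesàro means of every trigonometric polynomial along the orbits of any two points
have the same limit. -/
lemma cesaro_diff {α : Fin 2 → ℝ} (hα : IsIrrationalVector α) (p : UnitAddTorus (Fin 2))
    (g : C(UnitAddTorus (Fin 2), ℂ))
    (hg : g ∈ Submodule.span ℂ (Set.range (UnitAddTorus.mFourier (d := Fin 2)))) :
    Tendsto (fun N : ℕ => (N : ℂ)⁻¹ * ∑ k ∈ Finset.range N,
      (g (p + k • (fun i => (α i : UnitAddCircle))) - g (k • (fun i => (α i : UnitAddCircle)))))
      atTop (𝓝 0) := by
  set a : UnitAddTorus (Fin 2) := fun i => (α i : UnitAddCircle) with ha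
  induction hg using Submodule.span_induction with
  | zero => simp
  | add x y _ _ hx hy =>
    have := hx.add hy
    simp only [add_zero] at this
    refine this.congr fun N => ?_
    rw [← mul_add, ← Finset.sum_add_distrib]
    congr 1
    refine Finset.sum_congr rfl fun k _ => ?_
    simp only [ContinuousMap.add_apply]; ring
  | smul c x _ hx =>
    have := hx.const_mul c
    simp only [mul_zero] at this
    refine this.congr fun N => ?_
    rw [mul_left_comm, Finset.mul_sum]
    congr 1
    refine Finset.sum_congr rfl fun k _ => ?_
    simp only [ContinuousMap.smul_apply, smul_eq_mul]; ring
  | mem x hx =>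
    obtain ⟨n, rfl⟩ := hx
    by_cases hn : n = 0
    · subst hn
      simp [UnitAddTorus.mFourier_zero]
    have hadd : ∀ x y : UnitAddTorus (Fin 2), UnitAddTorus.mFourier n (x + y) =
        UnitAddTorus.mFourier n x * UnitAddTorus.mFourier n y := by
      intro x y
      simp only [UnitAddTorus.mFourier, ContinuousMap.coe_mk, ← Finset.prod_mul_distrib]
      refine Finset.prod_congr rfl fun i _ => ?_
      simp [fourier_apply, smul_add, AddCircle.toCircle_add]
    have h0 : UnitAddTorus.mFourier n 0 = 1 := by
      simp [UnitAddTorus.mFourier]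
    have hpow : ∀ k : ℕ, UnitAddTorus.mFourier n (k • a) = (UnitAddTorus.mFourier n a) ^ k := by
      intro k
      induction k with
      | zero => simpa using h0
      | succ k ih => rw [succ_nsmul, hadd, ih, pow_succ]
    set z : ℂ := UnitAddTorus.mFourier n a with hz
    have hz1 : z ≠ 1 := by
      intro h1
      rw [hz] at h1
      simp only [UnitAddTorus.mFourier, ContinuousMap.coe_mk, ha, fourier_coe_apply,
        Fin.prod_univ_two] at h1
      rw [← Complex.exp_add, Complex.exp_eq_one_iff] at h1
      obtain ⟨m, hm⟩ := h1
      have h2 : ((n 0 : ℂ) * α 0 + n 1 * α 1) * (2 * Real.pi * Complex.I)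
          = m * (2 * Real.pi * Complex.I) := by
        rw [← hm]; push_cast; ring
      have h3 := mul_right_cancel₀ Complex.two_pi_I_ne_zero h2
      have h4 : (n 0 : ℝ) * α 0 + n 1 * α 1 = m := by exact_mod_cast h3
      have := irr2 hα (-m) (n 0) (n 1) (by push_cast; linarith)
      apply hn
      ext i; fin_cases i
      · exact this.2.1
      · exact this.2.2
    have hznorm : ∀ N : ℕ, ‖z ^ N‖ ≤ 1 := by
      intro N
      rw [norm_pow]
      refine pow_le_one₀ (norm_nonneg _) ?_
      exact ((UnitAddTorus.mFourier n).norm_coe_le_norm a).trans (UnitAddTorus.mFourier_norm).le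
    have hb : ∀ N : ℕ, ‖∑ k ∈ Finset.range N, (z ^ k : ℂ)‖ ≤ 2 / ‖z - 1‖ := by
      intro N
      rw [geom_sum_eq hz1, norm_div]
      gcongr
      calc ‖z ^ N - 1‖ ≤ ‖z ^ N‖ + ‖(1 : ℂ)‖ := norm_sub_le _ _
        _ ≤ 1 + 1 := by gcongr; exact hznorm N; simp
        _ = 2 := by norm_num
    set c : ℂ := UnitAddTorus.mFourier n p - 1
    have heq : ∀ N : ℕ, (N : ℂ)⁻¹ * ∑ k ∈ Finset.range N,
      (UnitAddTorus.mFourier n (p + k • a) - UnitAddTorus.mFourier n (k • a))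
       = (N : ℂ)⁻¹ * (c * ∑ k ∈ Finset.range N, z ^ k) := by
      intro N
      congr 1
      rw [Finset.mul_sum]
      refine Finset.sum_congr rfl fun k _ => ?_
      rw [hadd, hpow]; ring
    simp_rw [heq]
    rw [tendsto_zero_iff_norm_tendsto_zero]
    have hlim : Tendsto (fun N : ℕ => (N : ℝ)⁻¹ * (‖c‖ * (2 / ‖z - 1‖))) atTop (𝓝 0) := by
      have := (tendsto_inv_atTop_nhds_zero_nat (𝕜 := ℝ)).mul_const (‖c‖ * (2 / ‖z - 1‖))
      simpa using this
    refine squeeze_zero (fun _ => norm_nonneg _) (fun N => ?_) hlim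
    rw [norm_mul, norm_mul, norm_inv, Complex.norm_natCast]
    gcongr
    exact hb N

open Filter Topology in
/-- Kronecker's theorem in dimension two. If the closure `K` of the orbit were not everything, a
continuous function separating `K` from one of its translates would have Cesàro means
`0` and `1` along two orbits, contradicting `cesaro_diff` after approximation by a
trigonometric polynomial. -/
lemma dense_orbit {α : Fin 2 → ℝ} (hα : IsIrrationalVector α) :
    (AddSubgroup.zmultiples (fun i => (α i : UnitAddCircle) : UnitAddTorus (Fin 2))).topologicalClosure
      = ⊤ := by
  set a : UnitAddTorus (Fin 2) := fun i => (α i : UnitAddCircle) with ha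
  set K := (AddSubgroup.zmultiples a).topologicalClosure with hK
  by_contra hne
  obtain ⟨p, hp⟩ : ∃ p, p ∉ K := by
    by_contra! h
    exact hne (eq_top_iff.2 fun x _ => h x)
  have hKc : IsClosed (K : Set (UnitAddTorus (Fin 2))) :=
    AddSubgroup.isClosed_topologicalClosure _
  have hKa : ∀ k : ℕ, k • a ∈ K := fun k =>
    AddSubgroup.le_topologicalClosure _ (AddSubgroup.nsmul_mem_zmultiples a k)
  have hcl2 : IsClosed ((fun x => x - p) ⁻¹' (K : Set (UnitAddTorus (Fin 2)))) :=
    hKc.preimage (by fun_prop)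
  have hdisj : Disjoint (K : Set (UnitAddTorus (Fin 2)))
      ((fun x => x - p) ⁻¹' (K : Set (UnitAddTorus (Fin 2)))) := by
    rw [Set.disjoint_left]
    intro x hx hx2
    apply hp
    have := K.sub_mem hx hx2
    simpa using this
  -- `f` vanishes on `K` and equals `1` on `p + K`.
  obtain ⟨f, hf0, hf1, -⟩ := exists_continuous_zero_one_of_isClosed hKc hcl2 hdisj
  let F : C(UnitAddTorus (Fin 2), ℂ) := ⟨fun x => (f x : ℂ), by fun_prop⟩
  have hF : F ∈ closure (Submodule.span ℂ (Set.range (UnitAddTorus.mFourier (d := Fin 2))) : Set _) := by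
    have := UnitAddTorus.span_mFourier_closure_eq_top (d := Fin 2)
    rw [← Submodule.topologicalClosure_coe, this]; trivial
  obtain ⟨g, hg, hgF⟩ := Metric.mem_closure_iff.1 hF (1 / 4) (by norm_num)
  have ht := cesaro_diff hα p g hg
  rw [← ha] at ht
  rw [Metric.tendsto_atTop] at ht
  obtain ⟨N, hN⟩ := ht (1 / 2) (by norm_num)
  have hN1 := hN (N + 1) (by omega)
  rw [dist_zero_right] at hN1
  have hterm : ∀ k : ℕ, ‖(1 : ℂ) - (g (p + k • a) - g (k • a))‖ ≤ 1 / 2 := by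
    intro k
    have h1 : ‖F (p + k • a) - g (p + k • a)‖ ≤ 1 / 4 := by
      rw [← dist_eq_norm]
      exact ((ContinuousMap.dist_apply_le_dist _).trans hgF.le)
    have h2 : ‖F (k • a) - g (k • a)‖ ≤ 1 / 4 := by
      rw [← dist_eq_norm]
      exact ((ContinuousMap.dist_apply_le_dist _).trans hgF.le)
    have e1 : F (p + k • a) = 1 := by
      have := hf1 (x := p + k • a) (by simpa using hKa k)
      simp [F, this]
    have e2 : F (k • a) = 0 := by
      have := hf0 (hKa k)
      simp only [F, ContinuousMap.coe_mk, this]; simp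
    rw [e1] at h1; rw [e2] at h2
    calc ‖(1 : ℂ) - (g (p + k • a) - g (k • a))‖
        = ‖(1 - g (p + k • a)) - (0 - g (k • a))‖ := by congr 1; ring
      _ ≤ _ := norm_sub_le _ _
      _ ≤ 1 / 4 + 1 / 4 := add_le_add h1 h2
      _ = 1 / 2 := by norm_num
  have hpos : (0 : ℝ) < ((N + 1 : ℕ) : ℝ) := by positivity
  have hsum : ‖∑ k ∈ Finset.range (N + 1), ((1 : ℂ) - (g (p + k • a) - g (k • a)))‖
      ≤ (N + 1 : ℕ) * (1 / 2) := by
    refine (norm_sum_le _ _).trans ((Finset.sum_le_sum fun k _ => hterm k).trans ?_)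
    simp
  rw [Finset.sum_sub_distrib] at hsum
  simp only [Finset.sum_const, Finset.card_range, nsmul_eq_mul, mul_one] at hsum
  set Sg := ∑ k ∈ Finset.range (N + 1), (g (p + k • a) - g (k • a))
  rw [norm_mul, norm_inv, Complex.norm_natCast, inv_mul_lt_iff₀ hpos] at hN1
  have : ((N + 1 : ℕ) : ℝ) ≤ ‖((N + 1 : ℕ) : ℂ) - Sg‖ + ‖Sg‖ := by
    calc ((N + 1 : ℕ) : ℝ) = ‖((N + 1 : ℕ) : ℂ)‖ := (Complex.norm_natCast _).symm
      _ = ‖(((N + 1 : ℕ) : ℂ) - Sg) + Sg‖ := by congr 1; ring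
      _ ≤ _ := norm_add_le _ _
  linarith

open Filter Topology in
/-- Every forward orbit visits every nonempty open set at arbitrarily late times. -/
lemma visits {α : Fin 2 → ℝ} (hα : IsIrrationalVector α) (y : Fin 2 → ℝ)
    {U : Set (Fin 2 → ℝ)} (hU : IsOpen U) (hne : U.Nonempty) (N : ℕ) :
    ∃ n : ℕ, N ≤ n ∧ ∃ m : Fin 2 → ℤ, y + (n : ℝ) • α + zv m ∈ U := by
  obtain ⟨p, hp⟩ := hne
  obtain ⟨δ, hδ, hball⟩ := Metric.isOpen_iff.1 hU p hp
  have hmem : (fun i => ((p i - y i : ℝ) : UnitAddCircle) : UnitAddTorus (Fin 2)) ∈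
      (AddSubgroup.zmultiples (fun i => (α i : UnitAddCircle) :
        UnitAddTorus (Fin 2))).topologicalClosure := by
    rw [dense_orbit hα]; trivial
  rw [← mapClusterPt_atTop_nsmul_iff_mem_topologicalClosure_zmultiples] at hmem
  have hnh : Metric.ball (fun i => ((p i - y i : ℝ) : UnitAddCircle) : UnitAddTorus (Fin 2)) δ ∈
      𝓝 (fun i => ((p i - y i : ℝ) : UnitAddCircle) : UnitAddTorus (Fin 2)) :=
    Metric.ball_mem_nhds _ hδ
  have hfr := (mapClusterPt_iff_frequently.1 hmem _ hnh).and_eventually (eventually_ge_atTop N)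
  obtain ⟨n, hn, hnN⟩ := hfr.exists
  refine ⟨n, hnN, fun i => -round (n * α i - (p i - y i)), hball ?_⟩
  rw [Metric.mem_ball, dist_pi_lt_iff hδ] at hn ⊢
  intro i
  have := hn i
  rw [dist_eq_norm] at this
  have e : (n • (fun i => (α i : UnitAddCircle) : UnitAddTorus (Fin 2))) i
      - ((p i - y i : ℝ) : UnitAddCircle) = ((n * α i - (p i - y i) : ℝ) : UnitAddCircle) := by
    simp
  rw [e, UnitAddCircle.norm_eq] at this
  rw [Real.dist_eq]
  convert this using 2
  simp; ring

/-! ### Multiplicity functions and discrepancies -/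

open Classical in
/-- The integer vectors `k` for which `x + k` lies in the closed sup-norm ball of radius `R`. -/
noncomputable def win (R : ℝ) (x : Fin 2 → ℝ) : Finset (Fin 2 → ℤ) :=
  Fintype.piFinset fun i => Finset.Icc ⌈-R - x i⌉ ⌊R - x i⌋

lemma mem_win {R : ℝ} (hR : 0 ≤ R) {x : Fin 2 → ℝ} {k : Fin 2 → ℤ} :
    k ∈ win R x ↔ x + zv k ∈ Metric.closedBall (0 : Fin 2 → ℝ) R := by
  simp only [win, Fintype.mem_piFinset, Finset.mem_Icc, Int.ceil_le, Int.le_floor,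
    Metric.mem_closedBall, dist_pi_le_iff hR, Real.dist_eq, abs_le, Pi.add_apply, zv_apply,
    Pi.zero_apply, sub_zero]
  refine forall_congr' fun i => ?_
  constructor <;> rintro ⟨h1, h2⟩ <;> constructor <;> linarith

lemma card_win {R : ℝ} (hR : 0 ≤ R) (x : Fin 2 → ℝ) : ((win R x).card : ℝ) ≤ (2 * R + 1) ^ 2 := by
  have h : ∀ i, (((Finset.Icc ⌈-R - x i⌉ ⌊R - x i⌋).card : ℕ) : ℝ) ≤ 2 * R + 1 := by
    intro i
    rw [Int.card_Icc]
    have h1 := Int.le_ceil (-R - x i)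
    have h2 := Int.floor_le (R - x i)
    have h3 : (((⌊R - x i⌋ + 1 - ⌈-R - x i⌉).toNat : ℤ) : ℝ) ≤ 2 * R + 1 := by
      rcases le_total 0 (⌊R - x i⌋ + 1 - ⌈-R - x i⌉) with h | h
      · rw [Int.toNat_of_nonneg h]; push_cast; linarith
      · rw [Int.toNat_of_nonpos h]; simp; linarith
    exact_mod_cast h3
  rw [win, Fintype.card_piFinset, Fin.prod_univ_two, pow_two]
  push_cast
  exact mul_le_mul (h 0) (h 1) (by positivity) (by linarith)

lemma multFn_def (S : Set (Fin 2 → ℝ)) (x : Fin 2 → ℝ) :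
    multFn S x = ∑' k : Fin 2 → ℤ, S.indicator (fun _ => (1 : ℝ)) (x + zv k) := rfl

lemma mf_periodic (S : Set (Fin 2 → ℝ)) (x : Fin 2 → ℝ) (m : Fin 2 → ℤ) :
    multFn S (x + zv m) = multFn S x := by
  rw [multFn_def, multFn_def,
    ← (Equiv.addLeft m).tsum_eq (fun k => S.indicator (fun _ => (1 : ℝ)) (x + zv k))]
  refine tsum_congr fun _ => ?_
  simp [add_assoc]

lemma mf_eq_sum {S : Set (Fin 2 → ℝ)} {R : ℝ} (hR : 0 ≤ R)
    (hS : S ⊆ Metric.closedBall 0 R) {x : Fin 2 → ℝ} {F : Finset (Fin 2 → ℤ)} (hF : win R x ⊆ F) :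
    multFn S x = ∑ k ∈ F, S.indicator (fun _ => (1 : ℝ)) (x + zv k) := by
  rw [multFn_def]
  refine tsum_eq_sum fun _ hk => ?_
  refine Set.indicator_of_notMem (fun h => hk (hF ((mem_win hR).2 (hS h)))) _

lemma mf_nonneg (S : Set (Fin 2 → ℝ)) (x : Fin 2 → ℝ) : 0 ≤ multFn S x :=
  tsum_nonneg fun k => Set.indicator_nonneg (fun _ _ => zero_le_one) _

lemma mf_le {S : Set (Fin 2 → ℝ)} {R : ℝ} (hR : 0 ≤ R)
    (hS : S ⊆ Metric.closedBall 0 R) (x : Fin 2 → ℝ) : multFn S x ≤ (2 * R + 1) ^ 2 := by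
  rw [mf_eq_sum hR hS subset_rfl]
  refine le_trans (Finset.sum_le_sum (g := fun _ => (1 : ℝ)) fun k _ => ?_) ?_
  · exact Set.indicator_le_self' (fun _ _ => zero_le_one) _
  · simpa using card_win hR x

lemma win_subset {R : ℝ} (hR : 0 ≤ R) {x x' : Fin 2 → ℝ} (h : dist x' x ≤ 1) :
    win R x' ⊆ win (R + 1) x := by
  intro k hk
  rw [mem_win hR, Metric.mem_closedBall] at hk
  rw [mem_win (by linarith), Metric.mem_closedBall]
  calc dist (x + zv k) 0 ≤ dist (x + zv k) (x' + zv k) + dist (x' + zv k) 0 := dist_triangle _ _ _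
    _ ≤ 1 + R := by
      gcongr; rw [dist_add_right, dist_comm]; exact h
    _ = R + 1 := add_comm _ _

open Topology in
lemma ind_locconst {S : Set (Fin 2 → ℝ)} {z : Fin 2 → ℝ} (hz : z ∉ frontier S) :
    ∀ᶠ w in 𝓝 z, S.indicator (fun _ => (1 : ℝ)) w = S.indicator (fun _ => (1 : ℝ)) z := by
  by_cases hi : z ∈ interior S
  · filter_upwards [mem_interior_iff_mem_nhds.1 hi] with w hw
    rw [Set.indicator_of_mem hw, Set.indicator_of_mem (interior_subset hi)]
  · have hc : z ∉ closure S := fun h => hz ⟨h, hi⟩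
    filter_upwards [isClosed_closure.isOpen_compl.mem_nhds hc] with w hw
    rw [Set.indicator_of_notMem (fun h => hw (subset_closure h)),
      Set.indicator_of_notMem (fun h => hc (subset_closure h))]

open Topology in
lemma mf_locconst {S : Set (Fin 2 → ℝ)} {R : ℝ} (hR : 0 ≤ R)
    (hS : S ⊆ Metric.closedBall 0 R) {x : Fin 2 → ℝ} (hx : ∀ m, x + zv m ∉ frontier S) :
    ∀ᶠ x' in 𝓝 x, multFn S x' = multFn S x := by
  have h1 : ∀ᶠ x' in 𝓝 x, ∀ k ∈ win (R + 1) x,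
      S.indicator (fun _ => (1 : ℝ)) (x' + zv k) = S.indicator (fun _ => (1 : ℝ)) (x + zv k) := by
    rw [Filter.eventually_all_finset]
    intro k _
    have hc : Filter.Tendsto (fun x' : Fin 2 → ℝ => x' + zv k) (𝓝 x) (𝓝 (x + zv k)) :=
      (continuous_id.add continuous_const).tendsto _
    exact hc.eventually (ind_locconst (hx k))
  filter_upwards [h1, Metric.closedBall_mem_nhds x one_pos] with x' h hd
  rw [mf_eq_sum hR hS (win_subset hR hd),
    mf_eq_sum hR hS (win_subset hR (x := x) (x' := x) (by simp))]
  exact Finset.sum_congr rfl h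

lemma disc_zero' (α : Fin 2 → ℝ) (S) (x) : disc α S 0 x = 0 := by simp [disc]

lemma disc_add' (α : Fin 2 → ℝ) (S) (n m : ℕ) (x) :
    disc α S (n + m) x = disc α S n x + disc α S m (x + (n : ℝ) • α) := by
  simp only [disc, Finset.sum_range_add]
  have : ∀ k : ℕ, x + ((n + k : ℕ) : ℝ) • α = x + (n : ℝ) • α + (k : ℝ) • α := by
    intro k; push_cast; rw [add_smul, add_assoc]
  simp only [this]; push_cast; ring

lemma disc_per (α : Fin 2 → ℝ) (S) (n : ℕ) (x) (m : Fin 2 → ℤ) :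
    disc α S n (x + zv m) = disc α S n x := by
  simp only [disc]
  congr 1
  refine Finset.sum_congr rfl fun k _ => ?_
  rw [add_right_comm, mf_periodic]

open Topology in
lemma disc_locconst {S : Set (Fin 2 → ℝ)} {R : ℝ} (hR : 0 ≤ R)
    (hS : S ⊆ Metric.closedBall 0 R) (α : Fin 2 → ℝ) {x : Fin 2 → ℝ}
    (hx : ∀ (k : ℕ) m, x + (k : ℝ) • α + zv m ∉ frontier S) (n : ℕ) :
    ∀ᶠ x' in 𝓝 x, disc α S n x' = disc α S n x := by
  have h1 : ∀ᶠ x' in 𝓝 x, ∀ k ∈ Finset.range n,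
      multFn S (x' + (k : ℝ) • α) = multFn S (x + (k : ℝ) • α) := by
    rw [Filter.eventually_all_finset]
    intro k _
    have hc : Filter.Tendsto (fun x' : Fin 2 → ℝ => x' + (k : ℝ) • α) (𝓝 x)
        (𝓝 (x + (k : ℝ) • α)) :=
      (continuous_id.add continuous_const).tendsto _
    exact hc.eventually (mf_locconst hR hS (hx k))
  filter_upwards [h1] with x' h
  simp only [disc]
  rw [Finset.sum_congr rfl h]

/-- A property that holds almost everywhere holds, for almost every `x`, at all points of the
coset `x + (ℤα + ℤ²)`. -/
lemma ae_lat (α : Fin 2 → ℝ) {P : (Fin 2 → ℝ) → Prop} (h : ∀ᵐ p, P p) :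
    ∀ᵐ x : Fin 2 → ℝ, ∀ (k : ℤ) (m : Fin 2 → ℤ), P (x + (k : ℝ) • α + zv m) := by
  rw [ae_all_iff]; intro k
  rw [ae_all_iff]; intro m
  have := (measurePreserving_add_right (volume : Measure (Fin 2 → ℝ))
    ((k : ℝ) • α + zv m)).quasiMeasurePreserving.ae h
  simpa [add_assoc] using this

/-- The half-open unit square. -/
def usq : Set (Fin 2 → ℝ) := {x | ∀ i, 0 ≤ x i ∧ x i < 1}

lemma usq_eq : usq = Set.pi Set.univ fun _ : Fin 2 => Set.Ico (0 : ℝ) 1 := by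
  ext x; simp [usq]

lemma meas_usq : MeasurableSet usq := by
  rw [usq_eq]; exact MeasurableSet.univ_pi fun _ => measurableSet_Ico

lemma vol_usq : volume usq = 1 := by
  rw [usq_eq, volume_pi_pi]; simp

/-- The integral translates of the unit square tile the plane, so the multiplicity function
integrates to the area of `S` over the unit square. -/
lemma integral_mf {S : Set (Fin 2 → ℝ)} (hm : MeasurableSet S) {R : ℝ} (hR : 0 ≤ R)
    (hS : S ⊆ Metric.closedBall 0 R) (y : Fin 2 → ℝ) :
    Measurable (multFn S) ∧ ∫ d in usq, multFn S (y + d) = (volume S).toReal := by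
  have hmeas : Measurable (multFn S) := by
    have : multFn S = fun x => (∑' k : Fin 2 → ℤ, S.indicator (fun _ => (1 : ENNReal)) (x + zv k)).toReal := by
      funext x
      rw [multFn_def, ENNReal.tsum_toReal_eq]
      · refine tsum_congr fun k => ?_
        by_cases h : x + zv k ∈ S <;> simp [h]
      · intro k
        by_cases h : x + zv k ∈ S <;> simp [h]
    rw [this]
    refine Measurable.ennreal_toReal (Measurable.tsum fun k => ?_)
    exact (measurable_const.indicator hm).comp (measurable_id.add_const _)
  refine ⟨hmeas, ?_⟩
  have hmy : Measurable fun d => multFn S (y + d) :=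
    hmeas.comp (measurable_const.add measurable_id)
  rw [integral_eq_lintegral_of_nonneg_ae (Filter.Eventually.of_forall fun d => mf_nonneg _ _)
    hmy.aestronglyMeasurable]
  congr 1
  have h1 : ∀ d, ENNReal.ofReal (multFn S (y + d)) =
      ∑' k : Fin 2 → ℤ, S.indicator (fun _ => (1 : ENNReal)) (y + d + zv k) := by
    intro d
    rw [multFn_def, ENNReal.ofReal_tsum_of_nonneg]
    · refine tsum_congr fun k => ?_
      by_cases h : y + d + zv k ∈ S <;> simp [h]
    · exact fun k => Set.indicator_nonneg (fun _ _ => zero_le_one) _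
    · refine summable_of_ne_finset_zero (s := win R (y + d)) fun k hk => ?_
      exact Set.indicator_of_notMem (fun h => hk ((mem_win hR).2 (hS h))) _
  simp_rw [h1]
  have hmk : ∀ k : Fin 2 → ℤ, Measurable fun d : Fin 2 → ℝ =>
      S.indicator (fun _ => (1 : ENNReal)) (y + d + zv k) := fun k =>
    (measurable_const.indicator hm).comp (g := S.indicator (fun _ => (1 : ENNReal)))
      (f := fun d => y + d + zv k) ((measurable_const.add measurable_id).add_const _)
  rw [lintegral_tsum (fun k => (hmk k).aemeasurable)]
  -- The `k`-th term is the area of the part of `S` in the translate of the square by `y + k`.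
  have hT : ∀ k : Fin 2 → ℤ, ∫⁻ d in usq, S.indicator (fun _ => (1 : ENNReal)) (y + d + zv k) =
      volume (S ∩ (fun x => x - (y + zv k)) ⁻¹' usq) := by
    intro k
    have hmp := measurePreserving_sub_right (volume : Measure (Fin 2 → ℝ)) (y + zv k)
    have e : (fun d => S.indicator (fun _ => (1 : ENNReal)) (y + d + zv k)) =
        Set.indicator ((fun d => y + d + zv k) ⁻¹' S) (fun _ => (1 : ENNReal)) := by
      ext d; rfl
    have hm2 : MeasurableSet ((fun d : Fin 2 → ℝ => y + d + zv k) ⁻¹' S) :=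
      ((measurable_const.add measurable_id).add_const _) hm
    rw [e, lintegral_indicator hm2, setLIntegral_one, Measure.restrict_apply hm2,
      ← hmp.measure_preimage (hm2.inter meas_usq).nullMeasurableSet]
    congr 1
    ext x
    simp
    intro _
    have : y + (x - (y + zv k)) + zv k = x := by abel
    rw [this]
  simp_rw [hT]
  rw [← measure_iUnion]
  · congr 1
    ext x
    simp only [Set.mem_iUnion, Set.mem_inter_iff, Set.mem_preimage]
    constructor
    · rintro ⟨_, h, _⟩; exact h
    · intro h
      refine ⟨fun i => ⌊x i - y i⌋, h, fun i => ?_⟩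
      simp only [Pi.sub_apply, Pi.add_apply, zv_apply]
      have h1 := Int.floor_le (x i - y i)
      have h2 := Int.lt_floor_add_one (x i - y i)
      constructor <;> linarith
  · intro k l hkl
    rw [Function.onFun, Set.disjoint_left]
    rintro x ⟨_, h1⟩ ⟨_, h2⟩
    apply hkl
    ext i
    have a := h1 i; have b := h2 i
    simp only [Pi.sub_apply, Pi.add_apply, zv_apply] at a b
    have e1 : ⌊x i - y i⌋ = k i := Int.floor_eq_iff.2 ⟨by linarith, by linarith⟩
    have e2 : ⌊x i - y i⌋ = l i := Int.floor_eq_iff.2 ⟨by linarith, by linarith⟩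
    rw [← e1, ← e2]
  · intro k
    exact hm.inter (meas_usq.preimage (measurable_id.sub_const _))

/-! ### Oriented edges and faces of a polygon -/

/-- The planar cross product. -/
def cr (u v : Fin 2 → ℝ) : ℝ := u 0 * v 1 - u 1 * v 0

lemma ext2 {x y : Fin 2 → ℝ} (h0 : x 0 = y 0) (h1 : x 1 = y 1) : x = y := by
  ext i; fin_cases i
  · exact h0
  · exact h1

lemma cr_add (u v w : Fin 2 → ℝ) : cr u (v + w) = cr u v + cr u w := by simp [cr]; ring
lemma cr_sub (u v w : Fin 2 → ℝ) : cr u (v - w) = cr u v - cr u w := by simp [cr]; ring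
lemma cr_smul (u v : Fin 2 → ℝ) (t : ℝ) : cr u (t • v) = t * cr u v := by simp [cr]; ring
lemma cr_smul_left (u v : Fin 2 → ℝ) (t : ℝ) : cr (t • u) v = t * cr u v := by simp [cr]; ring
lemma cr_neg (u v : Fin 2 → ℝ) : cr u (-v) = - cr u v := by simp [cr]; ring
lemma cr_neg_left (u v : Fin 2 → ℝ) : cr (-u) v = - cr u v := by simp [cr]; ring
lemma cr_self (u : Fin 2 → ℝ) : cr u u = 0 := by simp [cr]; ring
lemma cr_comm (u v : Fin 2 → ℝ) : cr u v = - cr v u := by simp [cr]; ring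

lemma cr_cont (u : Fin 2 → ℝ) : Continuous (cr u) := by unfold cr; fun_prop

lemma cr_cont' : Continuous fun p : (Fin 2 → ℝ) × (Fin 2 → ℝ) => cr p.1 p.2 := by
  unfold cr; fun_prop

lemma nsq_pos {u : Fin 2 → ℝ} (hu : u ≠ 0) : 0 < u 0 ^ 2 + u 1 ^ 2 := by
  by_contra h
  apply hu
  have h0 : u 0 = 0 := by nlinarith [sq_nonneg (u 0), sq_nonneg (u 1)]
  have h1 : u 1 = 0 := by nlinarith [sq_nonneg (u 0), sq_nonneg (u 1)]
  exact ext2 (by simpa using h0) (by simpa using h1)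

lemma par_of_cr {u v : Fin 2 → ℝ} (hu : u ≠ 0) (h : cr u v = 0) : ∃ κ : ℝ, v = κ • u := by
  have hp := (nsq_pos hu).ne'
  refine ⟨(u 0 * v 0 + u 1 * v 1) / (u 0 ^ 2 + u 1 ^ 2), ext2 ?_ ?_⟩ <;>
    simp only [cr] at h <;> simp only [Pi.smul_apply, smul_eq_mul] <;> field_simp
  · linear_combination (- u 1) * h
  · linear_combination u 0 * h

/-- The vector `u` rotated by a right angle. -/
def rot (u : Fin 2 → ℝ) : Fin 2 → ℝ := ![-u 1, u 0]

lemma cr_rot (u : Fin 2 → ℝ) : cr u (rot u) = u 0 ^ 2 + u 1 ^ 2 := by simp [cr, rot]; ring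

/-- Every linear functional on the plane is a cross product with a fixed vector. -/
lemma clm_cr (l : (Fin 2 → ℝ) →L[ℝ] ℝ) : ∃ w, ∀ x, l x = cr w x := by
  refine ⟨![l (Pi.single 1 1), -l (Pi.single 0 1)], fun x => ?_⟩
  have : x = x 0 • Pi.single 0 (1 : ℝ) + x 1 • Pi.single 1 (1 : ℝ) := by
    apply ext2 <;> simp
  conv_lhs => rw [this]
  rw [map_add, map_smul, map_smul]
  simp [cr]; ring

lemma exists_clm (w : Fin 2 → ℝ) : ∃ l : (Fin 2 → ℝ) →L[ℝ] ℝ, ∀ x, l x = cr w x :=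
  ⟨w 0 • ContinuousLinearMap.proj 1 - w 1 • ContinuousLinearMap.proj 0, fun x => by simp [cr]⟩

/-- The face of `S` on which the linear functional `cr u` is minimal; `S` lies to the left of the
line through this face directed by `u`. -/
def fc (S : Set (Fin 2 → ℝ)) (u : Fin 2 → ℝ) : Set (Fin 2 → ℝ) :=
  {x | x ∈ S ∧ ∀ z ∈ S, cr u x ≤ cr u z}

lemma fc_smul (S : Set (Fin 2 → ℝ)) (u : Fin 2 → ℝ) {κ : ℝ} (hκ : 0 < κ) :
    fc S (κ • u) = fc S u := by
  ext x
  simp only [fc, Set.mem_ofPred_eq, cr_smul_left, mul_le_mul_iff_right₀ hκ]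

/-- `[a, b]` is an edge of `S`, oriented counterclockwise: `S` lies to the left of it. -/
def OEdge (S : Set (Fin 2 → ℝ)) (a b : Fin 2 → ℝ) : Prop :=
  a ≠ b ∧ fc S (b - a) = segment ℝ a b

/-- `S` is the convex hull of the finite set `V`, and has nonempty interior. -/
structure PolyHull (V : Finset (Fin 2 → ℝ)) (S : Set (Fin 2 → ℝ)) : Prop where
  hull : S = convexHull ℝ (V : Set (Fin 2 → ℝ))
  int : (interior S).Nonempty

namespace PolyHull
variable {V : Finset (Fin 2 → ℝ)} {S : Set (Fin 2 → ℝ)}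

lemma conv (h : PolyHull V S) : Convex ℝ S := h.hull ▸ convex_convexHull ℝ _
lemma comp (h : PolyHull V S) : IsCompact S := h.hull ▸ V.finite_toSet.isCompact_convexHull ℝ
lemma closed (h : PolyHull V S) : IsClosed S := h.comp.isClosed
lemma ext_sub (h : PolyHull V S) : Set.extremePoints ℝ S ⊆ V := by
  rw [h.hull]; exact extremePoints_convexHull_subset
lemma nonempty (h : PolyHull V S) : S.Nonempty := h.int.mono interior_subset
lemma front_null (h : PolyHull V S) : volume (frontier S) = 0 := h.conv.addHaar_frontier _

end PolyHull

/-- A nonzero functional `cr u` has no minimum on `S` at an interior point. -/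
lemma interior_gt {S : Set (Fin 2 → ℝ)} {u z : Fin 2 → ℝ} (hu : u ≠ 0) (hz : z ∈ interior S) :
    ∃ w ∈ S, cr u w < cr u z := by
  have hc : Filter.Tendsto (fun t : ℝ => z - t • rot u) (nhdsWithin 0 (Set.Ioi 0)) (nhds z) := by
    have : Continuous fun t : ℝ => z - t • rot u := by fun_prop
    have := this.tendsto 0
    simp only [zero_smul, sub_zero] at this
    exact this.mono_left nhdsWithin_le_nhds
  have h1 := hc.eventually (mem_interior_iff_mem_nhds.1 hz)
  obtain ⟨t, ht, ht0⟩ := (h1.and self_mem_nhdsWithin).exists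
  refine ⟨_, ht, ?_⟩
  rw [cr_sub, cr_smul, cr_rot]
  have := mul_pos (Set.mem_Ioi.1 ht0) (nsq_pos hu)
  linarith

lemma fc_not_int {S : Set (Fin 2 → ℝ)} {u z : Fin 2 → ℝ} (hu : u ≠ 0) (hz : z ∈ fc S u) :
    z ∉ interior S := fun h => by
  obtain ⟨w, hw, hlt⟩ := interior_gt hu h
  exact absurd (hz.2 w hw) (not_le.2 hlt)

lemma OEdge.ne {S : Set (Fin 2 → ℝ)} {a b : Fin 2 → ℝ} (h : OEdge S a b) : b - a ≠ 0 :=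
  sub_ne_zero.2 h.1.symm

lemma OEdge.le {S : Set (Fin 2 → ℝ)} {a b : Fin 2 → ℝ} (h : OEdge S a b) {z} (hz : z ∈ S) :
    0 ≤ cr (b - a) (z - a) := by
  have : a ∈ fc S (b - a) := h.2 ▸ left_mem_segment ℝ a b
  rw [cr_sub]; linarith [this.2 z hz]

lemma OEdge.lt {S : Set (Fin 2 → ℝ)} {a b : Fin 2 → ℝ} (h : OEdge S a b) {z}
    (hz : z ∈ interior S) : 0 < cr (b - a) (z - a) := by
  obtain ⟨w, hw, hlt⟩ := interior_gt h.ne hz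
  have := h.le hw
  rw [cr_sub] at *; linarith

lemma OEdge.sub {S : Set (Fin 2 → ℝ)} {a b : Fin 2 → ℝ} (h : OEdge S a b) :
    segment ℝ a b ⊆ S := by
  rw [← h.2]; exact fun x hx => hx.1

lemma cr_seg {a b z : Fin 2 → ℝ} (hz : z ∈ segment ℝ a b) : cr (b - a) (z - a) = 0 := by
  rw [segment_eq_image'] at hz
  obtain ⟨t, _, rfl⟩ := hz
  rw [add_sub_cancel_left, cr_smul, cr_self, mul_zero]

lemma OEdge.mem_iff {S : Set (Fin 2 → ℝ)} {a b : Fin 2 → ℝ} (h : OEdge S a b) {z} (hz : z ∈ S) :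
    z ∈ segment ℝ a b ↔ cr (b - a) (z - a) = 0 := by
  refine ⟨cr_seg, fun h0 => ?_⟩
  rw [← h.2]
  refine ⟨hz, fun w hw => ?_⟩
  have := h.le hw
  rw [cr_sub] at *; linarith

lemma OEdge.front {S : Set (Fin 2 → ℝ)} {a b : Fin 2 → ℝ} (h : OEdge S a b) :
    segment ℝ a b ⊆ frontier S := by
  intro z hz
  rw [← h.2] at hz
  exact ⟨subset_closure hz.1, fc_not_int h.ne hz⟩

/-- An endpoint of an exposed segment is an extreme point. -/
lemma left_extreme {S : Set (Fin 2 → ℝ)} {a b : Fin 2 → ℝ} (hab : a ≠ b)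
    (h : IsExposed ℝ S (segment ℝ a b)) : a ∈ Set.extremePoints ℝ S := by
  apply h.isExtreme.extremePoints_subset_extremePoints
  rw [mem_extremePoints_iff_left]
  refine ⟨left_mem_segment ℝ a b, fun x hx y hy hxy => ?_⟩
  rw [segment_eq_image'] at hx hy
  rw [openSegment_eq_image'] at hxy
  obtain ⟨s, ⟨hs, _⟩, rfl⟩ := hx
  obtain ⟨r, ⟨hr, _⟩, rfl⟩ := hy
  obtain ⟨θ, ⟨h0, h1⟩, he⟩ := hxy
  have e2 : ((1 - θ) * s + θ * r) • (b - a) = 0 := by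
    have := sub_eq_zero.2 he
    rw [← this]; module
  have e3 := (smul_eq_zero.1 e2).resolve_right (sub_ne_zero.2 hab.symm)
  have : s = 0 := by nlinarith [mul_nonneg h0.le hr, mul_nonneg (sub_pos.2 h1).le hs]
  simp [this]

lemma fc_exposed (S : Set (Fin 2 → ℝ)) (u : Fin 2 → ℝ) : IsExposed ℝ S (fc S u) := by
  intro _
  obtain ⟨l, hl⟩ := exists_clm (-u)
  refine ⟨l, ?_⟩
  ext x; simp [fc, hl, cr_neg_left]

lemma OEdge.mem_V {V : Finset (Fin 2 → ℝ)} {S : Set (Fin 2 → ℝ)} (hP : PolyHull V S)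
    {a b : Fin 2 → ℝ} (h : OEdge S a b) :
    a ∈ V ∧ b ∈ V := by
  have he : IsExposed ℝ S (segment ℝ a b) := h.2 ▸ fc_exposed S _
  refine ⟨hP.ext_sub (left_extreme h.1 he), hP.ext_sub (left_extreme h.1.symm ?_)⟩
  rw [segment_symm]; exact he

/-- The face of a polygon in a given direction is a vertex, or an edge directed by `u`, whose
endpoints are the extremes of `cr (rot u)` on the face. -/
lemma fc_cases {V : Finset (Fin 2 → ℝ)} {S : Set (Fin 2 → ℝ)} (hP : PolyHull V S)
    {u : Fin 2 → ℝ} (hu : u ≠ 0) :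
    (∃ v ∈ V, fc S u = {v}) ∨
      ∃ a b, OEdge S a b ∧ fc S u = segment ℝ a b ∧ ∃ κ : ℝ, 0 < κ ∧ b - a = κ • u := by
  have hcl : IsCompact (fc S u) := by
    refine hP.comp.of_isClosed_subset ?_ fun x hx => hx.1
    have : fc S u = S ∩ ⋂ z ∈ S, {x | cr u x ≤ cr u z} := by
      ext x; simp [fc]
    rw [this]
    exact hP.closed.inter (isClosed_biInter fun z _ => isClosed_le (cr_cont u) continuous_const)
  have hne : (fc S u).Nonempty := by
    obtain ⟨x, hx, hm⟩ := hP.comp.exists_isMinOn hP.nonempty (cr_cont u).continuousOn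
    exact ⟨x, hx, fun z hz => hm hz⟩
  have hconv : Convex ℝ (fc S u) := by
    intro x hx y hy s t hs ht hst
    refine ⟨hP.conv hx.1 hy.1 hs ht hst, fun z hz => ?_⟩
    rw [cr_add, cr_smul, cr_smul]
    have h1 := mul_le_mul_of_nonneg_left (hx.2 z hz) hs
    have h2 := mul_le_mul_of_nonneg_left (hy.2 z hz) ht
    have : cr u z = s * cr u z + t * cr u z := by rw [← add_mul, hst, one_mul]
    linarith
  have hc : Continuous fun x => cr (rot u) x := cr_cont _
  obtain ⟨b, hb, hbm⟩ := hcl.exists_isMinOn hne hc.continuousOn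
  obtain ⟨a, ha, ham⟩ := hcl.exists_isMaxOn hne hc.continuousOn
  have hpar : ∀ z ∈ fc S u, ∃ κ : ℝ, z = a + κ • u ∧ 0 ≤ κ := by
    intro z hz
    have : cr u (z - a) = 0 := by
      rw [cr_sub]; linarith [hz.2 a ha.1, ha.2 z hz.1]
    obtain ⟨κ, hκ⟩ := par_of_cr hu this
    have hz' : z = a + κ • u := by rw [← hκ]; abel
    refine ⟨κ, hz', ?_⟩
    have h1 : cr (rot u) z ≤ cr (rot u) a := ham hz
    rw [hz', cr_add, cr_smul, cr_comm (rot u) u, cr_rot] at h1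
    by_contra hneg
    have := mul_pos_of_neg_of_neg (not_le.1 hneg) (neg_neg_of_pos (nsq_pos hu))
    linarith
  obtain ⟨κ, hbκ, hκ⟩ := hpar b hb
  have hle : ∀ z ∈ fc S u, ∀ r : ℝ, z = a + r • u → r ≤ κ := by
    intro z hz r hr
    have h1 : cr (rot u) b ≤ cr (rot u) z := hbm hz
    rw [hr, hbκ, cr_add, cr_smul, cr_add, cr_smul, cr_comm (rot u) u, cr_rot] at h1
    by_contra hneg
    have := mul_pos (sub_pos.2 (not_le.1 hneg)) (nsq_pos hu)
    linarith
  rcases hκ.eq_or_lt with h0 | h0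
  · left
    have hs : fc S u = {a} := by
      refine Set.eq_singleton_iff_unique_mem.2 ⟨ha, fun z hz => ?_⟩
      obtain ⟨r, hr, hr0⟩ := hpar z hz
      have := hle z hz r hr
      have : r = 0 := by linarith
      rw [hr, this]; simp
    refine ⟨a, hP.ext_sub ?_, hs⟩
    rw [← isExtreme_singleton, ← hs]
    exact (fc_exposed S u).isExtreme
  · right
    have hba : b - a = κ • u := by rw [hbκ]; abel
    have hs : fc S u = segment ℝ a b := by
      refine Set.Subset.antisymm (fun z hz => ?_) (hconv.segment_subset ha hb)
      obtain ⟨r, hr, hr0⟩ := hpar z hz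
      have := hle z hz r hr
      rw [segment_eq_image']
      refine ⟨r / κ, ⟨by positivity, (div_le_one h0).2 this⟩, ?_⟩
      simp only [hba, smul_smul, div_mul_cancel₀ _ h0.ne', hr]
    refine ⟨a, b, ⟨?_, ?_⟩, hs, κ, h0, hba⟩
    · intro hab
      rw [hab, sub_self] at hba
      exact (smul_ne_zero h0.ne' hu) hba.symm
    · rw [hba, fc_smul S u h0, hs]

/-- A boundary point of a polygon lies in `V` or in the relative interior of an edge; a supporting
line at the point provides the face. -/
lemma frontier_cases {V : Finset (Fin 2 → ℝ)} {S : Set (Fin 2 → ℝ)} (hP : PolyHull V S)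
    {y : Fin 2 → ℝ} (hy : y ∈ frontier S) :
    y ∈ V ∨ ∃ a b, OEdge S a b ∧ y ∈ openSegment ℝ a b := by
  obtain ⟨l, hl⟩ := geometric_hahn_banach_open_point hP.conv.interior isOpen_interior hy.2
  obtain ⟨w, hw⟩ := clm_cr l
  have hw0 : -w ≠ 0 := by
    rw [neg_ne_zero]
    rintro rfl
    obtain ⟨z, hz⟩ := hP.int
    have := hl z hz
    simp [hw, cr] at this
  have hyS : y ∈ S := hP.closed.closure_eq ▸ hy.1
  have hyf : y ∈ fc S (-w) := by
    refine ⟨hyS, fun z hz => ?_⟩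
    have hz2 : z ∈ closure (interior S) := by
      rw [hP.conv.closure_interior_eq_closure_of_nonempty_interior hP.int]
      exact subset_closure hz
    have : closure (interior S) ⊆ {z | l z ≤ l y} :=
      closure_minimal (fun z hz => (hl z hz).le) (isClosed_le l.continuous continuous_const)
    have := this hz2
    simp only [Set.mem_ofPred_eq, hw] at this
    rw [cr_neg_left, cr_neg_left]; linarith
  rcases fc_cases hP hw0 with ⟨v, hv, he⟩ | ⟨a, b, hE, he, -⟩
  · rw [he] at hyf; left; rw [Set.mem_singleton_iff.1 hyf]; exact hv
  · rw [he, ← insert_endpoints_openSegment] at hyf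
    rcases hyf with rfl | rfl | h
    · exact Or.inl (hE.mem_V hP).1
    · exact Or.inl (hE.mem_V hP).2
    · exact Or.inr ⟨a, b, hE, h⟩

/-- A directed edge is determined by its direction. -/
lemma OEdge.eq_of_par {S : Set (Fin 2 → ℝ)} {a b a' b' : Fin 2 → ℝ} (h : OEdge S a b)
    (h' : OEdge S a' b') {κ : ℝ} (hκ : 0 < κ) (hp : b' - a' = κ • (b - a)) : a' = a ∧ b' = b := by
  have hs : segment ℝ a b = segment ℝ a' b' := by
    rw [← h.2, ← h'.2, hp, fc_smul _ _ hκ]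
  have hu := h.ne
  have ha' : a' ∈ segment ℝ a b := hs ▸ left_mem_segment ℝ a' b'
  have hb' : b' ∈ segment ℝ a b := hs ▸ right_mem_segment ℝ a' b'
  have ha : a ∈ segment ℝ a' b' := hs ▸ left_mem_segment ℝ a b
  have hb : b ∈ segment ℝ a' b' := hs ▸ right_mem_segment ℝ a b
  rw [segment_eq_image'] at ha' hb' ha hb
  obtain ⟨s, ⟨hs0, hs1⟩, e1⟩ := ha'
  obtain ⟨r, ⟨hr0, hr1⟩, e2⟩ := hb'
  obtain ⟨p, ⟨hp0, hp1⟩, e3⟩ := ha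
  obtain ⟨q, ⟨hq0, hq1⟩, e4⟩ := hb
  simp only at e1 e2 e3 e4
  have key : ∀ x : ℝ, x • (b - a) = 0 → x = 0 := fun x hx => (smul_eq_zero.1 hx).resolve_right hu
  have c1 : s + p * κ = 0 := key _ (by
    rw [hp, ← e1] at e3
    rw [← sub_eq_zero.2 e3]; module)
  have c2 : s + q * κ - 1 = 0 := key _ (by
    rw [hp, ← e1] at e4
    rw [← sub_eq_zero.2 e4]; module)
  have c3 : r - s - κ = 0 := key _ (by
    rw [← e1, ← e2] at hp
    rw [← sub_eq_zero.2 hp]; module)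
  have hs : s = 0 := by nlinarith [mul_nonneg hp0 hκ.le]
  have hr : r = 1 := by nlinarith
  constructor
  · rw [← e1, hs]; simp
  · rw [← e2, hr]; simp

/-- An edge containing a relative interior point of another edge coincides with it. -/
lemma OEdge.eq_of_meet {V : Finset (Fin 2 → ℝ)} {S : Set (Fin 2 → ℝ)} (hP : PolyHull V S)
    {a b a' b' y : Fin 2 → ℝ} (h : OEdge S a b)
    (h' : OEdge S a' b') (hy : y ∈ segment ℝ a b) (hy' : y ∈ openSegment ℝ a' b') :
    a' = a ∧ b' = b := by
  have ha' := h.le (h'.sub (left_mem_segment ℝ a' b'))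
  have hb' := h.le (h'.sub (right_mem_segment ℝ a' b'))
  have h0 := cr_seg hy
  rw [openSegment_eq_image'] at hy'
  obtain ⟨t, ⟨ht0, ht1⟩, rfl⟩ := hy'
  have e : cr (b - a) (a' + t • (b' - a') - a) =
      (1 - t) * cr (b - a) (a' - a) + t * cr (b - a) (b' - a) := by
    simp [cr]; ring
  simp only [e] at h0
  have c1 : cr (b - a) (a' - a) = 0 := by
    have h1 := mul_nonneg (sub_pos.2 ht1).le ha'
    have h2 := mul_nonneg ht0.le hb'
    have : (1 - t) * cr (b - a) (a' - a) = 0 := by linarith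
    exact (mul_eq_zero.1 this).resolve_left (sub_pos.2 ht1).ne'
  have c2 : cr (b - a) (b' - a) = 0 := by
    rw [c1, mul_zero, zero_add] at h0
    exact (mul_eq_zero.1 h0).resolve_left ht0.ne'
  obtain ⟨κ, hκ⟩ := par_of_cr h.ne (v := b' - a') (by rw [cr_sub] at *; linarith)
  obtain ⟨z, hz⟩ := hP.int
  have p1 := h.lt hz
  have p2 := h'.lt hz
  have p3 : cr (b' - a') (z - a') = κ * cr (b - a) (z - a) := by
    rw [hκ, cr_smul_left]
    rw [cr_sub] at c1
    rw [cr_sub _ z a', cr_sub _ z a]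
    have : cr (b - a) a' = cr (b - a) a := by linarith
    rw [this]
  rw [p3] at p2
  exact h.eq_of_par h' ((pos_iff_pos_of_mul_pos p2).2 p1) hκ

open Topology in
/-- Near a relative interior point of an edge, the polygon coincides with the half-plane to the
left of that edge. -/
lemma OEdge.nhds {V : Finset (Fin 2 → ℝ)} {S : Set (Fin 2 → ℝ)} (hP : PolyHull V S)
    {a b z : Fin 2 → ℝ} (h : OEdge S a b)
    (hz : z ∈ openSegment ℝ a b) : ∀ᶠ w in 𝓝 z, (w ∈ S ↔ 0 ≤ cr (b - a) (w - a)) := by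
  obtain ⟨c, hc⟩ := hP.int
  have hpos := h.lt hc
  set D := cr (b - a) (c - a) with hD
  rw [openSegment_eq_image'] at hz
  obtain ⟨t, ⟨ht0, ht1⟩, rfl⟩ := hz
  have hcont1 : Continuous fun w : Fin 2 → ℝ => cr (w - a) (c - a) / D := by
    unfold cr; fun_prop
  have hcont2 : Continuous fun w : Fin 2 → ℝ => cr (b - a) (w - a) / D +
      cr (w - a) (c - a) / D := by
    unfold cr; fun_prop
  have e1 : cr (a + t • (b - a) - a) (c - a) / D = t := by
    rw [add_sub_cancel_left, cr_smul_left, mul_div_cancel_right₀ _ hpos.ne']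
  have e2 : cr (b - a) (a + t • (b - a) - a) / D = 0 := by
    rw [add_sub_cancel_left, cr_smul, cr_self]; simp
  have h1 := hcont1.tendsto (a + t • (b - a))
  have h2 := hcont2.tendsto (a + t • (b - a))
  rw [e1] at h1
  rw [e2, e1, zero_add] at h2
  filter_upwards [h1.eventually_const_lt ht0, h2.eventually_lt_const ht1] with w hw1 hw2
  refine ⟨fun hw => h.le hw, fun hw => ?_⟩
  set ρ := cr (b - a) (w - a) / D with hρ
  set τ := cr (w - a) (c - a) / D with hτ
  have hρ0 : 0 ≤ ρ := div_nonneg hw hpos.le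
  have hwe : w = (1 - ρ - τ) • a + (τ • b + ρ • c) := by
    have hDne := hpos.ne'
    apply ext2 <;> simp only [hρ, hτ, Pi.add_apply, Pi.smul_apply, smul_eq_mul] <;>
      field_simp <;> simp only [hD, cr, Pi.sub_apply] <;> ring
  have hm := hP.conv.sum_mem (t := Finset.univ) (w := ![1 - ρ - τ, τ, ρ]) (z := ![a, b, c])
    (by intro i _; fin_cases i <;> simp <;> linarith) (by simp [Fin.sum_univ_three])
    (by intro i _; fin_cases i
        · exact h.sub (left_mem_segment ℝ a b)
        · exact h.sub (right_mem_segment ℝ a b)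
        · exact interior_subset hc)
  rw [hwe]
  simpa [Fin.sum_univ_three, add_assoc] using hm

/-- An edge becomes an oriented edge after possibly exchanging its endpoints. -/
lemma isEdgeOf_iff {V : Finset (Fin 2 → ℝ)} {S : Set (Fin 2 → ℝ)} (hP : PolyHull V S)
    (a b : Fin 2 → ℝ) :
    IsEdgeOf S a b ↔ OEdge S a b ∨ OEdge S b a := by
  constructor
  · rintro ⟨hab, he⟩
    obtain ⟨l, hl⟩ := he ⟨a, left_mem_segment ℝ a b⟩
    obtain ⟨w, hw⟩ := clm_cr l
    have ha : a ∈ segment ℝ a b := left_mem_segment ℝ a b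
    have hb : b ∈ segment ℝ a b := right_mem_segment ℝ a b
    have hu : b - a ≠ 0 := sub_ne_zero.2 hab.symm
    have hfc : segment ℝ a b = fc S (-w) := by
      rw [hl]; ext x; simp [fc, hw, cr_neg_left]
    rw [hfc] at ha hb
    have h0 : cr (b - a) (-w) = 0 := by
      rw [cr_comm, cr_sub]; linarith [ha.2 b hb.1, hb.2 a ha.1]
    obtain ⟨κ, hκ⟩ := par_of_cr hu h0
    rcases lt_trichotomy κ 0 with h | h | h
    · right
      refine ⟨hab.symm, ?_⟩
      have : -w = (-κ) • (a - b) := by rw [hκ]; module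
      rw [this, fc_smul _ _ (by linarith)] at hfc
      rw [segment_symm, hfc]
    · exfalso
      obtain ⟨z, hz⟩ := hP.int
      obtain ⟨z', hz', hlt⟩ := interior_gt hu hz
      have hall : ∀ z ∈ S, cr (b - a) z = cr (b - a) a := by
        intro z hz
        have : z ∈ segment ℝ a b := by
          rw [hfc]; refine ⟨hz, fun z' _ => ?_⟩
          rw [hκ, h]; simp [cr]
        have := cr_seg this
        rw [cr_sub] at this; linarith
      rw [hall z (interior_subset hz), hall z' hz'] at hlt
      exact lt_irrefl _ hlt
    · left
      refine ⟨hab, ?_⟩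
      rw [hκ, fc_smul _ _ h] at hfc
      exact hfc.symm
  · rintro (h | h)
    · exact ⟨h.1, h.2 ▸ fc_exposed S _⟩
    · refine ⟨h.1.symm, ?_⟩
      rw [segment_symm, ← h.2]; exact fc_exposed S _

/-! ### Signed edge crossings -/

open Classical in
/-- The finite set of directed edges of the polygon. -/
noncomputable def edges (V : Finset (Fin 2 → ℝ)) (S : Set (Fin 2 → ℝ)) :
    Finset ((Fin 2 → ℝ) × (Fin 2 → ℝ)) :=
  (V ×ˢ V).filter fun e => OEdge S e.1 e.2

lemma mem_edges {V : Finset (Fin 2 → ℝ)} {S : Set (Fin 2 → ℝ)} (hP : PolyHull V S)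
    {e : (Fin 2 → ℝ) × (Fin 2 → ℝ)} : e ∈ edges V S ↔ OEdge S e.1 e.2 := by
  simp only [edges, Finset.mem_filter, Finset.mem_product, and_iff_right_iff_imp]
  exact fun h => h.mem_V hP

/-- The set of points `x` from which the move `x ↦ x + d` meets the segment `[a, b]`: a parallelogram
with sides `b - a` and `d`. -/
def PS (d a b : Fin 2 → ℝ) : Set (Fin 2 → ℝ) :=
  {x | ∃ t ∈ Set.Icc (0 : ℝ) 1, x + t • d ∈ segment ℝ a b}

/-- The indicator function of the parallelogram `PS d a b`. -/
noncomputable def pind (d a b x : Fin 2 → ℝ) : ℝ := (PS d a b).indicator (fun _ => (1 : ℝ)) x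

/-- The signed number of edges crossed by the move `x ↦ x + d`; entering `S` counts `+1` and
leaving it counts `-1`. -/
noncomputable def crossing (V : Finset (Fin 2 → ℝ)) (S : Set (Fin 2 → ℝ)) (d x : Fin 2 → ℝ) : ℝ :=
  ∑ e ∈ edges V S, Real.sign (cr (e.2 - e.1) d) * pind d e.1 e.2 x

lemma sign_pos_mul {t : ℝ} (x : ℝ) (ht : 0 < t) : Real.sign (t * x) = Real.sign x := by
  rcases lt_trichotomy x 0 with h | h | h
  · rw [Real.sign_of_neg h, Real.sign_of_neg (mul_neg_of_pos_of_neg ht h)]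
  · simp [h]
  · rw [Real.sign_of_pos h, Real.sign_of_pos (mul_pos ht h)]

section
variable {V : Finset (Fin 2 → ℝ)} {S : Set (Fin 2 → ℝ)}

lemma crossing_nofront (hP : PolyHull V S) {d x : Fin 2 → ℝ}
    (h : ∀ t ∈ Set.Icc (0 : ℝ) 1, x + t • d ∉ frontier S) : crossing V S d x = 0 := by
  refine Finset.sum_eq_zero fun e he => ?_
  rw [mem_edges hP] at he
  rw [pind, Set.indicator_of_notMem, mul_zero]
  rintro ⟨t, ht, hm⟩
  exact h t ht (he.front hm)

lemma pind_rev (d a b x : Fin 2 → ℝ) : pind (-d) a b (x + d) = pind d a b x := by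
  have : x + d ∈ PS (-d) a b ↔ x ∈ PS d a b := by
    constructor
    · rintro ⟨t, ⟨h0, h1⟩, hm⟩
      refine ⟨1 - t, ⟨by linarith, by linarith⟩, ?_⟩
      convert hm using 1; module
    · rintro ⟨t, ⟨h0, h1⟩, hm⟩
      refine ⟨1 - t, ⟨by linarith, by linarith⟩, ?_⟩
      convert hm using 1; module
  by_cases h : x ∈ PS d a b
  · rw [pind, pind, Set.indicator_of_mem h, Set.indicator_of_mem (this.2 h)]
  · rw [pind, pind, Set.indicator_of_notMem h, Set.indicator_of_notMem (fun h' => h (this.1 h'))]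

lemma crossing_rev (d x : Fin 2 → ℝ) : crossing V S (-d) (x + d) = - crossing V S d x := by
  rw [crossing, crossing, ← Finset.sum_neg_distrib]
  refine Finset.sum_congr rfl fun e _ => ?_
  rw [pind_rev, cr_neg, Real.sign_neg, neg_mul]

lemma exists_exit {d x : Fin 2 → ℝ} (hx : x ∈ interior S) (hd : x + d ∉ S) :
    ∃ t ∈ Set.Icc (0 : ℝ) 1, x + t • d ∈ frontier S := by
  by_contra! hcon
  have hpre : IsPreconnected ((fun t : ℝ => x + t • d) '' Set.Icc (0 : ℝ) 1) :=
    isPreconnected_Icc.image _ (by fun_prop)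
  have hsub : ((fun t : ℝ => x + t • d) '' Set.Icc (0 : ℝ) 1) ⊆ interior S ∪ (closure S)ᶜ := by
    rintro _ ⟨t, ht, rfl⟩
    by_cases h : x + t • d ∈ interior S
    · exact Or.inl h
    · exact Or.inr fun hc => hcon t ht ⟨hc, h⟩
  have := hpre.subset_left_of_subset_union isOpen_interior isClosed_closure.isOpen_compl
    (Set.disjoint_compl_right_iff_subset.2 (interior_subset.trans subset_closure)) hsub
    ⟨x, ⟨0, by simp, by simp⟩, hx⟩
  exact hd (interior_subset (this ⟨1, by simp, by simp⟩))

/-- A move from the interior to the outside of `S` crosses exactly one edge, outwards. -/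
lemma crossing_exit (hP : PolyHull V S) {d x : Fin 2 → ℝ} (hx : x ∈ interior S) (hd : x + d ∉ S)
    (hV : ∀ t : ℝ, x + t • d ∉ V) : crossing V S d x = -1 := by
  obtain ⟨t, ht, htf⟩ := exists_exit hx hd
  have huniq : ∀ s ∈ Set.Icc (0 : ℝ) 1, x + s • d ∈ frontier S → s = t := by
    -- Of two frontier points on a ray from an interior point, the nearer one would be interior.
    have key : ∀ s s' : ℝ, 0 ≤ s → s < s' → x + s • d ∈ frontier S → x + s' • d ∈ frontier S →
        False := by
      intro s s' h0 hlt hf hf'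
      rcases h0.eq_or_lt with rfl | h0
      · simp only [zero_smul, add_zero] at hf
        exact hf.2 hx
      refine hf.2 (hP.conv.openSegment_interior_closure_subset_interior hx hf'.1 ?_)
      rw [openSegment_eq_image']
      refine ⟨s / s', ⟨div_pos h0 (h0.trans hlt), (div_lt_one (h0.trans hlt)).2 hlt⟩, ?_⟩
      simp only [add_sub_cancel_left, smul_smul, div_mul_cancel₀ _ (h0.trans hlt).ne']
    intro s hs hsf
    rcases lt_trichotomy s t with h | h | h
    · exact (key s t hs.1 h hsf htf).elim
    · exact h
    · exact (key t s ht.1 h htf hsf).elim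
  rcases frontier_cases hP htf with h | ⟨a, b, hE, hm⟩
  · exact (hV t h).elim
  have ht0 : 0 < t := by
    rcases ht.1.eq_or_lt with h | h
    · rw [← h] at htf; simp only [zero_smul, add_zero] at htf
      exact (htf.2 hx).elim
    · exact h
  have hsgn : cr (b - a) d < 0 := by
    have h1 := hE.lt hx
    have h2 := cr_seg (openSegment_subset_segment _ _ _ hm)
    have : cr (b - a) (x + t • d - a) = cr (b - a) (x - a) + t * cr (b - a) d := by
      simp [cr]; ring
    rw [this] at h2
    by_contra hneg
    have := mul_nonneg ht0.le (not_lt.1 hneg)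
    linarith
  rw [crossing, Finset.sum_eq_single_of_mem (a, b) ((mem_edges hP).2 hE)]
  · rw [Real.sign_of_neg hsgn, pind, Set.indicator_of_mem]
    · norm_num
    · exact ⟨t, ht, openSegment_subset_segment _ _ _ hm⟩
  · intro e he hne
    rw [mem_edges hP] at he
    rw [pind, Set.indicator_of_notMem, mul_zero]
    rintro ⟨s, hs, hms⟩
    rw [huniq s hs (he.front hms)] at hms
    obtain ⟨h1, h2⟩ := he.eq_of_meet hP hE hms hm
    exact hne (Prod.ext h1.symm h2.symm)

/-- The time reversal of `crossing_exit`. -/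
lemma crossing_entry (hP : PolyHull V S) {d x : Fin 2 → ℝ} (hx : x ∉ S) (hd : x + d ∈ interior S)
    (hV : ∀ t : ℝ, x + t • d ∉ V) : crossing V S d x = 1 := by
  have := crossing_exit hP (d := -d) (x := x + d) hd (by simpa using hx) (fun t ht => hV (1 - t) (by
    convert ht using 1; module))
  rw [crossing_rev] at this
  linarith

/-- Crossings add up along a move cut at a point off the boundary. -/
lemma crossing_split (hP : PolyHull V S) {d x : Fin 2 → ℝ} {τ : ℝ} (h0 : 0 < τ) (h1 : τ < 1)
    (hτ : x + τ • d ∉ frontier S) : crossing V S d x =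
      crossing V S (τ • d) x + crossing V S ((1 - τ) • d) (x + τ • d) := by
  rw [crossing, crossing, crossing, ← Finset.sum_add_distrib]
  refine Finset.sum_congr rfl fun e he => ?_
  rw [mem_edges hP] at he
  have s1 : Real.sign (cr (e.2 - e.1) (τ • d)) = Real.sign (cr (e.2 - e.1) d) := by
    rw [cr_smul, sign_pos_mul _ h0]
  have s2 : Real.sign (cr (e.2 - e.1) ((1 - τ) • d)) = Real.sign (cr (e.2 - e.1) d) := by
    rw [cr_smul, sign_pos_mul _ (by linarith)]
  rw [s1, s2, ← mul_add]
  by_cases hs : cr (e.2 - e.1) d = 0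
  · rw [hs]; simp
  congr 1
  -- A line transversal to an edge meets it at most once.
  have huniq : ∀ s s' : ℝ, x + s • d ∈ segment ℝ e.1 e.2 → x + s' • d ∈ segment ℝ e.1 e.2 →
      s = s' := by
    intro s s' hs1 hs2
    have e1 := cr_seg hs1
    have e2 := cr_seg hs2
    have : (s - s') * cr (e.2 - e.1) d = 0 := by
      simp only [cr_sub, cr_add, cr_smul] at *
      linarith
    have := (mul_eq_zero.1 this).resolve_right hs
    linarith
  have m1 : x ∈ PS (τ • d) e.1 e.2 ↔ ∃ s : ℝ, 0 ≤ s ∧ s ≤ τ ∧ x + s • d ∈ segment ℝ e.1 e.2 := by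
    constructor
    · rintro ⟨t, ⟨a, b⟩, hm⟩
      exact ⟨t * τ, by positivity, by nlinarith, by rwa [mul_smul]⟩
    · rintro ⟨s, a, b, hm⟩
      refine ⟨s / τ, ⟨by positivity, (div_le_one h0).2 b⟩, ?_⟩
      rwa [smul_smul, div_mul_cancel₀ _ h0.ne']
  have hτ1 : 0 < 1 - τ := by linarith
  have m2 : x + τ • d ∈ PS ((1 - τ) • d) e.1 e.2 ↔
      ∃ s : ℝ, τ ≤ s ∧ s ≤ 1 ∧ x + s • d ∈ segment ℝ e.1 e.2 := by
    constructor
    · rintro ⟨t, ⟨a, b⟩, hm⟩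
      refine ⟨τ + t * (1 - τ), by nlinarith, by nlinarith, ?_⟩
      convert hm using 1; module
    · rintro ⟨s, a, b, hm⟩
      refine ⟨(s - τ) / (1 - τ), ⟨div_nonneg (by linarith) hτ1.le,
        (div_le_one hτ1).2 (by linarith)⟩, ?_⟩
      rw [smul_smul, div_mul_cancel₀ _ hτ1.ne']
      convert hm using 1; module
  have m0 : x ∈ PS d e.1 e.2 ↔ x ∈ PS (τ • d) e.1 e.2 ∨ x + τ • d ∈ PS ((1 - τ) • d) e.1 e.2 := by
    rw [m1, m2]
    constructor
    · rintro ⟨t, ⟨a, b⟩, hm⟩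
      rcases le_total t τ with h | h
      · exact Or.inl ⟨t, a, h, hm⟩
      · exact Or.inr ⟨t, h, b, hm⟩
    · rintro (⟨t, a, b, hm⟩ | ⟨t, a, b, hm⟩)
      · exact ⟨t, ⟨a, by linarith⟩, hm⟩
      · exact ⟨t, ⟨by linarith, b⟩, hm⟩
  have m3 : ¬ (x ∈ PS (τ • d) e.1 e.2 ∧ x + τ • d ∈ PS ((1 - τ) • d) e.1 e.2) := by
    rw [m1, m2]
    rintro ⟨⟨t, _, ht, hm⟩, ⟨t', ht', _, hm'⟩⟩
    have := huniq _ _ hm hm'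
    have ht2 : t = τ := by linarith
    rw [ht2] at hm
    exact hτ (he.front hm)
  simp only [pind]
  by_cases c1 : x ∈ PS (τ • d) e.1 e.2 <;> by_cases c2 : x + τ • d ∈ PS ((1 - τ) • d) e.1 e.2
  · exact (m3 ⟨c1, c2⟩).elim
  all_goals simp [m0, c1, c2]

/-- For a move `x ↦ x + d` along a line avoiding the vertices, the change of the indicator
function of `S` is the signed number of crossed edges. -/
lemma ind_diff (hP : PolyHull V S) {d x : Fin 2 → ℝ} (hx : x ∉ frontier S)
    (hxd : x + d ∉ frontier S) (hV : ∀ t : ℝ, x + t • d ∉ V) :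
    S.indicator (fun _ => (1 : ℝ)) (x + d) - S.indicator (fun _ => (1 : ℝ)) x =
      crossing V S d x := by
  have hdich : ∀ y ∉ frontier S, y ∈ interior S ∨ y ∉ S := by
    intro y hy
    by_cases h : y ∈ interior S
    · exact Or.inl h
    · exact Or.inr fun hc => hy ⟨subset_closure hc, h⟩
  rcases hdich x hx with h | h <;> rcases hdich _ hxd with h' | h'
  · rw [Set.indicator_of_mem (interior_subset h), Set.indicator_of_mem (interior_subset h'),
      crossing_nofront hP, sub_self]
    intro t ht hf
    have := hP.conv.interior.add_smul_mem h h' ht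
    exact hf.2 this
  · rw [Set.indicator_of_mem (interior_subset h), Set.indicator_of_notMem h',
      crossing_exit hP h h' hV]; norm_num
  · rw [Set.indicator_of_notMem h, Set.indicator_of_mem (interior_subset h'),
      crossing_entry hP h h' hV]; norm_num
  · rw [Set.indicator_of_notMem h, Set.indicator_of_notMem h', sub_self]
    by_cases hp : ∃ τ ∈ Set.Icc (0 : ℝ) 1, x + τ • d ∈ interior S
    · obtain ⟨τ, ⟨h0, h1⟩, hτ⟩ := hp
      have h0' : 0 < τ := h0.lt_of_ne (by
        rintro rfl; simp only [zero_smul, add_zero] at hτ; exact h (interior_subset hτ))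
      have h1' : τ < 1 := h1.lt_of_ne (by
        rintro rfl; simp only [one_smul] at hτ; exact h' (interior_subset hτ))
      rw [crossing_split hP h0' h1' (fun hf => hf.2 hτ), crossing_entry hP h hτ,
        crossing_exit hP hτ]
      · norm_num
      · convert h' using 2; module
      · intro t ht; apply hV (τ + t * (1 - τ)); convert ht using 1; module
      · intro t ht; apply hV (t * τ); rwa [mul_smul]
    · push Not at hp
      symm
      refine Finset.sum_eq_zero fun e he => ?_
      rw [mem_edges hP] at he
      by_cases hs : cr (e.2 - e.1) d = 0
      · rw [hs]; simp
      rw [pind, Set.indicator_of_notMem, mul_zero]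
      rintro ⟨t, ht, hm⟩
      have htf := he.front hm
      have ht0 : 0 < t := ht.1.lt_of_ne (by
        rintro rfl; simp only [zero_smul, add_zero] at htf; exact hx htf)
      have ht1 : t < 1 := ht.2.lt_of_ne (by
        rintro rfl; simp only [one_smul] at htf; exact hxd htf)
      have hmo : x + t • d ∈ openSegment ℝ e.1 e.2 := by
        rw [← insert_endpoints_openSegment] at hm
        rcases hm with h | h | h
        · exact (hV t (h ▸ (he.mem_V hP).1)).elim
        · exact (hV t (h ▸ (he.mem_V hP).2)).elim
        · exact h
      -- Crossing an edge transversally, the line has points of the interior of `S` nearby.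
      have hev := (he.nhds hP hmo).eventually_nhds
      have hc : Filter.Tendsto (fun ε : ℝ => x + (t + ε * cr (e.2 - e.1) d) • d)
          (nhdsWithin 0 (Set.Ioi 0)) (nhds (x + t • d)) := by
        have : Continuous fun ε : ℝ => x + (t + ε * cr (e.2 - e.1) d) • d := by fun_prop
        have := this.tendsto 0
        simp only [zero_mul, add_zero] at this
        exact this.mono_left nhdsWithin_le_nhds
      have hc2 : Filter.Tendsto (fun ε : ℝ => t + ε * cr (e.2 - e.1) d)
          (nhdsWithin 0 (Set.Ioi 0)) (nhds t) := by
        have : Continuous fun ε : ℝ => t + ε * cr (e.2 - e.1) d := by fun_prop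
        have := this.tendsto 0
        simp only [zero_mul, add_zero] at this
        exact this.mono_left nhdsWithin_le_nhds
      obtain ⟨ε, ⟨h1, h2⟩, h4⟩ := (((hc.eventually hev).and
        (hc2.eventually (Ioo_mem_nhds ht0 ht1))).and self_mem_nhdsWithin).exists
      refine hp _ ⟨h2.1.le, h2.2.le⟩ ?_
      rw [mem_interior_iff_mem_nhds]
      have hpos : 0 < cr (e.2 - e.1) (x + (t + ε * cr (e.2 - e.1) d) • d - e.1) := by
        have e1 := cr_seg hm
        have e2 : cr (e.2 - e.1) (x + (t + ε * cr (e.2 - e.1) d) • d - e.1) =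
            cr (e.2 - e.1) (x + t • d - e.1) + ε * cr (e.2 - e.1) d ^ 2 := by
          rw [cr_sub, cr_sub, cr_add, cr_add, cr_smul, cr_smul]; ring
        rw [e2, e1, zero_add]
        exact mul_pos h4 (by positivity)
      have hcc : Continuous fun w => cr (e.2 - e.1) (w - e.1) :=
        (cr_cont _).comp (continuous_id.sub continuous_const)
      filter_upwards [h1, hcc.continuousAt.eventually_const_lt hpos] with w hw1 hw2
      exact hw1.2 hw2.le

end

/-! ### Birkhoff sums of the parallelograms swept by edges -/

/-- The Birkhoff sum `∑_{k<n} χ_T(x + kα)`. -/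
noncomputable def bs (α : Fin 2 → ℝ) (T : Set (Fin 2 → ℝ)) (n : ℕ) (x : Fin 2 → ℝ) : ℝ :=
  ∑ k ∈ Finset.range n, multFn T (x + (k : ℝ) • α)

lemma mf_bdd {T : Set (Fin 2 → ℝ)} {K : ℝ} (hK : 0 ≤ K) (hT : T ⊆ Metric.closedBall 0 K)
    (x y : Fin 2 → ℝ) : |multFn T x - multFn T y| ≤ (2 * K + 1) ^ 2 := by
  have := mf_le hK hT x
  have := mf_le hK hT y
  have := mf_nonneg T x
  have := mf_nonneg T y
  rw [abs_le]; constructor <;> linarith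

lemma bs_step {T : Set (Fin 2 → ℝ)} {K : ℝ} (hK : 0 ≤ K) (hT : T ⊆ Metric.closedBall 0 K)
    (α : Fin 2 → ℝ) (n : ℕ) (x : Fin 2 → ℝ) :
    |bs α T n (x + α) - bs α T n x| ≤ (2 * K + 1) ^ 2 := by
  have : bs α T n (x + α) - bs α T n x = multFn T (x + (n : ℝ) • α) - multFn T (x + (0 : ℕ) • α) := by
    rw [bs, bs, ← Finset.sum_sub_distrib]
    have := Finset.sum_range_sub (fun k : ℕ => multFn T (x + (k : ℝ) • α)) n
    simp only [Nat.cast_zero, zero_smul] at this ⊢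
    rw [← this]
    refine Finset.sum_congr rfl fun k _ => ?_
    have e : x + α + (k : ℝ) • α = x + ((k + 1 : ℕ) : ℝ) • α := by push_cast; module
    rw [e]
  rw [this]
  exact mf_bdd hK hT _ _

lemma bs_per (α : Fin 2 → ℝ) (T : Set (Fin 2 → ℝ)) (n : ℕ) (x : Fin 2 → ℝ) (m : Fin 2 → ℤ) :
    bs α T n (x + zv m) = bs α T n x := by
  refine Finset.sum_congr rfl fun k _ => ?_
  rw [add_right_comm, mf_periodic]

/-- Translating by a vector of `ℤα + ℤ²` changes Birkhoff sums by a bounded amount. -/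
lemma bs_shift {T : Set (Fin 2 → ℝ)} {K : ℝ} (hK : 0 ≤ K) (hT : T ⊆ Metric.closedBall 0 K)
    (α : Fin 2 → ℝ) (n : ℕ) (x : Fin 2 → ℝ) (q : ℤ) (m : Fin 2 → ℤ) :
    |bs α T n (x + ((q : ℝ) • α + zv m)) - bs α T n x| ≤ |(q : ℝ)| * (2 * K + 1) ^ 2 := by
  rw [← add_assoc, bs_per]
  have key : ∀ (j : ℕ) (x : Fin 2 → ℝ),
      |bs α T n (x + (j : ℝ) • α) - bs α T n x| ≤ j * (2 * K + 1) ^ 2 := by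
    intro j
    induction j with
    | zero => intro x; simp
    | succ j ih =>
      intro x
      have e : x + ((j + 1 : ℕ) : ℝ) • α = x + (j : ℝ) • α + α := by push_cast; module
      rw [e]
      have h1 := bs_step hK hT α n (x + (j : ℝ) • α)
      have h2 := ih x
      push_cast
      calc _ ≤ _ := abs_sub_le _ (bs α T n (x + (j : ℝ) • α)) _
        _ ≤ _ := add_le_add h1 h2
        _ = _ := by ring
  obtain ⟨j, rfl | rfl⟩ := q.eq_nat_or_neg
  · have := key j x
    simpa using this
  · have := key j (x + ((-(j : ℤ) : ℤ) : ℝ) • α)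
    rw [abs_sub_comm] at this
    have e : x + ((-(j : ℤ) : ℤ) : ℝ) • α + (j : ℝ) • α = x := by push_cast; module
    rw [e] at this
    simpa using this

lemma mf_translate (T : Set (Fin 2 → ℝ)) (γ x : Fin 2 → ℝ) :
    multFn ((fun y => y - γ) ⁻¹' T) x = multFn T (x - γ) := by
  rw [multFn_def, multFn_def]
  refine tsum_congr fun k => ?_
  rw [sub_add_eq_add_sub]; rfl

lemma bs_translate (α : Fin 2 → ℝ) (T : Set (Fin 2 → ℝ)) (n : ℕ) (γ x : Fin 2 → ℝ) :
    bs α ((fun y => y - γ) ⁻¹' T) n x = bs α T n (x - γ) := by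
  refine Finset.sum_congr rfl fun k _ => ?_
  rw [mf_translate, add_sub_right_comm]

lemma PS_translate (d a b γ : Fin 2 → ℝ) :
    PS d (a + γ) (b + γ) = (fun y => y - γ) ⁻¹' PS d a b := by
  ext x
  simp only [PS, Set.mem_preimage, Set.mem_ofPred_eq, segment_eq_image']
  refine exists_congr fun t => and_congr_right fun _ => ?_
  constructor
  · rintro ⟨s, hs, h⟩
    refine ⟨s, hs, ?_⟩
    simp only at h ⊢
    rw [sub_add_eq_add_sub, ← h]; module
  · rintro ⟨s, hs, h⟩
    refine ⟨s, hs, ?_⟩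
    simp only at h ⊢
    rw [sub_add_eq_add_sub, eq_sub_iff_add_eq] at h
    rw [← h]; module

lemma PS_bdd {d a b : Fin 2 → ℝ} {K : ℝ} (hd : ‖d‖ ≤ 1) (ha : ‖a‖ ≤ K) (hb : ‖b‖ ≤ K) :
    PS d a b ⊆ Metric.closedBall 0 (K + 1) := by
  rintro x ⟨t, ⟨h0, h1⟩, hm⟩
  have hm' : x + t • d ∈ Metric.closedBall (0 : Fin 2 → ℝ) K :=
    (convex_closedBall _ _).segment_subset (by simpa using ha) (by simpa using hb) hm
  rw [mem_closedBall_zero_iff] at *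
  calc ‖x‖ = ‖(x + t • d) - t • d‖ := by congr 1; abel
    _ ≤ ‖x + t • d‖ + ‖t • d‖ := norm_sub_le _ _
    _ ≤ K + 1 := by
      gcongr
      rw [norm_smul, Real.norm_of_nonneg h0]
      nlinarith [norm_nonneg d]

/-- Cutting a segment at a point not met by the line through `x` cuts the parallelogram. -/
lemma pind_add {a u d x : Fin 2 → ℝ} {s1 s2 s3 : ℝ} (h12 : s1 ≤ s2) (h23 : s2 ≤ s3)
    (hud : cr u d ≠ 0) (hx : cr d (x - (a + s2 • u)) ≠ 0) :
    pind d (a + s1 • u) (a + s3 • u) x =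
      pind d (a + s1 • u) (a + s2 • u) x + pind d (a + s2 • u) (a + s3 • u) x := by
  have hmem : ∀ r s : ℝ, r ≤ s → ∀ y, y ∈ segment ℝ (a + r • u) (a + s • u) ↔
      ∃ p, r ≤ p ∧ p ≤ s ∧ y = a + p • u := by
    intro r s hrs y
    rw [segment_eq_image']
    constructor
    · rintro ⟨θ, ⟨h0, h1⟩, rfl⟩
      refine ⟨r + θ * (s - r), by nlinarith, by nlinarith, by simp only; module⟩
    · rintro ⟨p, h0, h1, rfl⟩
      rcases hrs.eq_or_lt with h | h
      · refine ⟨0, by simp, ?_⟩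
        have : p = r := by linarith
        simp [this]
      · have h' := sub_pos.2 h
        refine ⟨(p - r) / (s - r), ⟨div_nonneg (by linarith) h'.le,
          (div_le_one h').2 (by linarith)⟩, ?_⟩
        have e : (a + s • u) - (a + r • u) = (s - r) • u := by module
        simp only [e, smul_smul, div_mul_cancel₀ _ h'.ne']; module
  have hPS : ∀ r s : ℝ, r ≤ s → (x ∈ PS d (a + r • u) (a + s • u) ↔
      ∃ t : ℝ, 0 ≤ t ∧ t ≤ 1 ∧ ∃ p : ℝ, r ≤ p ∧ p ≤ s ∧ x + t • d = a + p • u) := by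
    intro r s hrs
    constructor
    · rintro ⟨t, ⟨h0, h1⟩, hm⟩
      exact ⟨t, h0, h1, (hmem r s hrs _).1 hm⟩
    · rintro ⟨t, h0, h1, hm⟩
      exact ⟨t, ⟨h0, h1⟩, (hmem r s hrs _).2 hm⟩
  have huniq : ∀ t p t' p' : ℝ, x + t • d = a + p • u → x + t' • d = a + p' • u → p = p' := by
    intro t p t' p' h h'
    have h1 := congrArg (cr d) h
    have h2 := congrArg (cr d) h'
    rw [cr_add, cr_add, cr_smul, cr_smul, cr_self] at h1 h2
    have : (p - p') * cr d u = 0 := by linarith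
    rw [cr_comm] at hud
    have := (mul_eq_zero.1 this).resolve_right (neg_ne_zero.1 hud)
    linarith
  have m0 : x ∈ PS d (a + s1 • u) (a + s3 • u) ↔
      x ∈ PS d (a + s1 • u) (a + s2 • u) ∨ x ∈ PS d (a + s2 • u) (a + s3 • u) := by
    rw [hPS _ _ (h12.trans h23), hPS _ _ h12, hPS _ _ h23]
    constructor
    · rintro ⟨t, h0, h1, p, h2, h3, h4⟩
      rcases le_total p s2 with h | h
      · exact Or.inl ⟨t, h0, h1, p, h2, h, h4⟩
      · exact Or.inr ⟨t, h0, h1, p, h, h3, h4⟩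
    · rintro (⟨t, h0, h1, p, h2, h3, h4⟩ | ⟨t, h0, h1, p, h2, h3, h4⟩)
      · exact ⟨t, h0, h1, p, h2, h3.trans h23, h4⟩
      · exact ⟨t, h0, h1, p, h12.trans h2, h3, h4⟩
  have m1 : ¬ (x ∈ PS d (a + s1 • u) (a + s2 • u) ∧ x ∈ PS d (a + s2 • u) (a + s3 • u)) := by
    rw [hPS _ _ h12, hPS _ _ h23]
    rintro ⟨⟨t, h0, h1, p, h2, h3, h4⟩, ⟨t', h0', h1', p', h2', h3', h4'⟩⟩
    have e := huniq _ _ _ _ h4 h4'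
    have : p = s2 := by linarith
    rw [this] at h4
    apply hx
    rw [← h4]
    have : x - (x + t • d) = (-t) • d := by module
    rw [this, cr_smul, cr_self, mul_zero]
  simp only [pind]
  by_cases c1 : x ∈ PS d (a + s1 • u) (a + s2 • u) <;>
    by_cases c2 : x ∈ PS d (a + s2 • u) (a + s3 • u)
  · exact (m1 ⟨c1, c2⟩).elim
  all_goals simp [m0, c1, c2]

/-- The periodic form of `pind_add`. -/
lemma mf_PS_add {a u d x : Fin 2 → ℝ} {s1 s2 s3 : ℝ} (h12 : s1 ≤ s2) (h23 : s2 ≤ s3)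
    (hud : cr u d ≠ 0) (hd : ‖d‖ ≤ 1) (hx : ∀ m, cr d (x + zv m - (a + s2 • u)) ≠ 0) :
    multFn (PS d (a + s1 • u) (a + s3 • u)) x =
      multFn (PS d (a + s1 • u) (a + s2 • u)) x + multFn (PS d (a + s2 • u) (a + s3 • u)) x := by
  set K := ‖a + s1 • u‖ + ‖a + s2 • u‖ + ‖a + s3 • u‖ with hK
  have n1 := norm_nonneg (a + s1 • u)
  have n2 := norm_nonneg (a + s2 • u)
  have n3 := norm_nonneg (a + s3 • u)
  have hK1 : 0 ≤ K + 1 := by positivity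
  have b1 : ‖a + s1 • u‖ ≤ K := by linarith
  have b2 : ‖a + s2 • u‖ ≤ K := by linarith
  have b3 : ‖a + s3 • u‖ ≤ K := by linarith
  rw [mf_eq_sum hK1 (PS_bdd hd b1 b3) subset_rfl, mf_eq_sum hK1 (PS_bdd hd b1 b2) subset_rfl,
    mf_eq_sum hK1 (PS_bdd hd b2 b3) subset_rfl, ← Finset.sum_add_distrib]
  exact Finset.sum_congr rfl fun k _ => pind_add h12 h23 hud (hx k)

/-- The line through `w` in direction `d` is negligible. -/
lemma ae_line {d : Fin 2 → ℝ} (hd : d ≠ 0) (w : Fin 2 → ℝ) :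
    ∀ᵐ x : Fin 2 → ℝ, cr d (x - w) ≠ 0 := by
  obtain ⟨l, hl⟩ := exists_clm d
  have h0 : ∀ᵐ x : Fin 2 → ℝ, cr d x ≠ 0 := by
    have := Measure.addHaar_submodule (volume : Measure (Fin 2 → ℝ))
      (LinearMap.ker (l : (Fin 2 → ℝ) →ₗ[ℝ] ℝ)) (by
        intro htop
        have : rot d ∈ LinearMap.ker (l : (Fin 2 → ℝ) →ₗ[ℝ] ℝ) := htop ▸ trivial
        rw [LinearMap.mem_ker] at this
        have h2 : l (rot d) = 0 := this
        rw [hl, cr_rot] at h2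
        exact (nsq_pos hd).ne' h2)
    rw [ae_iff]
    convert this using 2
    ext x
    simp [hl]
  exact (measurePreserving_sub_right (volume : Measure (Fin 2 → ℝ)) w).quasiMeasurePreserving.ae h0

/-- Sliding a segment of lattice length along its line changes Birkhoff sums by a bounded
amount. -/
lemma bs_slide {α : Fin 2 → ℝ} {a u : Fin 2 → ℝ} {q : ℤ} {m : Fin 2 → ℤ}
    (hu : u = (q : ℝ) • α + zv m) {r : ℝ} (hr : 0 ≤ r) :
    ∃ C, ∀ d : Fin 2 → ℝ, ‖d‖ ≤ 1 → d ≠ 0 → cr u d ≠ 0 → ∀ᵐ x, ∀ n,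
      |bs α (PS d a (a + u)) n x - bs α (PS d (a + r • u) (a + r • u + u)) n x| ≤ C := by
  set K := ‖a‖ + ‖a + r • u‖ with hK
  refine ⟨|(q : ℝ)| * (2 * (K + 1) + 1) ^ 2, fun d hd hd0 hud => ?_⟩
  filter_upwards [ae_lat α (ae_line hd0 (a + r • u)), ae_lat α (ae_line hd0 (a + (1 : ℝ) • u))]
    with x h1 h2 n
  have b1 : ‖a‖ ≤ K := by linarith [norm_nonneg (a + r • u)]
  have b2 : ‖a + r • u‖ ≤ K := by linarith [norm_nonneg a]
  have hsum : bs α (PS d a (a + u)) n x + bs α (PS d (a + u) (a + r • u + u)) n x =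
      bs α (PS d a (a + r • u)) n x + bs α (PS d (a + r • u) (a + r • u + u)) n x := by
    rw [bs, bs, bs, bs, ← Finset.sum_add_distrib, ← Finset.sum_add_distrib]
    refine Finset.sum_congr rfl fun k _ => ?_
    have g1 := mf_PS_add (a := a) (u := u) (d := d) (x := x + (k : ℝ) • α) (s1 := 0) (s2 := r)
      (s3 := 1 + r) hr (by linarith) hud hd (by intro m; exact_mod_cast h1 k m)
    have g2 := mf_PS_add (a := a) (u := u) (d := d) (x := x + (k : ℝ) • α) (s1 := 0) (s2 := 1)
      (s3 := 1 + r) zero_le_one (by linarith) hud hd (by intro m; exact_mod_cast h2 k m)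
    rw [g1] at g2
    simp only [zero_smul, add_zero, one_smul] at g2
    have e : a + (1 + r) • u = a + r • u + u := by module
    rw [e] at g2
    exact g2.symm
  have hsh : bs α (PS d (a + u) (a + r • u + u)) n x = bs α (PS d a (a + r • u)) n (x - u) := by
    rw [PS_translate, bs_translate]
  have hb := bs_shift (by positivity) (PS_bdd hd b1 b2) α n (x - u) q m
  rw [← hu, sub_add_cancel] at hb
  rw [hsh] at hsum
  have e : bs α (PS d a (a + u)) n x - bs α (PS d (a + r • u) (a + r • u + u)) n x =
    bs α (PS d a (a + r • u)) n x - bs α (PS d a (a + r • u)) n (x - u) := by linarith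
  rw [e]
  exact hb

lemma PS_symm (d a b : Fin 2 → ℝ) : PS d a b = PS d b a := by
  simp only [PS, segment_symm ℝ a b]

lemma lat_iff {α v : Fin 2 → ℝ} : v ∈ lat α ↔ ∃ (q : ℤ) (m : Fin 2 → ℤ), v = (q : ℝ) • α + zv m :=
  Iff.rfl

/-- Under the conditions on a pair of opposite edges, the Birkhoff sums of the corresponding
parallelograms differ by a bounded amount. -/
lemma edge_pair {α a b a' b' : Fin 2 → ℝ} (hopp : b' - a' = -(b - a))
    (h1 : ∃ p ∈ segment ℝ a b, ∃ p' ∈ segment ℝ a' b', p' - p ∈ lat α)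
    (h2 : midpoint ℝ a' b' - midpoint ℝ a b ∉ lat α → b - a ∈ lat α) :
    ∃ C, 0 ≤ C ∧ ∀ d : Fin 2 → ℝ, ‖d‖ ≤ 1 → d ≠ 0 → cr (b - a) d ≠ 0 → ∀ᵐ x, ∀ n,
      |bs α (PS d a b) n x - bs α (PS d a' b') n x| ≤ C := by
  suffices h : ∃ C, ∀ d : Fin 2 → ℝ, ‖d‖ ≤ 1 → d ≠ 0 → cr (b - a) d ≠ 0 → ∀ᵐ x, ∀ n,
      |bs α (PS d a b) n x - bs α (PS d a' b') n x| ≤ C by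
    obtain ⟨C, hC⟩ := h
    refine ⟨max C 0, le_max_right _ _, fun d x1 x2 x3 => ?_⟩
    filter_upwards [hC d x1 x2 x3] with x hx n
    exact (hx n).trans (le_max_left _ _)
  -- The effect of translating a segment by a lattice vector.
  have htrans : ∀ (p w γ : Fin 2 → ℝ), γ ∈ lat α → ∃ C, ∀ d : Fin 2 → ℝ, ‖d‖ ≤ 1 → ∀ x n,
      |bs α (PS d p w) n x - bs α (PS d (p + γ) (w + γ)) n x| ≤ C := by
    intro p w γ hγ
    obtain ⟨q, m, rfl⟩ := lat_iff.1 hγ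
    refine ⟨|(q : ℝ)| * (2 * (‖p‖ + ‖w‖ + 1) + 1) ^ 2, fun d hd x n => ?_⟩
    rw [PS_translate, bs_translate]
    have := bs_shift (K := ‖p‖ + ‖w‖ + 1) (by positivity)
      (PS_bdd (a := p) (b := w) hd (by linarith [norm_nonneg w]) (by linarith [norm_nonneg p]))
      α n (x - ((q : ℝ) • α + zv m)) q m
    rwa [sub_add_cancel] at this
  by_cases hmid : midpoint ℝ a' b' - midpoint ℝ a b ∈ lat α
  · obtain ⟨C, hC⟩ := htrans a b _ hmid
    refine ⟨C, fun d hd _ _ => Filter.Eventually.of_forall fun x n => ?_⟩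
    have e1 : a + (midpoint ℝ a' b' - midpoint ℝ a b) = b' := by
      have : b' = a' - (b - a) := by rw [sub_eq_add_neg, ← hopp]; abel
      rw [this]; simp only [midpoint_eq_smul_add]; ext i; simp; ring
    have e2 : b + (midpoint ℝ a' b' - midpoint ℝ a b) = a' := by
      have : b' = a' - (b - a) := by rw [sub_eq_add_neg, ← hopp]; abel
      rw [this]; simp only [midpoint_eq_smul_add]; ext i; simp; ring
    have := hC d hd x n
    rwa [e1, e2, PS_symm d b' a'] at this
  -- The edge is slid along its line by `r • u`, then translated by `γ` onto the opposite edge.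
  obtain ⟨q, m, hu⟩ := lat_iff.1 (h2 hmid)
  obtain ⟨p, hp, p', hp', hγ⟩ := h1
  rw [segment_eq_image'] at hp hp'
  obtain ⟨s, ⟨hs0, hs1⟩, rfl⟩ := hp
  obtain ⟨s', ⟨hs0', hs1'⟩, rfl⟩ := hp'
  simp only at hγ
  set u := b - a with hud
  set γ := a' + s' • (b' - a') - (a + s • u) with hγd
  set r := s + s' - 1 with hr
  have eb : b = a + u := by rw [hud]; abel
  have eb' : b' = a + r • u + γ := by
    have : a' = b' + u := by rw [← sub_eq_iff_eq_add', ← neg_sub, hopp]; simp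
    rw [hγd, hopp, this, hr]; module
  have ea' : a' = a + r • u + u + γ := by
    have : a' = b' + u := by rw [← sub_eq_iff_eq_add', ← neg_sub, hopp]; simp
    rw [this, eb']; abel
  have hslide : ∃ C, ∀ d : Fin 2 → ℝ, ‖d‖ ≤ 1 → d ≠ 0 → cr u d ≠ 0 → ∀ᵐ x, ∀ n,
      |bs α (PS d a (a + u)) n x - bs α (PS d (a + r • u) (a + r • u + u)) n x| ≤ C := by
    rcases le_total 0 r with h | h
    · exact bs_slide hu h
    · obtain ⟨C, hC⟩ := bs_slide (α := α) (a := a + r • u) hu (r := -r) (by linarith)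
      refine ⟨C, fun d x1 x2 x3 => ?_⟩
      filter_upwards [hC d x1 x2 x3] with x hx n
      have e : a + r • u + (-r) • u = a := by module
      rw [abs_sub_comm]
      have := hx n
      rwa [e] at this
  obtain ⟨C1, hC1⟩ := hslide
  obtain ⟨C2, hC2⟩ := htrans (a + r • u) (a + r • u + u) γ hγ
  refine ⟨C1 + C2, fun d hd hd0 hne => ?_⟩
  filter_upwards [hC1 d hd hd0 hne] with x hx n
  have c1 := hx n
  have c2 := hC2 d hd x n
  rw [← eb', ← ea', PS_symm d b' a'] at c2
  rw [← eb] at c1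
  exact (abs_sub_le _ _ _).trans (add_le_add c1 c2)

/-! ### Sufficiency -/

/-- The periodic form of `ind_diff`: the change of the multiplicity function of `S` is a signed
sum of multiplicity functions of parallelograms. -/
lemma mf_diff {V : Finset (Fin 2 → ℝ)} {S : Set (Fin 2 → ℝ)} (hP : PolyHull V S) {R : ℝ}
    (hR : 0 ≤ R) (hS : S ⊆ Metric.closedBall 0 R) {d x : Fin 2 → ℝ} (hd : ‖d‖ ≤ 1)
    (h1 : ∀ m, x + zv m ∉ frontier S) (h2 : ∀ m, x + zv m + d ∉ frontier S)
    (h3 : ∀ m, ∀ v ∈ V, cr d (x + zv m - v) ≠ 0) :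
    multFn S (x + d) - multFn S x =
      ∑ e ∈ edges V S, Real.sign (cr (e.2 - e.1) d) * multFn (PS d e.1 e.2) x := by
  classical
  set F := win R (x + d) ∪ (win R x ∪ win (R + 1) x)
  have hF1 : win R (x + d) ⊆ F := Finset.subset_union_left
  have hF2 : win R x ⊆ F := Finset.subset_union_left.trans Finset.subset_union_right
  have hF3 : win (R + 1) x ⊆ F := Finset.subset_union_right.trans Finset.subset_union_right
  have hR1 : 0 ≤ R + 1 := by linarith
  have hb : ∀ e ∈ edges V S, multFn (PS d e.1 e.2) x = ∑ k ∈ F, pind d e.1 e.2 (x + zv k) := by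
    intro e he
    rw [mem_edges hP] at he
    have ha : e.1 ∈ S := he.sub (left_mem_segment _ _ _)
    have hb : e.2 ∈ S := he.sub (right_mem_segment _ _ _)
    rw [mf_eq_sum hR1 (PS_bdd hd (by simpa using hS ha) (by simpa using hS hb)) hF3]
    rfl
  have hrhs : ∑ e ∈ edges V S, Real.sign (cr (e.2 - e.1) d) * multFn (PS d e.1 e.2) x =
      ∑ k ∈ F, ∑ e ∈ edges V S, Real.sign (cr (e.2 - e.1) d) * pind d e.1 e.2 (x + zv k) := by
    rw [Finset.sum_comm]
    exact Finset.sum_congr rfl fun e he => by rw [hb e he, Finset.mul_sum]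
  rw [mf_eq_sum hR hS hF1, mf_eq_sum hR hS hF2, ← Finset.sum_sub_distrib, hrhs]
  refine Finset.sum_congr rfl fun k _ => ?_
  rw [add_right_comm, ind_diff hP (h1 k) (h2 k)]
  · rfl
  · intro t ht
    apply h3 k _ ht
    have : x + zv k - (x + zv k + t • d) = (-t) • d := by module
    rw [this, cr_smul, cr_self, mul_zero]

/-- A point reflection preserving `S` maps each edge to an oppositely directed edge. -/
lemma OEdge.reflect {S : Set (Fin 2 → ℝ)} {c : Fin 2 → ℝ}
    (hc : ∀ x, x ∈ S ↔ (2 : ℝ) • c - x ∈ S) {a b : Fin 2 → ℝ} (h : OEdge S a b) :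
    OEdge S ((2 : ℝ) • c - a) ((2 : ℝ) • c - b) := by
  refine ⟨fun he => h.1 (sub_right_injective he), ?_⟩
  have e1 : (2 : ℝ) • c - b - ((2 : ℝ) • c - a) = -(b - a) := by abel
  ext x
  have e2 : x ∈ segment ℝ ((2 : ℝ) • c - a) ((2 : ℝ) • c - b) ↔
      (2 : ℝ) • c - x ∈ segment ℝ a b := by
    simp only [segment_eq_image', e1]
    refine exists_congr fun t => and_congr_right fun _ => ?_
    simp only
    constructor
    · rintro rfl; module
    · intro h
      rw [eq_sub_iff_add_eq] at h
      rw [← h]; module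
  rw [e2, ← h.2, e1]
  simp only [fc, Set.mem_ofPred_eq, ← hc, cr_neg_left]
  refine and_congr_right fun _ => ⟨fun h z hz => ?_, fun h z hz => ?_⟩
  · have := h _ ((hc z).1 hz)
    rw [cr_sub] at *; linarith
  · have := h _ ((hc z).1 hz)
    rw [cr_sub, cr_sub] at this; linarith

lemma ae_front {V : Finset (Fin 2 → ℝ)} {S : Set (Fin 2 → ℝ)} (hP : PolyHull V S) :
    ∀ᵐ x : Fin 2 → ℝ, x ∉ frontier S := by
  rw [ae_iff]; simpa using hP.front_null

/-- Pairing each edge with the opposite one bounds the variation of the Birkhoff sums of `S`. -/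
lemma bs_var {V : Finset (Fin 2 → ℝ)} {S : Set (Fin 2 → ℝ)} (hP : PolyHull V S) {α c : Fin 2 → ℝ}
    (hc : ∀ x, x ∈ S ↔ (2 : ℝ) • c - x ∈ S)
    (hE : ∀ a b a' b', OEdge S a b → OEdge S a' b' → b' - a' = -(b - a) →
      (∃ p ∈ segment ℝ a b, ∃ p' ∈ segment ℝ a' b', p' - p ∈ lat α) ∧
      (midpoint ℝ a' b' - midpoint ℝ a b ∉ lat α → b - a ∈ lat α)) :
    ∃ C, ∀ d : Fin 2 → ℝ, ‖d‖ ≤ 1 → d ≠ 0 → ∀ᵐ x, ∀ n, |bs α S n (x + d) - bs α S n x| ≤ C := by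
  obtain ⟨R, hR⟩ := hP.comp.isBounded.subset_closedBall 0
  obtain ⟨x0, hx0⟩ := hP.nonempty
  have hR0 : 0 ≤ R := dist_nonneg.trans (hR hx0)
  set ι : (Fin 2 → ℝ) × (Fin 2 → ℝ) → (Fin 2 → ℝ) × (Fin 2 → ℝ) :=
    fun e => ((2 : ℝ) • c - e.1, (2 : ℝ) • c - e.2) with hι
  have hιm : ∀ e ∈ edges V S, ι e ∈ edges V S := by
    intro e he
    rw [mem_edges hP] at *
    exact he.reflect hc
  have hιι : ∀ e, ι (ι e) = e := fun e => by simp [hι]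
  have hιd : ∀ e, (ι e).2 - (ι e).1 = -(e.2 - e.1) := fun e => by simp only [hι]; abel
  have hpair : ∀ e ∈ edges V S, ∃ C, 0 ≤ C ∧ ∀ d : Fin 2 → ℝ, ‖d‖ ≤ 1 → d ≠ 0 →
      cr (e.2 - e.1) d ≠ 0 → ∀ᵐ x, ∀ n,
      |bs α (PS d e.1 e.2) n x - bs α (PS d (ι e).1 (ι e).2) n x| ≤ C := by
    intro e he
    have he' := hιm e he
    rw [mem_edges hP] at he he'
    obtain ⟨h1, h2⟩ := hE _ _ _ _ he he' (hιd e)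
    exact edge_pair (hιd e) h1 h2
  choose! C hC0 hC using hpair
  refine ⟨∑ e ∈ edges V S, C e, fun d hd hd0 => ?_⟩
  have hae : ∀ᵐ x : Fin 2 → ℝ, ∀ e ∈ edges V S, cr (e.2 - e.1) d ≠ 0 → ∀ n,
      |bs α (PS d e.1 e.2) n x - bs α (PS d (ι e).1 (ι e).2) n x| ≤ C e := by
    rw [Filter.eventually_all_finset]
    intro e he
    by_cases h : cr (e.2 - e.1) d = 0
    · exact Filter.Eventually.of_forall fun x h' => (h' h).elim
    · filter_upwards [hC e he d hd hd0 h] with x hx _ using hx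
  have hl : ∀ᵐ x : Fin 2 → ℝ, ∀ v ∈ V, cr d (x - v) ≠ 0 := by
    rw [Filter.eventually_all_finset]
    exact fun v _ => ae_line hd0 v
  have hfd : ∀ᵐ x : Fin 2 → ℝ, x + d ∉ frontier S :=
    (measurePreserving_add_right (volume : Measure (Fin 2 → ℝ)) d).quasiMeasurePreserving.ae
      (ae_front hP)
  filter_upwards [hae, ae_lat α hl, ae_lat α hfd, ae_lat α (ae_front hP)] with x hx h3 h2 h1 n
  have hsum : bs α S n (x + d) - bs α S n x =
      ∑ e ∈ edges V S, Real.sign (cr (e.2 - e.1) d) * bs α (PS d e.1 e.2) n x := by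
    simp only [bs, Finset.mul_sum]
    rw [Finset.sum_comm, ← Finset.sum_sub_distrib]
    refine Finset.sum_congr rfl fun k _ => ?_
    rw [add_right_comm]
    exact mf_diff hP hR0 hR hd (by intro m; exact_mod_cast h1 k m) (by intro m; exact_mod_cast h2 k m) (by intro m; exact_mod_cast h3 k m)
  -- Reindexing the edges by the reflection reverses all signs.
  have hsum2 : bs α S n (x + d) - bs α S n x =
      -∑ e ∈ edges V S, Real.sign (cr (e.2 - e.1) d) * bs α (PS d (ι e).1 (ι e).2) n x := by
    rw [hsum, ← Finset.sum_neg_distrib]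
    refine Finset.sum_nbij' ι ι hιm hιm (fun e _ => hιι e) (fun e _ => hιι e) fun e _ => ?_
    rw [hιι, hιd, cr_neg_left, Real.sign_neg]; ring
  have h2 : 2 * (bs α S n (x + d) - bs α S n x) = ∑ e ∈ edges V S,
      Real.sign (cr (e.2 - e.1) d) * (bs α (PS d e.1 e.2) n x - bs α (PS d (ι e).1 (ι e).2) n x) := by
    simp only [mul_sub, Finset.sum_sub_distrib]
    rw [← hsum]
    linarith
  have h3 : |2 * (bs α S n (x + d) - bs α S n x)| ≤ ∑ e ∈ edges V S, C e := by
    rw [h2]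
    refine (Finset.abs_sum_le_sum_abs _ _).trans (Finset.sum_le_sum fun e he => ?_)
    rcases lt_trichotomy (cr (e.2 - e.1) d) 0 with h | h | h
    · rw [Real.sign_of_neg h, neg_one_mul, abs_neg]
      exact hx e he h.ne n
    · rw [h]; simpa using hC0 e he
    · rw [Real.sign_of_pos h, one_mul]
      exact hx e he h.ne' n
  rw [abs_mul] at h3
  norm_num at h3
  linarith [abs_nonneg (bs α S n (x + d) - bs α S n x)]

/-- Averaging the bound on the variation over the unit square bounds the discrepancy. -/
lemma brs_of_var {V : Finset (Fin 2 → ℝ)} {S : Set (Fin 2 → ℝ)} (hP : PolyHull V S)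
    {α : Fin 2 → ℝ} {C : ℝ} (hC : ∀ d : Fin 2 → ℝ, ‖d‖ ≤ 1 → d ≠ 0 → ∀ᵐ x, ∀ n,
      |bs α S n (x + d) - bs α S n x| ≤ C) : IsBRS α S := by
  obtain ⟨R, hR⟩ := hP.comp.isBounded.subset_closedBall 0
  obtain ⟨x0, hx0⟩ := hP.nonempty
  have hR0 : 0 ≤ R := dist_nonneg.trans (hR hx0)
  have hSm : MeasurableSet S := hP.closed.measurableSet
  have hmf : Measurable (multFn S) := (integral_mf hSm hR0 hR 0).1
  have hbm : ∀ n, Measurable (bs α S n) := fun n =>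
    Finset.measurable_fun_sum _ fun k _ => hmf.comp (measurable_id.add_const _)
  have h1 : ∀ n, ∀ᵐ d ∂((volume : Measure (Fin 2 → ℝ)).restrict usq), ∀ᵐ x : Fin 2 → ℝ,
      |bs α S n (x + d) - bs α S n x| ≤ C := by
    intro n
    have hne : ∀ᵐ d : Fin 2 → ℝ, d ≠ 0 := by simp [ae_iff]
    filter_upwards [ae_restrict_mem meas_usq, ae_restrict_of_ae hne] with d hd hd0
    have hd1 : ‖d‖ ≤ 1 := by
      rw [pi_norm_le_iff_of_nonneg zero_le_one]
      intro i
      rw [Real.norm_of_nonneg (hd i).1]; exact (hd i).2.le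
    filter_upwards [hC d hd1 hd0] with x hx using hx n
  have h2 : ∀ n, ∀ᵐ x : Fin 2 → ℝ, ∀ᵐ d ∂((volume : Measure (Fin 2 → ℝ)).restrict usq),
      |bs α S n (x + d) - bs α S n x| ≤ C := by
    intro n
    refine (Measure.ae_ae_comm ?_).1 (h1 n)
    have hm : Measurable fun p : (Fin 2 → ℝ) × (Fin 2 → ℝ) =>
        |bs α S n (p.2 + p.1) - bs α S n p.2| :=
      (((hbm n).comp (measurable_snd.add measurable_fst)).sub
        ((hbm n).comp measurable_snd)).abs
    exact measurableSet_le hm measurable_const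
  refine ⟨C, ?_⟩
  filter_upwards [ae_all_iff.2 h2] with x hx n _
  have hfin : IsFiniteMeasure ((volume : Measure (Fin 2 → ℝ)).restrict usq) :=
    ⟨by rw [Measure.restrict_apply_univ, vol_usq]; exact ENNReal.one_lt_top⟩
  have hi : ∀ y : Fin 2 → ℝ, Integrable (fun d => multFn S (y + d))
      ((volume : Measure (Fin 2 → ℝ)).restrict usq) := by
    intro y
    have hmy : Measurable fun d => multFn S (y + d) :=
      hmf.comp (measurable_const.add measurable_id)
    refine Integrable.of_bound hmy.aestronglyMeasurable ((2 * R + 1) ^ 2) ?_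
    refine Filter.Eventually.of_forall fun d => ?_
    rw [Real.norm_of_nonneg (mf_nonneg _ _)]
    exact mf_le hR0 hR _
  -- The mean of `bs α S n (x + d)` over the unit square is `n · Leb S`.
  have e1 : ∫ d in usq, (bs α S n (x + d) - bs α S n x) = - disc α S n x := by
    have hI : ∀ k ∈ Finset.range n, Integrable (fun d => multFn S (x + d + (k : ℝ) • α))
        ((volume : Measure (Fin 2 → ℝ)).restrict usq) := by
      intro k _
      simpa only [add_right_comm] using hi (x + (k : ℝ) • α)
    rw [integral_sub]
    · simp only [bs, disc]
      rw [integral_finsetSum _ hI, integral_const]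
      have : ∀ k : ℕ, ∫ d in usq, multFn S (x + d + (k : ℝ) • α) = (volume S).toReal := by
        intro k
        have := (integral_mf hSm hR0 hR (x + (k : ℝ) • α)).2
        simpa only [add_right_comm] using this
      simp only [this, Finset.sum_const, Finset.card_range, measureReal_def,
        Measure.restrict_apply_univ, vol_usq]
      simp
    · exact integrable_finsetSum _ hI
    · exact integrable_const _
  have e2 := norm_integral_le_of_norm_le_const (μ := (volume : Measure (Fin 2 → ℝ)).restrict usq)
    (f := fun d => bs α S n (x + d) - bs α S n x) (C := C) (hx n)
  rw [e1, norm_neg, measureReal_def, Measure.restrict_apply_univ, vol_usq] at e2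
  simpa using e2

/-! ### Small discrepancies at return times -/

/-- If the discrepancies are bounded, then there are a dense set `Ω` and a nonempty open set `B`
such that the discrepancies of the points of `Ω ∩ B` at all return times to `B` are small: a
near-maximum of the discrepancy makes all later increments nearly nonpositive, and a near-minimum
over the returns makes them nearly nonnegative. -/
lemma small_returns {V : Finset (Fin 2 → ℝ)} {S : Set (Fin 2 → ℝ)} (hP : PolyHull V S)
    {α : Fin 2 → ℝ} (hB : IsBRS α S) :
    ∃ (Ω B : Set (Fin 2 → ℝ)), Dense Ω ∧ IsOpen B ∧ B.Nonempty ∧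
      ∀ x ∈ Ω, x ∈ B → ∀ (k : ℕ) m, x + (k : ℝ) • α + zv m ∈ B → |disc α S k x| ≤ 1 / 4 := by
  obtain ⟨R, hR⟩ := hP.comp.isBounded.subset_closedBall 0
  obtain ⟨p0, hp0⟩ := hP.nonempty
  have hR0 : 0 ≤ R := dist_nonneg.trans (hR hp0)
  obtain ⟨C, hC⟩ := hB
  have hC' : ∀ᵐ x : Fin 2 → ℝ, x ∉ frontier S ∧ ∀ n : ℕ, |disc α S n x| ≤ max C 0 := by
    filter_upwards [hC, ae_front hP] with x hx hf
    refine ⟨hf, fun n => ?_⟩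
    rcases Nat.eq_zero_or_pos n with rfl | hn
    · simp [disc_zero']
    · exact (hx n hn).trans (le_max_left _ _)
  set M := max C 0
  set Ω : Set (Fin 2 → ℝ) := {x | ∀ (k : ℤ) m, x + (k : ℝ) • α + zv m ∉ frontier S ∧
    ∀ n : ℕ, |disc α S n (x + (k : ℝ) • α + zv m)| ≤ M} with hΩ
  have hΩd : Dense Ω := Measure.dense_of_ae (ae_lat α hC')
  have hΩt : ∀ x ∈ Ω, ∀ (k : ℤ) m, x + (k : ℝ) • α + zv m ∈ Ω := by
    intro x hx k m k' m'
    have := hx (k + k') (m + m')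
    have e : x + (k : ℝ) • α + zv m + (k' : ℝ) • α + zv m' =
        x + ((k + k' : ℤ) : ℝ) • α + zv (m + m') := by
      rw [zv_add]; push_cast; module
    rwa [e]
  have hΩn : ∀ x ∈ Ω, ∀ n : ℕ, x + (n : ℝ) • α ∈ Ω := by
    intro x hx n
    simpa [zv_zero] using hΩt x hx n 0
  have hΩM : ∀ x ∈ Ω, ∀ n, |disc α S n x| ≤ M := by
    intro x hx n
    simpa [zv_zero] using (hx 0 0).2 n
  have hΩl : ∀ x ∈ Ω, ∀ n, ∀ᶠ x' in nhds x, disc α S n x' = disc α S n x := fun x hx n =>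
    disc_locconst hR0 hR α (fun k m => by exact_mod_cast (hx k m).1) n
  obtain ⟨ω, hω⟩ := hΩd.nonempty
  -- the near-maximum
  set A1 : Set ℝ := {t | ∃ x ∈ Ω, ∃ n, t = disc α S n x} with hA1
  have hA1b : BddAbove A1 := ⟨M, by rintro _ ⟨x, hx, n, rfl⟩; exact (abs_le.1 (hΩM x hx n)).2⟩
  obtain ⟨_, ⟨x0, hx0, n0, rfl⟩, hlt⟩ := exists_lt_of_lt_csSup (s := A1)
    ⟨_, ω, hω, 0, rfl⟩ (sub_lt_self (sSup A1) (by norm_num : (0 : ℝ) < 1 / 8))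
  obtain ⟨N0, hN0, hN0o, hxN0⟩ := mem_nhds_iff.1 (hΩl x0 hx0 n0)
  set U : Set (Fin 2 → ℝ) := {y | y - (n0 : ℝ) • α ∈ N0} with hU
  have hUo : IsOpen U := hN0o.preimage (continuous_id.sub continuous_const)
  have hUn : U.Nonempty := ⟨x0 + (n0 : ℝ) • α, by simpa [hU] using hxN0⟩
  have hU1 : ∀ y ∈ Ω, y ∈ U → ∀ m, disc α S m y ≤ 1 / 8 := by
    intro y hy hyU m
    have hx : y - (n0 : ℝ) • α ∈ Ω := by
      have := hΩt y hy (-(n0 : ℤ)) 0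
      simpa [zv_zero, sub_eq_add_neg] using this
    have h1 := le_csSup hA1b ⟨_, hx, n0 + m, rfl⟩
    have h2 : disc α S n0 (y - (n0 : ℝ) • α) = disc α S n0 x0 := hN0 hyU
    rw [disc_add', h2, sub_add_cancel] at h1
    linarith
  -- the near-minimum among the returns to `U`
  set A2 : Set ℝ := {t | ∃ x ∈ Ω, x ∈ U ∧ ∃ (n : ℕ) (m : Fin 2 → ℤ),
    x + (n : ℝ) • α + zv m ∈ U ∧ t = disc α S n x} with hA2
  have hA2b : BddBelow A2 :=
    ⟨-M, by rintro _ ⟨x, hx, _, n, _, _, rfl⟩; exact (abs_le.1 (hΩM x hx n)).1⟩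
  obtain ⟨ω', hω'U, hω'⟩ := hΩd.exists_mem_open hUo hUn
  obtain ⟨_, ⟨x1, hx1, hx1U, n1, m1, hr, rfl⟩, hlt2⟩ := exists_lt_of_csInf_lt (s := A2)
    ⟨_, ω', hω'U, hω', 0, 0, by simpa [zv_zero] using hω', rfl⟩
    (lt_add_of_pos_right (sInf A2) (by norm_num : (0 : ℝ) < 1 / 8))
  obtain ⟨N1, hN1, hN1o, hxN1⟩ := mem_nhds_iff.1 (hΩl x1 hx1 n1)
  have hcont : Continuous fun x : Fin 2 → ℝ => x + (n1 : ℝ) • α + zv m1 := by fun_prop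
  refine ⟨Ω, N1 ∩ U ∩ {x | x + (n1 : ℝ) • α + zv m1 ∈ U}, hΩd,
    (hN1o.inter hUo).inter (hUo.preimage hcont), ⟨x1, ⟨hxN1, hx1U⟩, hr⟩, ?_⟩
  intro x hx hxB k m hxk
  have hup := hU1 x hx hxB.1.2 k
  have hret : x + ((k + n1 : ℕ) : ℝ) • α + zv (m + m1) ∈ U := by
    have : x + ((k + n1 : ℕ) : ℝ) • α + zv (m + m1) =
        x + (k : ℝ) • α + zv m + (n1 : ℝ) • α + zv m1 := by
      rw [zv_add]; push_cast; module
    rw [this]; exact hxk.2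
  have hlow := csInf_le hA2b ⟨x, hx, hxB.1.2, _, _, hret, rfl⟩
  have e2 : disc α S n1 (x + (k : ℝ) • α + zv m) = disc α S n1 x1 := hN1 hxk.1.1
  rw [disc_per] at e2
  rw [disc_add', e2] at hlow
  rw [abs_le]; constructor <;> linarith

/-! ### Jumps across the line of an edge -/

/-- The orbit of `y` under `lat α` avoids the vertices and all edges not parallel to `u`. -/
def Generic (α : Fin 2 → ℝ) (V : Finset (Fin 2 → ℝ)) (S : Set (Fin 2 → ℝ)) (u y : Fin 2 → ℝ) :
    Prop :=
  ∀ v ∈ lat α, y + v ∉ V ∧ ∀ e ∈ edges V S, cr (e.2 - e.1) u ≠ 0 → y + v ∉ segment ℝ e.1 e.2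

lemma lat_mem (α : Fin 2 → ℝ) (q : ℤ) (m : Fin 2 → ℤ) : (q : ℝ) • α + zv m ∈ lat α := ⟨q, m, rfl⟩

lemma lat_add {α v w : Fin 2 → ℝ} (hv : v ∈ lat α) (hw : w ∈ lat α) : v + w ∈ lat α := by
  obtain ⟨q, m, rfl⟩ := lat_iff.1 hv
  obtain ⟨q', m', rfl⟩ := lat_iff.1 hw
  refine lat_iff.2 ⟨q + q', m + m', ?_⟩
  rw [zv_add]; push_cast; module

lemma lat_neg {α v : Fin 2 → ℝ} (hv : v ∈ lat α) : -v ∈ lat α := by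
  obtain ⟨q, m, rfl⟩ := lat_iff.1 hv
  refine lat_iff.2 ⟨-q, -m, ?_⟩
  rw [zv_neg]; push_cast; module

lemma lat_neg_iff {α v : Fin 2 → ℝ} : -v ∈ lat α ↔ v ∈ lat α :=
  ⟨fun h => by simpa using lat_neg h, lat_neg⟩

lemma lat_sub {α v w : Fin 2 → ℝ} (hv : v ∈ lat α) (hw : w ∈ lat α) : v - w ∈ lat α := by
  rw [sub_eq_add_neg]; exact lat_add hv (lat_neg hw)

lemma lat_zero (α : Fin 2 → ℝ) : (0 : Fin 2 → ℝ) ∈ lat α := lat_iff.2 ⟨0, 0, by simp [zv_zero]⟩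

lemma Generic.add {α : Fin 2 → ℝ} {V : Finset (Fin 2 → ℝ)} {S : Set (Fin 2 → ℝ)}
    {u y v : Fin 2 → ℝ} (h : Generic α V S u y) (hv : v ∈ lat α) : Generic α V S u (y + v) := by
  intro w hw
  rw [add_assoc]
  exact h _ (lat_add hv hw)

/-- Across the line of an edge, the jump of the indicator of `S` at a point that is not on a
transversal edge: `+1` on the edge itself, `-1` on the opposite face. -/
lemma ind_jump {V : Finset (Fin 2 → ℝ)} {S : Set (Fin 2 → ℝ)} (hP : PolyHull V S)
    {a b : Fin 2 → ℝ} (he : OEdge S a b) {z : Fin 2 → ℝ} (hzV : z ∉ V)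
    (hz : ∀ e ∈ edges V S, cr (e.2 - e.1) (b - a) ≠ 0 → z ∉ segment ℝ e.1 e.2) :
    ∀ᶠ p : (Fin 2 → ℝ) × (Fin 2 → ℝ) in nhds 0, 0 < cr (b - a) p.1 → cr (b - a) p.2 < 0 →
      S.indicator (fun _ => (1 : ℝ)) (z + p.1) - S.indicator (fun _ => (1 : ℝ)) (z + p.2) =
      (segment ℝ a b).indicator (fun _ => (1 : ℝ)) z -
        (fc S (-(b - a))).indicator (fun _ => (1 : ℝ)) z := by
  have t1 : Filter.Tendsto (fun p : (Fin 2 → ℝ) × (Fin 2 → ℝ) => z + p.1) (nhds 0) (nhds z) := by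
    have : Continuous fun p : (Fin 2 → ℝ) × (Fin 2 → ℝ) => z + p.1 := by fun_prop
    simpa using this.tendsto 0
  have t2 : Filter.Tendsto (fun p : (Fin 2 → ℝ) × (Fin 2 → ℝ) => z + p.2) (nhds 0) (nhds z) := by
    have : Continuous fun p : (Fin 2 → ℝ) × (Fin 2 → ℝ) => z + p.2 := by fun_prop
    simpa using this.tendsto 0
  have hne : b - a ≠ 0 := he.ne
  by_cases hzf : z ∈ frontier S
  · rcases frontier_cases hP hzf with h | ⟨a', b', he', hz'⟩
    · exact (hzV h).elim
    have hzs : z ∈ segment ℝ a' b' := openSegment_subset_segment _ _ _ hz'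
    have hcr : cr (b' - a') (b - a) = 0 := by
      by_contra hcr
      exact hz (a', b') ((mem_edges hP (e := (a', b'))).2 he') hcr hzs
    rw [cr_comm, neg_eq_zero] at hcr
    obtain ⟨κ, hκ⟩ := par_of_cr hne hcr
    have hκ0 : κ ≠ 0 := by rintro rfl; exact he'.ne (by simpa using hκ)
    have hn := he'.nhds hP hz'
    have hline := cr_seg hzs
    have key : ∀ h, (z + h ∈ S ↔ 0 ≤ cr (b' - a') (z + h - a')) →
        (z + h ∈ S ↔ 0 ≤ κ * cr (b - a) h) := by
      intro h hh
      rw [hh, show z + h - a' = (z - a') + h by abel, cr_add, hline, hκ, cr_smul_left, zero_add]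
    rcases lt_or_gt_of_ne hκ0 with hneg | hpos
    · have hT : z ∈ fc S (-(b - a)) := by
        rw [← fc_smul S (-(b - a)) (neg_pos.2 hneg), neg_smul_neg, ← hκ, he'.2]
        exact hzs
      have hS' : z ∉ segment ℝ a b := by
        intro h
        have := (he.eq_of_meet hP he' h hz')
        rw [this.1, this.2] at hκ
        have h1 : (1 - κ) • (b - a) = 0 := by rw [sub_smul, one_smul, ← hκ, sub_self]
        rcases smul_eq_zero.1 h1 with h1 | h1
        · linarith
        · exact hne h1
      filter_upwards [t1.eventually hn, t2.eventually hn] with p h1 h2 h3 h4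
      have k1 : z + p.1 ∉ S := by
        rw [key _ h1]; nlinarith
      have k2 : z + p.2 ∈ S := by
        rw [key _ h2]; nlinarith
      rw [Set.indicator_of_notMem k1, Set.indicator_of_mem k2, Set.indicator_of_notMem hS',
        Set.indicator_of_mem hT]
    · obtain ⟨rfl, rfl⟩ := OEdge.eq_of_par he he' hpos hκ
      have hT : z ∉ fc S (-(b' - a')) := by
        intro hT
        obtain ⟨w, hw⟩ := hP.int
        have h1 := he.lt hw
        have h2 := hT.2 w (interior_subset hw)
        rw [cr_neg_left, cr_neg_left] at h2
        rw [cr_sub] at h1 hline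
        linarith
      filter_upwards [t1.eventually hn, t2.eventually hn] with p h1 h2 h3 h4
      have k1 : z + p.1 ∈ S := by
        rw [key _ h1]; positivity
      have k2 : z + p.2 ∉ S := by
        rw [key _ h2]; nlinarith
      rw [Set.indicator_of_mem k1, Set.indicator_of_notMem k2, Set.indicator_of_mem hzs,
        Set.indicator_of_notMem hT]
  · have hS' : z ∉ segment ℝ a b := fun h => hzf (he.front h)
    have hT : z ∉ fc S (-(b - a)) := by
      rcases fc_cases hP (neg_ne_zero.2 hne) with ⟨v, hv, h⟩ | ⟨a', b', h', h, _⟩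
      · rw [h]; rintro rfl; exact hzV hv
      · rw [h]; exact fun h2 => hzf (h'.front h2)
    filter_upwards [t1.eventually (ind_locconst hzf), t2.eventually (ind_locconst hzf)]
      with p h1 h2 _ _
    rw [h1, h2, Set.indicator_of_notMem hS', Set.indicator_of_notMem hT]; ring

/-- The periodic form of `ind_jump`. -/
lemma mf_jump {V : Finset (Fin 2 → ℝ)} {S : Set (Fin 2 → ℝ)} (hP : PolyHull V S) {α : Fin 2 → ℝ}
    {a b : Fin 2 → ℝ} (he : OEdge S a b) {y : Fin 2 → ℝ} (hy : Generic α V S (b - a) y) :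
    ∀ᶠ p : (Fin 2 → ℝ) × (Fin 2 → ℝ) in nhds 0, 0 < cr (b - a) p.1 → cr (b - a) p.2 < 0 →
      multFn S (y + p.1) - multFn S (y + p.2) =
        multFn (segment ℝ a b) y - multFn (fc S (-(b - a))) y := by
  obtain ⟨R, hR⟩ := hP.comp.isBounded.subset_closedBall 0
  obtain ⟨p0, hp0⟩ := hP.nonempty
  have hR0 : 0 ≤ R := dist_nonneg.trans (hR hp0)
  have h1 : ∀ᶠ p : (Fin 2 → ℝ) × (Fin 2 → ℝ) in nhds 0, ∀ m ∈ win (R + 1) y,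
      0 < cr (b - a) p.1 → cr (b - a) p.2 < 0 →
      S.indicator (fun _ => (1 : ℝ)) (y + zv m + p.1) -
        S.indicator (fun _ => (1 : ℝ)) (y + zv m + p.2) =
      (segment ℝ a b).indicator (fun _ => (1 : ℝ)) (y + zv m) -
        (fc S (-(b - a))).indicator (fun _ => (1 : ℝ)) (y + zv m) := by
    rw [Filter.eventually_all_finset]
    intro m _
    have hm : zv m ∈ lat α := by simpa using lat_mem α 0 m
    exact ind_jump hP he (hy _ hm).1 (hy _ hm).2
  filter_upwards [h1, Metric.ball_mem_nhds 0 one_pos] with p hp hp1 h3 h4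
  rw [mem_ball_zero_iff, Prod.norm_def, max_lt_iff] at hp1
  have w0 : win R y ⊆ win (R + 1) y := win_subset hR0 (by simp)
  have w1 : win R (y + p.1) ⊆ win (R + 1) y := win_subset hR0 (by simpa [dist_eq_norm] using hp1.1.le)
  have w2 : win R (y + p.2) ⊆ win (R + 1) y := win_subset hR0 (by simpa [dist_eq_norm] using hp1.2.le)
  rw [mf_eq_sum hR0 hR w1, mf_eq_sum hR0 hR w2, mf_eq_sum hR0 (he.sub.trans hR) w0,
    mf_eq_sum (S := fc S (-(b - a))) hR0 (fun x hx => hR hx.1) w0,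
    ← Finset.sum_sub_distrib, ← Finset.sum_sub_distrib]
  refine Finset.sum_congr rfl fun m hm => ?_
  rw [add_right_comm, add_right_comm y p.2]
  exact hp m hm h3 h4

/-- Small returns force the edge and the opposite face to be visited equally often between two
return times: the sum is the difference of the discrepancies of two points of `Ω` close to `w`, on
either side of the line of the edge, and each of these is at most `1 / 4`. -/
lemma sum_balance {V : Finset (Fin 2 → ℝ)} {S : Set (Fin 2 → ℝ)} (hP : PolyHull V S)
    {α : Fin 2 → ℝ} {Ω B : Set (Fin 2 → ℝ)} (hΩ : Dense Ω) (hBo : IsOpen B)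
    (hB : ∀ x ∈ Ω, x ∈ B → ∀ (k : ℕ) m, x + (k : ℝ) • α + zv m ∈ B → |disc α S k x| ≤ 1 / 4)
    {a b : Fin 2 → ℝ} (he : OEdge S a b) {w : Fin 2 → ℝ} (hw : Generic α V S (b - a) w)
    (hwB : w ∈ B) {i : ℕ} {m : Fin 2 → ℤ} (hi : w + (i : ℝ) • α + zv m ∈ B) :
    |∑ k ∈ Finset.range i, (multFn (segment ℝ a b) (w + (k : ℝ) • α) -
      multFn (fc S (-(b - a))) (w + (k : ℝ) • α))| ≤ 1 / 2 := by
  have hne : b - a ≠ 0 := he.ne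
  have h1 : ∀ᶠ p : (Fin 2 → ℝ) × (Fin 2 → ℝ) in nhds 0, ∀ k ∈ Finset.range i,
      0 < cr (b - a) p.1 → cr (b - a) p.2 < 0 →
      multFn S (w + (k : ℝ) • α + p.1) - multFn S (w + (k : ℝ) • α + p.2) =
        multFn (segment ℝ a b) (w + (k : ℝ) • α) - multFn (fc S (-(b - a))) (w + (k : ℝ) • α) := by
    rw [Filter.eventually_all_finset]
    intro k _
    refine mf_jump (α := α) hP he (hw.add ?_)
    simpa [zv_zero] using lat_mem α k 0
  have h2 : ∀ᶠ h : Fin 2 → ℝ in nhds 0, w + h ∈ B ∧ w + h + (i : ℝ) • α + zv m ∈ B := by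
    have c1 : Continuous fun h : Fin 2 → ℝ => w + h := by fun_prop
    have c2 : Continuous fun h : Fin 2 → ℝ => w + h + (i : ℝ) • α + zv m := by fun_prop
    exact (c1.tendsto 0 |>.eventually (hBo.mem_nhds (by simpa using hwB))).and
      (c2.tendsto 0 |>.eventually (hBo.mem_nhds (by simpa using hi)))
  rw [← Prod.mk_zero_zero, nhds_prod_eq] at h1
  obtain ⟨P1, hP1, P2, hP2, h1⟩ := Filter.eventually_prod_iff.1 h1
  obtain ⟨W1, hW1, hW1o, h01⟩ := mem_nhds_iff.1 (hP1.and h2)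
  obtain ⟨W2, hW2, hW2o, h02⟩ := mem_nhds_iff.1 (hP2.and h2)
  -- points of `Ω` near `w` on either side of the line through `w` with direction `b - a`
  have side : ∀ (σ : ℝ), σ ≠ 0 → ∀ W : Set (Fin 2 → ℝ), IsOpen W → (0 : Fin 2 → ℝ) ∈ W →
      ∃ h ∈ W, 0 < σ * cr (b - a) h ∧ w + h ∈ Ω := by
    intro σ hσ W hWo h0
    have ho : IsOpen {x : Fin 2 → ℝ | x - w ∈ W ∧ 0 < σ * cr (b - a) (x - w)} := by
      refine IsOpen.inter (hWo.preimage (by fun_prop)) ?_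
      refine isOpen_lt continuous_const (continuous_const.mul ((cr_cont _).comp (by fun_prop)))
    have hn : {x : Fin 2 → ℝ | x - w ∈ W ∧ 0 < σ * cr (b - a) (x - w)}.Nonempty := by
      have c : Continuous fun t : ℝ => t • (σ • rot (b - a)) := by fun_prop
      have ev : ∀ᶠ t : ℝ in nhds 0, t • (σ • rot (b - a)) ∈ W :=
        c.tendsto 0 |>.eventually (hWo.mem_nhds (by simpa using h0))
      obtain ⟨t, ht, ht0⟩ := ((ev.filter_mono (nhdsWithin_le_nhds (s := Set.Ioi 0))).and
        self_mem_nhdsWithin).exists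
      refine ⟨w + t • (σ • rot (b - a)), by simpa using ht, ?_⟩
      rw [add_sub_cancel_left, cr_smul, cr_smul]
      have h3 : 0 < cr (b - a) (rot (b - a)) := by
        rw [cr_rot]; exact nsq_pos hne
      have h4 : 0 < σ * σ := mul_self_pos.2 hσ
      have h5 : σ * (t * (σ * cr (b - a) (rot (b - a)))) =
        (σ * σ) * t * cr (b - a) (rot (b - a)) := by ring
      rw [h5]
      exact mul_pos (mul_pos h4 ht0) h3
    obtain ⟨x, hx, hxΩ⟩ := hΩ.exists_mem_open ho hn
    exact ⟨x - w, hxΩ.1, hxΩ.2, by simpa using hx⟩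
  obtain ⟨p, hp, hp0, hpΩ⟩ := side 1 one_ne_zero W1 hW1o h01
  obtain ⟨p', hp', hp0', hpΩ'⟩ := side (-1) (by norm_num) W2 hW2o h02
  obtain ⟨q1, q2, q3⟩ := hW1 hp
  obtain ⟨r1, r2, r3⟩ := hW2 hp'
  have b1 := hB _ hpΩ q2 i m q3
  have b2 := hB _ hpΩ' r2 i m r3
  have e : ∑ k ∈ Finset.range i, (multFn (segment ℝ a b) (w + (k : ℝ) • α) -
      multFn (fc S (-(b - a))) (w + (k : ℝ) • α)) = disc α S i (w + p) - disc α S i (w + p') := by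
    simp only [disc]
    rw [sub_sub_sub_cancel_right, ← Finset.sum_sub_distrib]
    refine Finset.sum_congr rfl fun k hk => ?_
    rw [add_right_comm, add_right_comm w p', h1 q1 r1 k hk (by linarith) (by linarith)]
  rw [e]
  rw [abs_le] at *
  constructor <;> linarith

/-! ### Points of `ℤα + ℤ²` on a line -/

/-- The integer coordinates of a vector of `ℤα + ℤ²` are unique. -/
lemma lt_inj {α : Fin 2 → ℝ} (hα : IsIrrationalVector α) {q q' : ℤ} {p p' : Fin 2 → ℤ}
    (h : (q : ℝ) • α + zv p = (q' : ℝ) • α + zv p') : q = q' ∧ p = p' := by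
  have h0 := congrFun h 0
  have h1 := congrFun h 1
  simp only [Pi.add_apply, Pi.smul_apply, smul_eq_mul, zv_apply] at h0 h1
  have k0 := irr2 hα (p 0 - p' 0) (q - q') 0 (by push_cast; linarith)
  have k1 := irr2 hα (p 1 - p' 1) 0 (q - q') (by push_cast; linarith)
  refine ⟨by linarith [k0.2.1], funext fun i => ?_⟩
  fin_cases i
  · exact sub_eq_zero.1 k0.1
  · exact sub_eq_zero.1 k1.1

/-- The parameters `g` for which `g • u` is a vector of `ℤα + ℤ²`. -/
def lin (α u : Fin 2 → ℝ) : AddSubgroup ℝ where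
  carrier := {g | g • u ∈ lat α}
  zero_mem' := by
    change (0 : ℝ) • u ∈ lat α
    rw [zero_smul]; exact lat_zero α
  add_mem' {x y} hx hy := by
    change (x + y) • u ∈ lat α
    rw [add_smul]; exact lat_add hx hy
  neg_mem' {x} hx := by
    change (-x) • u ∈ lat α
    rw [neg_smul]; exact lat_neg hx

lemma mem_lin {α u : Fin 2 → ℝ} {g : ℝ} : g ∈ lin α u ↔ g • u ∈ lat α := Iff.rfl

/-- A line meets `ℤα + ℤ²` in a group of rank at most one: two parallel vectors have vanishing
cross product, which by irrationality forces their integer coordinates to be proportional. -/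
lemma lin_cyclic {α u : Fin 2 → ℝ} (hα : IsIrrationalVector α) (hu : u ≠ 0) :
    ∃ b : ℝ, 0 ≤ b ∧ ∀ g, g ∈ lin α u ↔ ∃ n : ℤ, g = n * b := by
  suffices h : ∃ r : ℝ, 0 < r ∧ ∀ g ∈ lin α u, 0 < g → r ≤ g by
    obtain ⟨r, hr, h⟩ := h
    obtain ⟨b, hb⟩ := AddSubgroup.cyclic_of_isolated_zero (H := lin α u) hr (by
      rw [Set.disjoint_left]
      intro g hg hg2
      exact absurd (h g hg hg2.1) (not_le.2 hg2.2))
    refine ⟨|b|, abs_nonneg b, fun g => ?_⟩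
    rw [hb, AddSubgroup.mem_closure_singleton]
    simp only [zsmul_eq_mul]
    rcases abs_cases b with ⟨h1, _⟩ | ⟨h1, _⟩
    · rw [h1]; exact exists_congr fun n => eq_comm
    · rw [h1]
      constructor
      · rintro ⟨n, hn⟩; exact ⟨-n, by push_cast; linarith⟩
      · rintro ⟨n, hn⟩; exact ⟨-n, by push_cast; linarith⟩
  by_cases hz : ∀ g ∈ lin α u, g = 0
  · exact ⟨1, one_pos, fun g hg h => absurd (hz g hg) h.ne'⟩
  push Not at hz
  obtain ⟨g0, hg0, hne⟩ := hz
  obtain ⟨q0, p0, h0⟩ := lat_iff.1 (mem_lin.1 hg0)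
  have h00 := congrFun h0 0
  have h01 := congrFun h0 1
  simp only [Pi.add_apply, Pi.smul_apply, smul_eq_mul, zv_apply] at h00 h01
  -- proportionality of the integer coordinates, and the resulting discreteness
  have key : ∀ g ∈ lin α u, ∃ (q : ℤ) (p : Fin 2 → ℤ), g • u = (q : ℝ) • α + zv p ∧
      q * p0 0 = q0 * p 0 ∧ q * p0 1 = q0 * p 1 ∧ p 0 * p0 1 = p0 0 * p 1 := by
    intro g hg
    obtain ⟨q, p, h⟩ := lat_iff.1 (mem_lin.1 hg)
    refine ⟨q, p, h, ?_⟩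
    have e0 := congrFun h 0
    have e1 := congrFun h 1
    simp only [Pi.add_apply, Pi.smul_apply, smul_eq_mul, zv_apply] at e0 e1
    have hd : (g * u 0) * (g0 * u 1) = (g0 * u 0) * (g * u 1) := by ring
    rw [e0, e1, h00, h01] at hd
    have := irr2 hα (p 0 * p0 1 - p0 0 * p 1) (q * p0 1 - q0 * p 1) (q0 * p 0 - q * p0 0)
      (by push_cast; linarith)
    refine ⟨by linarith [this.2.2], by linarith [this.2.1], by linarith [this.1]⟩
  have fin : ∀ (c0 : ℤ), c0 ≠ 0 → (∀ g ∈ lin α u, ∃ c : ℤ, (c0 : ℝ) * g = c * g0) →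
      ∃ r : ℝ, 0 < r ∧ ∀ g ∈ lin α u, 0 < g → r ≤ g := by
    intro c0 hc0 h
    have hc0' : (0 : ℝ) < |(c0 : ℝ)| := abs_pos.2 (by exact_mod_cast hc0)
    refine ⟨|g0| / |(c0 : ℝ)|, div_pos (abs_pos.2 hne) hc0', fun g hg hgp => ?_⟩
    obtain ⟨c, hc⟩ := h g hg
    have hcne : c ≠ 0 := by
      rintro rfl
      have : (c0 : ℝ) * g ≠ 0 := mul_ne_zero (by exact_mod_cast hc0) hgp.ne'
      exact this (by simpa using hc)
    have h1 : (1 : ℝ) ≤ |(c : ℝ)| := by exact_mod_cast Int.one_le_abs hcne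
    rw [div_le_iff₀ hc0']
    have h2 : |(c0 : ℝ)| * g = |(c : ℝ)| * |g0| := by
      rw [← abs_mul, ← hc, abs_mul, abs_of_pos hgp]
    nlinarith [abs_nonneg g0]
  have cancel : ∀ g : ℝ, ∀ c0 c : ℤ, c0 • (g • u) = c • (g0 • u) → (c0 : ℝ) * g = c * g0 := by
    intro g c0 c h
    rw [← Int.cast_smul_eq_zsmul ℝ, ← Int.cast_smul_eq_zsmul ℝ, smul_smul, smul_smul] at h
    exact smul_left_injective ℝ hu h
  have vec : ∀ (c0 c q : ℤ) (p : Fin 2 → ℤ), c0 * q = c * q0 → c0 * p 0 = c * p0 0 →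
      c0 * p 1 = c * p0 1 → c0 • ((q : ℝ) • α + zv p) = c • ((q0 : ℝ) • α + zv p0) := by
    intro c0 c q p k1 k2 k3
    have k1' : (c0 : ℝ) * q = c * q0 := by exact_mod_cast k1
    have k2' : (c0 : ℝ) * p 0 = c * p0 0 := by exact_mod_cast k2
    have k3' : (c0 : ℝ) * p 1 = c * p0 1 := by exact_mod_cast k3
    refine ext2 ?_ ?_ <;>
    simp only [Pi.add_apply, Pi.smul_apply, smul_eq_mul, zv_apply, zsmul_eq_mul] <;>
    rw [mul_add, mul_add, ← mul_assoc, ← mul_assoc, k1'] <;> linarith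
  by_cases hq : q0 = 0
  · by_cases hp0 : p0 0 = 0
    · have hp1 : p0 1 ≠ 0 := by
        intro hp1
        have : g0 • u = 0 := ext2 (by simp [h00, hq, hp0]) (by simp [h01, hq, hp1])
        rcases smul_eq_zero.1 this with h | h
        · exact hne h
        · exact hu h
      refine fin (p0 1) hp1 fun g hg => ?_
      obtain ⟨q, p, h, k1, k2, k3⟩ := key g hg
      refine ⟨p 1, cancel g _ _ ?_⟩
      rw [h, h0]
      exact vec _ _ _ _ (by linarith) (by linarith) (by ring)
    · refine fin (p0 0) hp0 fun g hg => ?_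
      obtain ⟨q, p, h, k1, k2, k3⟩ := key g hg
      refine ⟨p 0, cancel g _ _ ?_⟩
      rw [h, h0]
      exact vec _ _ _ _ (by linarith) (by ring) (by linarith)
  · refine fin q0 hq fun g hg => ?_
    obtain ⟨q, p, h, k1, k2, k3⟩ := key g hg
    refine ⟨q, cancel g _ _ ?_⟩
    rw [h, h0]
    exact vec _ _ _ _ (by ring) (by linarith) (by linarith)

/-- A bounded piece of a line contains only finitely many points of a coset of `ℤα + ℤ²`. -/
lemma hits_finite {α u : Fin 2 → ℝ} (hα : IsIrrationalVector α) (hu : u ≠ 0)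
    {A : Set (Fin 2 → ℝ)} {R : ℝ} (hA : A ⊆ Metric.closedBall 0 R)
    (hl : ∀ x ∈ A, ∀ x' ∈ A, cr u (x - x') = 0) (y : Fin 2 → ℝ) :
    {v | v ∈ lat α ∧ y + v ∈ A}.Finite := by
  rcases Set.eq_empty_or_nonempty {v | v ∈ lat α ∧ y + v ∈ A} with h | ⟨v1, hv1, hv1A⟩
  · rw [h]; exact Set.finite_empty
  obtain ⟨b, hb0, hb⟩ := lin_cyclic hα hu
  set M := 2 * R / ‖u‖ with hM
  have hfin : {g : ℝ | g ∈ lin α u ∧ |g| ≤ M}.Finite := by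
    rcases hb0.eq_or_lt with rfl | hbp
    · refine (Set.finite_singleton (0 : ℝ)).subset fun g hg => ?_
      obtain ⟨n, hn⟩ := (hb g).1 hg.1
      simpa using hn
    · refine ((Set.finite_Icc (-⌈M / b⌉) ⌈M / b⌉).image fun n : ℤ => (n : ℝ) * b).subset ?_
      rintro g ⟨hg, hgM⟩
      obtain ⟨n, rfl⟩ := (hb g).1 hg
      refine ⟨n, ?_, rfl⟩
      rw [abs_mul, abs_of_pos hbp, ← le_div_iff₀ hbp, abs_le] at hgM
      have := Int.le_ceil (M / b)
      constructor
      · have : -(⌈M / b⌉ : ℝ) ≤ n := by linarith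
        exact_mod_cast this
      · have : (n : ℝ) ≤ ⌈M / b⌉ := by linarith
        exact_mod_cast this
  refine (hfin.image fun g => v1 + g • u).subset ?_
  rintro v ⟨hv, hvA⟩
  obtain ⟨g, hg⟩ := par_of_cr hu (hl _ hvA _ hv1A)
  rw [add_sub_add_left_eq_sub] at hg
  refine ⟨g, ⟨mem_lin.2 (hg ▸ lat_sub hv hv1), ?_⟩, by simp [← hg]⟩
  have h1 := hA hvA
  have h2 := hA hv1A
  rw [mem_closedBall_zero_iff] at h1 h2
  rw [hM, le_div_iff₀ (norm_pos_iff.2 hu), ← Real.norm_eq_abs, ← norm_smul, ← hg]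
  calc ‖v - v1‖ = ‖(y + v) - (y + v1)‖ := by rw [add_sub_add_left_eq_sub]
    _ ≤ ‖y + v‖ + ‖y + v1‖ := norm_sub_le _ _
    _ ≤ 2 * R := by linarith

/-- The Birkhoff sum over a long enough orbit segment around `y` counts all points of the
coset `y + (ℤα + ℤ²)` in `A`. -/
lemma sum_hits {α : Fin 2 → ℝ} (hα : IsIrrationalVector α)
    {A : Set (Fin 2 → ℝ)} {R : ℝ} (hR : 0 ≤ R) (hA : A ⊆ Metric.closedBall 0 R) {y : Fin 2 → ℝ}
    {N : ℕ} (hN : ∀ (q : ℤ) p, y + ((q : ℝ) • α + zv p) ∈ A → |q| ≤ N) {j i : ℕ} (m : Fin 2 → ℤ)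
    (hj : N ≤ j) (hi : j + N < i) :
    ∑ k ∈ Finset.range i, multFn A (y + (j : ℝ) • (-α) + zv m + (k : ℝ) • α) =
      ({v | v ∈ lat α ∧ y + v ∈ A}.ncard : ℝ) := by
  classical
  set w := y + (j : ℝ) • (-α) + zv m with hw
  set F := (Finset.range i).biUnion fun k => win R (w + (k : ℝ) • α) with hF
  have h1 : ∀ k ∈ Finset.range i, multFn A (w + (k : ℝ) • α) =
      ∑ p ∈ F, A.indicator (fun _ => (1 : ℝ)) (w + (k : ℝ) • α + zv p) := fun k hk =>
    mf_eq_sum hR hA (Finset.subset_biUnion_of_mem (fun k : ℕ => win R (w + (k : ℝ) • α)) hk)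
  rw [Finset.sum_congr rfl h1, ← Finset.sum_product']
  simp only [Set.indicator_apply]
  rw [Finset.sum_boole]
  congr 1
  set f : ℕ × (Fin 2 → ℤ) → (Fin 2 → ℝ) := fun c =>
    (((c.1 : ℤ) - (j : ℤ) : ℤ) : ℝ) • α + zv (c.2 + m) with hf
  have hfi : Function.Injective f := by
    rintro ⟨k, p⟩ ⟨k', p'⟩ h
    have := lt_inj hα h
    simp only [Prod.mk.injEq]
    exact ⟨by omega, add_right_cancel this.2⟩
  have hfy : ∀ c, y + f c = w + (c.1 : ℝ) • α + zv c.2 := by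
    intro c
    simp only [hf, hw, zv_add]
    push_cast
    module
  rw [← Finset.card_image_of_injective _ hfi, ← Set.ncard_coe_finset]
  congr 1
  ext v
  simp only [Finset.coe_image, Set.mem_image, Finset.mem_coe, Finset.mem_filter,
    Finset.mem_product, Finset.mem_range, Set.mem_ofPred_eq]
  constructor
  · rintro ⟨c, ⟨_, hc⟩, rfl⟩
    refine ⟨lat_mem α _ _, ?_⟩
    rw [hfy]; exact hc
  · rintro ⟨hv, hvA⟩
    obtain ⟨q, p, rfl⟩ := lat_iff.1 hv
    have hq := abs_le.1 (hN q p hvA)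
    obtain ⟨k, hk⟩ : ∃ k : ℕ, (k : ℤ) = q + j := ⟨(q + j).toNat, Int.toNat_of_nonneg (by omega)⟩
    have e : f (k, p - m) = (q : ℝ) • α + zv p := by
      simp only [hf, sub_add_cancel]
      rw [hk, add_sub_cancel_right]
    have hki : k < i := by omega
    rw [← e, hfy] at hvA
    refine ⟨(k, p - m), ⟨⟨hki, ?_⟩, hvA⟩, e⟩
    rw [hF, Finset.mem_biUnion]
    exact ⟨k, Finset.mem_range.2 hki, (mem_win hR).2 (hA hvA)⟩

/-! ### Counting points on opposite faces -/

lemma fc_line {S : Set (Fin 2 → ℝ)} {w x x' : Fin 2 → ℝ} (hx : x ∈ fc S w) (hx' : x' ∈ fc S w) :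
    cr w (x - x') = 0 := by
  rw [cr_sub]; linarith [hx.2 _ hx'.1, hx'.2 _ hx.1]

/-- The coefficients of `α` in the finitely many vectors carrying `y` into `A` are bounded. -/
lemma hits_bound {α : Fin 2 → ℝ} {A : Set (Fin 2 → ℝ)} {y : Fin 2 → ℝ} (hα : IsIrrationalVector α)
    (h : {v | v ∈ lat α ∧ y + v ∈ A}.Finite) :
    ∃ N : ℕ, ∀ (q : ℤ) p, y + ((q : ℝ) • α + zv p) ∈ A → |q| ≤ N := by
  have hf : {c : ℤ × (Fin 2 → ℤ) | y + ((c.1 : ℝ) • α + zv c.2) ∈ A}.Finite := by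
    refine (h.preimage (f := fun c : ℤ × (Fin 2 → ℤ) => (c.1 : ℝ) • α + zv c.2) ?_).subset ?_
    · rintro ⟨q, p⟩ _ ⟨q', p'⟩ _ h
      have := lt_inj hα h
      exact Prod.ext this.1 this.2
    · exact fun c hc => ⟨lat_mem α _ _, hc⟩
  obtain ⟨N, hN⟩ := (hf.image fun c => c.1.natAbs).bddAbove
  refine ⟨N, fun q p hq => ?_⟩
  have := hN ⟨(q, p), hq, rfl⟩
  simp only at this
  rw [Int.abs_eq_natAbs]
  exact_mod_cast this

/-- For a bounded remainder polygon, an edge and the opposite face contain equally many points of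
each generic coset of `ℤα + ℤ²`. The orbit segment in `sum_balance` is taken to start far back at
a point of `B`, found by Kronecker's theorem for `-α`, and to return to `B` after all hits; then
the difference of the two counts is an integer of absolute value at most `1 / 2`. -/
lemma hits_eq {V : Finset (Fin 2 → ℝ)} {S : Set (Fin 2 → ℝ)} (hP : PolyHull V S)
    {α : Fin 2 → ℝ} (hα : IsIrrationalVector α) (hB : IsBRS α S) {a b : Fin 2 → ℝ}
    (he : OEdge S a b) {y : Fin 2 → ℝ} (hy : Generic α V S (b - a) y) :
    {v | v ∈ lat α ∧ y + v ∈ segment ℝ a b}.ncard =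
      {v | v ∈ lat α ∧ y + v ∈ fc S (-(b - a))}.ncard := by
  obtain ⟨R, hR⟩ := hP.comp.isBounded.subset_closedBall 0
  obtain ⟨p0, hp0⟩ := hP.nonempty
  have hR0 : 0 ≤ R := dist_nonneg.trans (hR hp0)
  have hne : b - a ≠ 0 := he.ne
  have hs : segment ℝ a b ⊆ Metric.closedBall 0 R := he.sub.trans hR
  have hT : fc S (-(b - a)) ⊆ Metric.closedBall 0 R := fun x hx => hR hx.1
  obtain ⟨N1, hN1⟩ := hits_bound hα (hits_finite hα hne hs (fun x hx x' hx' => by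
    rw [← he.2] at hx hx'; exact fc_line hx hx') y)
  obtain ⟨N2, hN2⟩ := hits_bound hα (hits_finite hα hne hT (fun x hx x' hx' => by
    have := fc_line hx hx'
    rwa [cr_neg_left, neg_eq_zero] at this) y)
  obtain ⟨Ω, B, hΩ, hBo, hBn, hBr⟩ := small_returns hP hB
  obtain ⟨j, hj, m, hjm⟩ := visits hα.neg' y hBo hBn (max N1 N2)
  set w := y + (j : ℝ) • (-α) + zv m with hw
  obtain ⟨i, hi, m', him⟩ := visits hα w hBo hBn (j + max N1 N2 + 1)
  have hwg : Generic α V S (b - a) w := by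
    have e : w = y + (((-(j : ℤ) : ℤ) : ℝ) • α + zv m) := by rw [hw]; push_cast; module
    rw [e]; exact hy.add (lat_mem α _ _)
  have h := sum_balance hP hΩ hBo hBr he hwg hjm him
  rw [Finset.sum_sub_distrib,
    sum_hits hα hR0 hs hN1 m (le_trans (le_max_left _ _) hj) (by
      have := le_max_left N1 N2; omega),
    sum_hits hα hR0 hT hN2 m (le_trans (le_max_right _ _) hj) (by
      have := le_max_right N1 N2; omega)] at h
  have h2 : |(({v | v ∈ lat α ∧ y + v ∈ segment ℝ a b}.ncard : ℤ) -
      ({v | v ∈ lat α ∧ y + v ∈ fc S (-(b - a))}.ncard : ℤ) : ℤ)| < 1 := by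
    have : (|(({v | v ∈ lat α ∧ y + v ∈ segment ℝ a b}.ncard : ℤ) -
      ({v | v ∈ lat α ∧ y + v ∈ fc S (-(b - a))}.ncard : ℤ) : ℤ)| : ℝ) < 1 := by
      push_cast; linarith
    exact_mod_cast this
  rw [Int.abs_lt_one_iff] at h2
  omega

lemma lat_countable (α : Fin 2 → ℝ) : (lat α).Countable := by
  refine (Set.countable_range fun c : ℤ × (Fin 2 → ℤ) => (c.1 : ℝ) • α + zv c.2).mono ?_
  intro v hv
  obtain ⟨q, p, rfl⟩ := lat_iff.1 hv
  exact ⟨(q, p), rfl⟩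

/-- All but countably many points of a line with direction `u` are generic. -/
lemma generic_dense (α : Fin 2 → ℝ) (V : Finset (Fin 2 → ℝ)) (S : Set (Fin 2 → ℝ))
    {u : Fin 2 → ℝ} (hu : u ≠ 0) (a : Fin 2 → ℝ) :
    {τ : ℝ | Generic α V S u (a + τ • u)}ᶜ.Countable := by
  have h1 : (⋃ v ∈ lat α, ((⋃ p ∈ V, {τ : ℝ | a + τ • u + v = p}) ∪
      ⋃ e ∈ (edges V S : Set ((Fin 2 → ℝ) × (Fin 2 → ℝ))),
        {τ : ℝ | cr (e.2 - e.1) u ≠ 0 ∧ a + τ • u + v ∈ segment ℝ e.1 e.2})).Countable := by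
    refine (lat_countable α).biUnion fun v _ => Set.Countable.union ?_ ?_
    · refine V.countable_toSet.biUnion fun p _ => Set.Subsingleton.countable ?_
      intro τ hτ τ' hτ'
      have h : τ • u = τ' • u := by
        have := Eq.trans (show a + τ • u + v = p from hτ) (show a + τ' • u + v = p from hτ').symm
        simpa using this
      exact smul_left_injective ℝ hu h
    · refine (edges V S).countable_toSet.biUnion fun e _ => Set.Subsingleton.countable ?_
      rintro τ ⟨hc, hτ⟩ τ' ⟨_, hτ'⟩
      have e1 := cr_seg hτ
      have e2 := cr_seg hτ'
      have : cr (e.2 - e.1) (a + τ • u + v - e.1) - cr (e.2 - e.1) (a + τ' • u + v - e.1) =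
          (τ - τ') * cr (e.2 - e.1) u := by
        rw [← cr_sub, ← cr_smul]; congr 1; module
      rw [e1, e2, sub_zero] at this
      rcases mul_eq_zero.1 this.symm with h | h
      · linarith
      · exact (hc h).elim
  refine h1.mono fun τ hτ => ?_
  simp only [Set.mem_compl_iff, Set.mem_ofPred_eq, Generic] at hτ
  push Not at hτ
  obtain ⟨v, hv, h⟩ := hτ
  refine Set.mem_biUnion hv ?_
  by_cases hV : a + τ • u + v ∈ V
  · exact Or.inl (Set.mem_biUnion hV rfl)
  · obtain ⟨e, he, hc, hs⟩ := h hV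
    exact Or.inr (Set.mem_biUnion (by exact he) ⟨hc, hs⟩)

/-! ### Counting points of cyclic subgroups of `ℝ` -/

lemma floor_stable {x : ℝ} (hx : ∀ n : ℤ, x ≠ n) :
    ∃ ε : ℝ, 0 < ε ∧ ∀ t, |t| < ε → ⌊x + t⌋ = ⌊x⌋ := by
  have h0 : (⌊x⌋ : ℝ) < x := lt_of_le_of_ne (Int.floor_le x) fun h => hx _ h.symm
  have h1 := Int.lt_floor_add_one x
  refine ⟨min (x - ⌊x⌋) (⌊x⌋ + 1 - x), lt_min (by linarith) (by linarith), fun t ht => ?_⟩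
  rw [lt_min_iff, abs_lt, abs_lt] at ht
  rw [Int.floor_eq_iff]
  constructor <;> linarith [ht.1.1, ht.2.2]

/-- If `[0, l]` and `[s, s + k]` contain equally many points of all but countably many translates
of `ℤ`, then they have equal length, and `s` or the length is an integer. The number of points of
`t + ℤ` in `[0, l]` is `⌊l - t⌋ + ⌊t⌋ + 1`. -/
lemma floors {l s k : ℝ} {D : Set ℝ} (hD : D.Countable)
    (h : ∀ t, t ∉ D → ⌊l - t⌋ + ⌊t⌋ = ⌊s + k - t⌋ + ⌊t - s⌋) :
    k = l ∧ ((∃ n : ℤ, s = n) ∨ ∃ n : ℤ, l = n) := by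
  by_cases hl : ∃ n : ℤ, l = n
  · refine ⟨?_, Or.inr hl⟩
    obtain ⟨L, rfl⟩ := hl
    have hD' : ((fun t : ℝ => t - s) '' (D ∪ Set.range ((↑) : ℤ → ℝ))).Countable :=
      (hD.union (Set.countable_range _)).image _
    -- For integral `l` the first count is constant, so the second one is; it is read off for
    -- translates `s + t` with `t ∈ [0, 1]`.
    have key : ∀ x y : ℝ, x < y → 0 ≤ x → y ≤ 1 →
        ∃ t, x < t ∧ t < y ∧ (L : ℝ) - 1 ≤ k - t ∧ k - t < L := by
      intro x y hxy hx hy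
      obtain ⟨t, ht, htx, hty⟩ := (hD'.dense_compl ℝ).exists_between hxy
      have ht1 : s + t ∉ D := fun hh => ht ⟨s + t, Or.inl hh, by ring⟩
      have ht2 : ∀ n : ℤ, s + t ≠ n := fun n hn => ht ⟨s + t, Or.inr ⟨n, hn.symm⟩, by ring⟩
      have e := h _ ht1
      have e1 : ⌊(L : ℝ) - (s + t)⌋ + ⌊s + t⌋ = L - 1 := by
        have h0 : (⌊s + t⌋ : ℝ) < s + t :=
          lt_of_le_of_ne (Int.floor_le _) fun h => ht2 _ h.symm
        have h1 := Int.lt_floor_add_one (s + t)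
        have : ⌊(L : ℝ) - (s + t)⌋ = L - ⌊s + t⌋ - 1 := by
          rw [Int.floor_eq_iff]; push_cast; constructor <;> linarith
        rw [this]; ring
      have e2 : ⌊s + t - s⌋ = 0 := by
        rw [Int.floor_eq_iff]; push_cast; constructor <;> linarith
      rw [e1, e2, add_zero, show s + k - (s + t) = k - t by ring, eq_comm, Int.floor_eq_iff] at e
      push_cast at e
      exact ⟨t, htx, hty, e.1, by linarith [e.2]⟩
    rcases lt_trichotomy k L with hk | hk | hk
    · obtain ⟨t, h1, h2, h3, h4⟩ := key (max 0 (k - L + 1)) 1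
        (max_lt one_pos (by linarith)) (le_max_left _ _) le_rfl
      linarith [le_max_right 0 (k - L + 1)]
    · exact hk
    · obtain ⟨t, h1, h2, h3, h4⟩ := key 0 (min 1 (k - L))
        (lt_min one_pos (by linarith)) le_rfl (min_le_left _ _)
      linarith [min_le_right 1 (k - L)]
  · push Not at hl
    -- If neither `l` nor `s` is an integer, then as `t` increases through `0` the first count
    -- increases by one while the second does not.
    have hs : ∃ n : ℤ, s = n := by
      by_contra hs
      push Not at hs
      obtain ⟨ε1, hε1, h1⟩ := floor_stable hl
      obtain ⟨ε2, hε2, h2⟩ := floor_stable (x := -s) fun n hn => hs (-n) (by push_cast; linarith)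
      set ε := min 1 (min ε1 ε2)
      have hε : 0 < ε := lt_min one_pos (lt_min hε1 hε2)
      have l1 : ε ≤ ε1 := (min_le_right _ _).trans (min_le_left _ _)
      have l2 : ε ≤ ε2 := (min_le_right _ _).trans (min_le_right _ _)
      have l3 : ε ≤ 1 := min_le_left _ _
      obtain ⟨t, ht, ht1, ht2⟩ := (hD.dense_compl ℝ).exists_between (neg_lt_zero.2 hε)
      obtain ⟨t', ht', ht1', ht2'⟩ := (hD.dense_compl ℝ).exists_between hε
      have a1 := h1 (-t) (by rw [abs_lt]; constructor <;> linarith)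
      have a2 := h1 (-t') (by rw [abs_lt]; constructor <;> linarith)
      have b1 := h2 t (by rw [abs_lt]; constructor <;> linarith)
      have b2 := h2 t' (by rw [abs_lt]; constructor <;> linarith)
      have c1 : ⌊t⌋ = -1 := by
        rw [Int.floor_eq_iff]; push_cast; constructor <;> linarith
      have c2 : ⌊t'⌋ = 0 := by
        rw [Int.floor_eq_iff]; push_cast; constructor <;> linarith
      have d1 := h t ht
      have d2 := h t' ht'
      have d3 : ⌊s + k - t'⌋ ≤ ⌊s + k - t⌋ := Int.floor_mono (by linarith)
      rw [sub_eq_add_neg, a1, c1, show t - s = -s + t by ring, b1] at d1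
      rw [sub_eq_add_neg, a2, c2, show t' - s = -s + t' by ring, b2] at d2
      omega
    refine ⟨?_, Or.inl hs⟩
    obtain ⟨n, rfl⟩ := hs
    have key : ∀ t, t ∉ D → ⌊l - t⌋ = ⌊k - t⌋ := by
      intro t ht
      have := h t ht
      rw [show (n : ℝ) + k - t = k - t + n by ring, Int.floor_add_intCast,
        Int.floor_sub_intCast] at this
      omega
    have aux : ∀ x y : ℝ, x < y → (∀ t, t ∉ D → ⌊x - t⌋ = ⌊y - t⌋) → False := by
      intro x y hxy hh
      obtain ⟨t, ht, ht1, ht2⟩ := (hD.dense_compl ℝ).exists_between hxy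
      have e1 : ⌊x - t⌋ < 0 := by rw [Int.floor_lt]; push_cast; linarith
      have e2 : 0 ≤ ⌊y - t⌋ := by rw [Int.le_floor]; push_cast; linarith
      have := hh t ht
      omega
    rcases lt_trichotomy k l with hk | hk | hk
    · exact (aux _ _ hk fun t ht => (key t ht).symm).elim
    · exact hk
    · exact (aux _ _ hk key).elim

/-- The number of points of `τ + ℤb` in `[x, x']`. -/
lemma ncard_interval {b x x' τ : ℝ} (hb : 0 < b) (hx : x ≤ x') :
    (({g : ℝ | (∃ n : ℤ, g = n * b) ∧ x ≤ τ + g ∧ τ + g ≤ x'}.ncard : ℕ) : ℤ) =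
      ⌊(x' - τ) / b⌋ + ⌊(τ - x) / b⌋ + 1 := by
  have e : {g : ℝ | (∃ n : ℤ, g = n * b) ∧ x ≤ τ + g ∧ τ + g ≤ x'} =
      (fun n : ℤ => (n : ℝ) * b) '' (Finset.Icc (-⌊(τ - x) / b⌋) ⌊(x' - τ) / b⌋ : Finset ℤ) := by
    have aux : ∀ n : ℤ, (x ≤ τ + n * b ∧ τ + n * b ≤ x') ↔
        -⌊(τ - x) / b⌋ ≤ n ∧ n ≤ ⌊(x' - τ) / b⌋ := by
      intro n
      rw [Int.le_floor, le_div_iff₀ hb, neg_le, Int.le_floor, le_div_iff₀ hb]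
      push_cast
      constructor <;> rintro ⟨h1, h2⟩ <;> constructor <;> linarith
    ext g
    simp only [Set.mem_ofPred_eq, Set.mem_image, Finset.mem_coe, Finset.mem_Icc, ← aux]
    constructor
    · rintro ⟨⟨n, rfl⟩, h⟩; exact ⟨n, h, rfl⟩
    · rintro ⟨n, h, rfl⟩; exact ⟨⟨n, rfl⟩, h⟩
  have hinj : Function.Injective fun n : ℤ => (n : ℝ) * b := by
    intro n n' h
    exact_mod_cast mul_right_cancel₀ hb.ne' h
  rw [e, Set.ncard_image_of_injective _ hinj, Set.ncard_coe_finset, Int.card_Icc,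
    Int.toNat_of_nonneg]
  · ring
  · have h1 := Int.lt_floor_add_one ((x' - τ) / b)
    have h2 := Int.lt_floor_add_one ((τ - x) / b)
    have h3 : (x' - τ) / b + (τ - x) / b = (x' - x) / b := by ring
    have h4 : 0 ≤ (x' - x) / b := div_nonneg (by linarith) hb.le
    have h5 : ((-2 : ℤ) : ℝ) < ((⌊(x' - τ) / b⌋ + ⌊(τ - x) / b⌋ : ℤ) : ℝ) := by
      push_cast; linarith
    have h6 : -2 < ⌊(x' - τ) / b⌋ + ⌊(τ - x) / b⌋ := by exact_mod_cast h5
    omega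

/-- Intervals `[0, 1]` and `[s, s + k]` that contain equally many points of all but countably many
translates of a cyclic group `G` have equal length, and `s ∈ G` or `1 ∈ G`. -/
lemma one_dim {G : Set ℝ} {b : ℝ} (hb : 0 ≤ b) (hG : ∀ g, g ∈ G ↔ ∃ n : ℤ, g = n * b) {s k : ℝ}
    (hk : 0 < k) {D : Set ℝ} (hD : D.Countable)
    (h : ∀ τ, τ ∉ D → {g | g ∈ G ∧ 0 ≤ τ + g ∧ τ + g ≤ 1}.ncard =
      {g | g ∈ G ∧ s ≤ τ + g ∧ τ + g ≤ s + k}.ncard) : k = 1 ∧ (s ∈ G ∨ (1 : ℝ) ∈ G) := by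
  rcases hb.eq_or_lt with rfl | hb
  · have hG0 : ∀ g, g ∈ G ↔ g = 0 := fun g => by rw [hG]; simp
    have cnt : ∀ x x' τ : ℝ, {g | g ∈ G ∧ x ≤ τ + g ∧ τ + g ≤ x'}.ncard =
        if x ≤ τ ∧ τ ≤ x' then 1 else 0 := by
      intro x x' τ
      split_ifs with hh
      · rw [Set.ncard_eq_one]
        refine ⟨0, ?_⟩
        ext g
        simp only [Set.mem_ofPred_eq, hG0, Set.mem_singleton_iff]
        refine ⟨fun h => h.1, ?_⟩
        rintro rfl; simpa using hh
      · convert Set.ncard_empty ℝ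
        ext g
        simp only [Set.mem_ofPred_eq, hG0, Set.mem_empty_iff_false, iff_false]
        rintro ⟨rfl, h⟩; exact hh (by simpa using h)
    have iff : ∀ τ, τ ∉ D → ((0 ≤ τ ∧ τ ≤ 1) ↔ (s ≤ τ ∧ τ ≤ s + k)) := by
      intro τ hτ
      have := h τ hτ
      rw [cnt, cnt] at this
      by_cases h1 : (0 ≤ τ ∧ τ ≤ 1) <;> by_cases h2 : (s ≤ τ ∧ τ ≤ s + k) <;>
        simp [h1, h2] at this ⊢
    have pick : ∀ x y : ℝ, x < y → ∃ τ, x < τ ∧ τ < y ∧ ((0 ≤ τ ∧ τ ≤ 1) ↔ (s ≤ τ ∧ τ ≤ s + k)) := by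
      intro x y hxy
      obtain ⟨t, ht, h1, h2⟩ := (hD.dense_compl ℝ).exists_between hxy
      exact ⟨t, h1, h2, iff t ht⟩
    have hs : s = 0 := by
      rcases lt_trichotomy s 0 with hs | hs | hs
      · obtain ⟨t, h1, h2, h3⟩ := pick s (min 0 (s + k)) (lt_min hs (by linarith))
        rw [lt_min_iff] at h2
        have := h3.2 ⟨h1.le, h2.2.le⟩
        linarith [this.1, h2.1]
      · exact hs
      · obtain ⟨t, h1, h2, h3⟩ := pick 0 (min s 1) (lt_min hs one_pos)
        rw [lt_min_iff] at h2
        have := h3.1 ⟨h1.le, h2.2.le⟩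
        linarith [this.1, h2.1]
    subst hs
    refine ⟨?_, Or.inl ((hG0 0).2 rfl)⟩
    rcases lt_trichotomy k 1 with hs | hs | hs
    · obtain ⟨t, h1, h2, h3⟩ := pick k 1 hs
      have := h3.1 ⟨by linarith, h2.le⟩
      linarith [this.2]
    · exact hs
    · obtain ⟨t, h1, h2, h3⟩ := pick 1 k hs
      have := h3.2 ⟨by linarith, by linarith⟩
      linarith [this.2]
  · have hbne := hb.ne'
    have hD' : ((fun t : ℝ => t / b) '' D).Countable := hD.image _
    obtain ⟨e, hor⟩ := floors (l := 1 / b) (s := s / b) (k := k / b) hD' (by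
      intro t ht
      have hτ : t * b ∉ D := fun hh => ht ⟨t * b, hh, by field_simp⟩
      have := congrArg (Nat.cast : ℕ → ℤ) (h _ hτ)
      simp only [hG] at this
      rw [ncard_interval hb zero_le_one, ncard_interval hb (by linarith)] at this
      have r1 : (1 - t * b) / b = 1 / b - t := by field_simp
      have r2 : (t * b - 0) / b = t := by field_simp; ring
      have r3 : (s + k - t * b) / b = s / b + k / b - t := by field_simp
      have r4 : (t * b - s) / b = t - s / b := by field_simp
      rw [r1, r2, r3, r4] at this
      omega)
    refine ⟨?_, ?_⟩
    · field_simp at e; exact e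
    · rcases hor with ⟨n, hn⟩ | ⟨n, hn⟩
      · exact Or.inl ((hG s).2 ⟨n, by field_simp at hn; linarith⟩)
      · exact Or.inr ((hG 1).2 ⟨n, by field_simp at hn; linarith⟩)

/-! ### Opposite edges -/

/-- For a bounded remainder polygon, every edge has an opposite edge of the same length, and the
pair satisfies the two arithmetic conditions. -/
lemma opposite {V : Finset (Fin 2 → ℝ)} {S : Set (Fin 2 → ℝ)} (hP : PolyHull V S)
    {α : Fin 2 → ℝ} (hα : IsIrrationalVector α) (hB : IsBRS α S) {a b : Fin 2 → ℝ}
    (he : OEdge S a b) : ∃ a' b', OEdge S a' b' ∧ b' - a' = -(b - a) ∧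
      (∃ p ∈ segment ℝ a b, ∃ p' ∈ segment ℝ a' b', p' - p ∈ lat α) ∧
      (midpoint ℝ a' b' - midpoint ℝ a b ∉ lat α → b - a ∈ lat α) := by
  obtain ⟨R, hR⟩ := hP.comp.isBounded.subset_closedBall 0
  set u := b - a with hu
  have hne : u ≠ 0 := he.ne
  have hD := generic_dense α V S hne a
  -- parametrize the edge by `[0, 1]`
  have hseg : ∀ τ : ℝ, a + τ • u ∈ segment ℝ a b ↔ 0 ≤ τ ∧ τ ≤ 1 := by
    intro τ
    rw [segment_eq_image']
    constructor
    · rintro ⟨t, ht, h⟩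
      have : t = τ := smul_left_injective ℝ hne (add_left_cancel h)
      exact this ▸ ht
    · exact fun h => ⟨τ, h, rfl⟩
  obtain ⟨τ0, hg0, h01, h02⟩ := (hD.dense_compl ℝ).exists_between (zero_lt_one (α := ℝ))
  rw [compl_compl, Set.mem_ofPred_eq] at hg0
  have hy0 : a + τ0 • u ∈ segment ℝ a b := (hseg τ0).2 ⟨h01.le, h02.le⟩
  have hfin : {v | v ∈ lat α ∧ a + τ0 • u + v ∈ segment ℝ a b}.Finite :=
    hits_finite hα hne (he.sub.trans hR) (fun x hx x' hx' => by
      rw [← he.2] at hx hx'; exact fc_line hx hx') _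
  have hcount := hits_eq hP hα hB he hg0
  have hpos : {v | v ∈ lat α ∧ a + τ0 • u + v ∈ segment ℝ a b}.ncard ≠ 0 := by
    exact ((Set.ncard_pos hfin).2 ⟨0, lat_zero α, by simpa using hy0⟩).ne'
  rw [hcount] at hpos
  obtain ⟨v0, hv0, hv0T⟩ := Set.nonempty_of_ncard_ne_zero hpos
  rcases fc_cases hP (neg_ne_zero.2 hne) with ⟨v, hv, hT⟩ | ⟨a', b', he', hT, κ, hκ, hab⟩
  · rw [hT] at hv0T
    exact ((hg0 _ hv0).1 (by rw [Set.mem_singleton_iff.1 hv0T]; exact hv)).elim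
  have ha' : a' = b' + κ • u := by
    have : b' + κ • u = b' - κ • (-u) := by module
    rw [this, ← hab]; abel
  have hseg' : ∀ x, x ∈ segment ℝ a' b' ↔ ∃ r : ℝ, (0 ≤ r ∧ r ≤ κ) ∧ x = b' + r • u := by
    intro x
    rw [segment_symm, segment_eq_image']
    have : a' - b' = κ • u := by rw [ha']; abel
    simp only [this]
    constructor
    · rintro ⟨t, ht, rfl⟩
      exact ⟨t * κ, ⟨mul_nonneg ht.1 hκ.le, by nlinarith [ht.2]⟩, by simp only [smul_smul]⟩
    · rintro ⟨r, ⟨h1, h2⟩, rfl⟩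
      refine ⟨r / κ, ⟨by positivity, by rw [div_le_one hκ]; exact h2⟩, ?_⟩
      simp only [smul_smul]
      rw [div_mul_cancel₀ _ hκ.ne']
  rw [hT] at hv0T
  obtain ⟨r0, hr0, hvr⟩ := (hseg' _).1 hv0T
  set s := τ0 - r0 with hs
  have hb' : b' = a + v0 + s • u := by
    have : b' = a + τ0 • u + v0 - r0 • u := by rw [hvr]; abel
    rw [this, hs]; module
  obtain ⟨β, hβ0, hβ⟩ := lin_cyclic hα hne
  -- The opposite edge is the part `[s, s + κ]` of the line of the edge, translated by `v0`.
  have hone := one_dim (G := lin α u) hβ0 hβ (s := s) hκ hD (by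
    intro τ hτ
    have hg : Generic α V S u (a + τ • u) := by simpa using hτ
    have h := hits_eq hP hα hB he hg
    have i1 : Function.Injective fun g : ℝ => g • u := smul_left_injective ℝ hne
    have i2 : Function.Injective fun g : ℝ => v0 + g • u :=
      fun g g' hh => i1 (add_left_cancel hh)
    have s1 : {v | v ∈ lat α ∧ a + τ • u + v ∈ segment ℝ a b} =
        (fun g : ℝ => g • u) '' {g | g ∈ lin α u ∧ 0 ≤ τ + g ∧ τ + g ≤ 1} := by
      ext v
      simp only [Set.mem_ofPred_eq, Set.mem_image]
      constructor
      · rintro ⟨hv, hv1⟩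
        obtain ⟨t, ht, hh⟩ := (segment_eq_image' ℝ a b ▸ hv1 :
          a + τ • u + v ∈ (fun t : ℝ => a + t • (b - a)) '' Set.Icc 0 1)
        have hve : v = (t - τ) • u := by
          have : v = (a + τ • u + v) - a - τ • u := by abel
          rw [this, ← hh, hu]; module
        refine ⟨t - τ, ⟨mem_lin.2 (hve ▸ hv), ?_⟩, hve.symm⟩
        rw [add_sub_cancel]; exact ht
      · rintro ⟨g, ⟨hg1, hg2⟩, rfl⟩
        refine ⟨hg1, ?_⟩
        rw [add_assoc, ← add_smul, hseg]; exact hg2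
    have s2 : {v | v ∈ lat α ∧ a + τ • u + v ∈ fc S (-u)} =
        (fun g : ℝ => v0 + g • u) '' {g | g ∈ lin α u ∧ s ≤ τ + g ∧ τ + g ≤ s + κ} := by
      ext v
      simp only [Set.mem_ofPred_eq, Set.mem_image]
      rw [hT, hseg']
      constructor
      · rintro ⟨hv, r, hr, hh⟩
        have hve : v = v0 + (s + r - τ) • u := by
          have : v = (a + τ • u + v) - a - τ • u := by abel
          rw [this, hh, hb']; module
        refine ⟨s + r - τ, ⟨mem_lin.2 ?_, by linarith [hr.1], by linarith [hr.2]⟩, hve.symm⟩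
        have := lat_sub hv hv0
        rwa [hve, add_sub_cancel_left] at this
      · rintro ⟨g, ⟨hg1, hg2, hg3⟩, rfl⟩
        refine ⟨lat_add hv0 hg1, τ + g - s, ⟨by linarith, by linarith⟩, ?_⟩
        rw [hb']; module
    rw [s1, s2, Set.ncard_image_of_injective _ i1, Set.ncard_image_of_injective _ i2] at h
    exact h)
  obtain ⟨rfl, hor⟩ := hone
  rw [one_smul] at ha' hab
  refine ⟨a', b', he', hab, ⟨_, hy0, _, hv0T, by simpa using hv0⟩, fun hm => ?_⟩
  rcases hor with h | h
  · refine (hm ?_).elim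
    have : midpoint ℝ a' b' - midpoint ℝ a b = v0 + s • u := by
      have hbu : b = a + u := by rw [hu]; abel
      rw [midpoint_eq_smul_add, midpoint_eq_smul_add, ha', hb', hbu]
      simp only [invOf_eq_inv]
      module
    rw [this]
    exact lat_add hv0 h
  · have := mem_lin.1 h
    rwa [one_smul] at this

/-! ### Central symmetry -/

/-- The faces of `S` in the directions `u` and `-u` are exchanged by `x ↦ p - x`. -/
def Refl (S : Set (Fin 2 → ℝ)) (u p : Fin 2 → ℝ) : Prop :=
  ∀ x, x ∈ fc S (-u) ↔ p - x ∈ fc S u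

lemma fc_nonempty {V : Finset (Fin 2 → ℝ)} {S : Set (Fin 2 → ℝ)} (hP : PolyHull V S)
    {u : Fin 2 → ℝ} (hu : u ≠ 0) : (fc S u).Nonempty := by
  rcases fc_cases hP hu with ⟨v, _, h⟩ | ⟨a, b, _, h, _⟩
  · rw [h]; exact Set.singleton_nonempty v
  · rw [h]; exact ⟨a, left_mem_segment _ _ _⟩

/-- The faces of `S` in directions near `u` are contained in the face in direction `u`. -/
lemma fc_near {V : Finset (Fin 2 → ℝ)} {S : Set (Fin 2 → ℝ)} (hP : PolyHull V S)
    {u : Fin 2 → ℝ} (hu : u ≠ 0) : ∀ᶠ u' in nhds u, fc S u' ⊆ fc S u := by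
  have h1 : ∀ᶠ u' in nhds u, ∀ v ∈ V, v ∈ fc S u' → v ∈ fc S u := by
    rw [Filter.eventually_all_finset]
    intro v _
    by_cases hv : v ∈ fc S u
    · exact Filter.Eventually.of_forall fun _ _ => hv
    by_cases hvS : v ∈ S
    · have : ∃ z ∈ S, cr u z < cr u v := by
        by_contra hh
        push Not at hh
        exact hv ⟨hvS, hh⟩
      obtain ⟨z, hz, hlt⟩ := this
      have c : ∀ z : Fin 2 → ℝ, Continuous fun u' : Fin 2 → ℝ => cr u' z := fun z =>
        cr_cont'.comp (Continuous.prodMk continuous_id continuous_const)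
      filter_upwards [(isOpen_lt (c z) (c v)).mem_nhds hlt] with u' hu' hvu
      exact absurd (hvu.2 z hz) (not_le.2 hu')
    · exact Filter.Eventually.of_forall fun _ h => (hvS h.1).elim
  filter_upwards [h1, isOpen_ne.mem_nhds hu] with u' h hu'
  rcases fc_cases hP hu' with ⟨v, hv, hf⟩ | ⟨a, b, he, hf, _⟩
  · rw [hf, Set.singleton_subset_iff]
    exact h v hv (hf ▸ Set.mem_singleton v)
  · have hab := he.mem_V hP
    have ha := h a hab.1 (hf ▸ left_mem_segment _ _ _)
    have hb := h b hab.2 (hf ▸ right_mem_segment _ _ _)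
    rw [hf]
    exact ((fc_exposed S u).convex hP.conv).segment_subset ha hb

lemma fc_sub_iff {S : Set (Fin 2 → ℝ)} {u u' : Fin 2 → ℝ} (h : fc S u' ⊆ fc S u)
    (hn : (fc S u').Nonempty) (x : Fin 2 → ℝ) :
    x ∈ fc S u' ↔ x ∈ fc S u ∧ ∀ z ∈ fc S u, cr u' x ≤ cr u' z := by
  constructor
  · exact fun hx => ⟨h hx, fun z hz => hx.2 z hz.1⟩
  · rintro ⟨hx, hm⟩
    obtain ⟨x0, hx0⟩ := hn
    exact ⟨hx.1, fun z hz => (hm x0 (h hx0)).trans (hx0.2 z hz)⟩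

/-- The reflection exchanging two opposite faces also exchanges the faces in nearby directions,
because these are faces of the two faces. -/
lemma Refl.near {V : Finset (Fin 2 → ℝ)} {S : Set (Fin 2 → ℝ)} (hP : PolyHull V S)
    {u p : Fin 2 → ℝ} (hu : u ≠ 0) (h : Refl S u p) : ∀ᶠ u' in nhds u, Refl S u' p := by
  have hneg : ∀ᶠ u' in nhds u, fc S (-u') ⊆ fc S (-u) :=
    (continuous_neg.tendsto u).eventually (fc_near hP (neg_ne_zero.2 hu))
  filter_upwards [fc_near hP hu, hneg, isOpen_ne.mem_nhds hu] with u' h1 h2 hu' x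
  rw [fc_sub_iff h1 (fc_nonempty hP hu'), fc_sub_iff h2 (fc_nonempty hP (neg_ne_zero.2 hu')), h x]
  refine and_congr_right fun _ => ⟨fun hh z hz => ?_, fun hh z hz => ?_⟩
  · have := hh (p - z) ((h _).2 (by rwa [sub_sub_cancel]))
    rw [cr_neg_left, cr_neg_left, cr_sub] at this
    rw [cr_sub]; linarith
  · have := hh (p - z) ((h _).1 hz)
    rw [cr_sub, cr_sub] at this
    rw [cr_neg_left, cr_neg_left]; linarith

/-- A compact nonempty face is not invariant under a nonzero translation. -/
lemma Refl.unique {V : Finset (Fin 2 → ℝ)} {S : Set (Fin 2 → ℝ)} (hP : PolyHull V S)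
    {u p p' : Fin 2 → ℝ} (hu : u ≠ 0) (h : Refl S u p) (h' : Refl S u p') : p = p' := by
  have aux : ∀ p p', Refl S u p → Refl S u p' → ∀ i, p' i ≤ p i := by
    intro p p' h h' i
    have hc : IsCompact (fc S (-u)) := (fc_exposed S (-u)).isCompact hP.comp
    obtain ⟨x, hx, hm⟩ := hc.exists_isMaxOn (fc_nonempty hP (neg_ne_zero.2 hu))
      (continuous_apply i).continuousOn
    have h1 : p' - (p - x) ∈ fc S (-u) := (h' _).2 (by rw [sub_sub_cancel]; exact (h x).1 hx)
    have := hm h1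
    simp only [Set.mem_ofPred_eq, Pi.sub_apply] at this
    linarith
  have le1 : ∀ i, p i ≤ p' i := aux p' p h' h
  have le2 : ∀ i, p' i ≤ p i := aux p p' h h'
  exact funext fun i => le_antisymm (le1 i) (le2 i)

/-- If every edge of a polygon has an opposite edge, parallel and of equal length, then the polygon
is centrally symmetric: opposite faces are exchanged by a point reflection, whose center is a
locally constant function of the direction. -/
lemma symm_of_opposite {V : Finset (Fin 2 → ℝ)} {S : Set (Fin 2 → ℝ)} (hP : PolyHull V S)
    (h : ∀ a b, OEdge S a b → ∃ a' b', OEdge S a' b' ∧ b' - a' = -(b - a)) :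
    IsCentrallySymmetric S := by
  have edge : ∀ {a b}, OEdge S a b → ∃ a' b', OEdge S a' b' ∧ fc S (-(b - a)) = segment ℝ a' b' ∧
      b' - a' = -(b - a) := by
    intro a b he
    obtain ⟨a', b', he', hd⟩ := h a b he
    exact ⟨a', b', he', by rw [← hd, he'.2], hd⟩
  have hex : ∀ u : Fin 2 → ℝ, u ≠ 0 → ∃ p, Refl S u p := by
    intro u hu
    rcases fc_cases hP hu with ⟨v, hv, hf⟩ | ⟨a, b, he, hf, κ, hκ, hab⟩
    · rcases fc_cases hP (neg_ne_zero.2 hu) with ⟨v', hv', hf'⟩ | ⟨a, b, he, hf', κ, hκ, hab⟩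
      · refine ⟨v + v', fun x => ?_⟩
        rw [hf, hf', Set.mem_singleton_iff, Set.mem_singleton_iff]
        constructor
        · rintro rfl; abel
        · intro hx
          have : x = v + v' - (v + v' - x) := by abel
          rw [this, hx]; abel
      · obtain ⟨a', b', he', hT, _⟩ := edge he
        rw [hab, ← smul_neg, neg_neg, fc_smul S u hκ, hf] at hT
        have h1 : a' ∈ ({v} : Set (Fin 2 → ℝ)) := hT ▸ left_mem_segment _ _ _
        have h2 : b' ∈ ({v} : Set (Fin 2 → ℝ)) := hT ▸ right_mem_segment _ _ _
        exact (he'.1 (h1.trans h2.symm)).elim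
    · obtain ⟨a', b', he', hT, hd⟩ := edge he
      rw [hab, ← smul_neg, fc_smul S (-u) hκ] at hT
      refine ⟨a + a', fun x => ?_⟩
      rw [hf, hT, segment_eq_image', segment_eq_image']
      simp only [Set.mem_image]
      refine exists_congr fun t => and_congr_right fun _ => ?_
      rw [hd]
      constructor
      · rintro rfl; module
      · intro hx
        have : x = a + a' - (a + a' - x) := by abel
        rw [this, ← hx]; module
  set u0 : Fin 2 → ℝ := fun _ => 1 with hu0
  have hu0 : u0 ≠ 0 := fun hh => by simpa [u0] using congrFun hh 0
  obtain ⟨p, hp⟩ := hex u0 hu0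
  -- The set of nonzero directions is connected, and the center of the reflection is locally
  -- constant.
  have hall : ∀ u : Fin 2 → ℝ, u ≠ 0 → Refl S u p := by
    by_contra hcon
    push Not at hcon
    obtain ⟨u1, hu1, hn1⟩ := hcon
    have hconn : IsPreconnected ({0}ᶜ : Set (Fin 2 → ℝ)) :=
      (isConnected_compl_singleton_of_one_lt_rank (by simp) 0).isPreconnected
    have o1 : IsOpen {u : Fin 2 → ℝ | u ≠ 0 ∧ Refl S u p} := by
      rw [isOpen_iff_mem_nhds]
      rintro u ⟨hu, hr⟩
      exact (isOpen_ne.eventually_mem hu).and (hr.near hP hu)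
    have o2 : IsOpen {u : Fin 2 → ℝ | u ≠ 0 ∧ ¬ Refl S u p} := by
      rw [isOpen_iff_mem_nhds]
      rintro u ⟨hu, hr⟩
      obtain ⟨q, hq⟩ := hex u hu
      have hqp : q ≠ p := by rintro rfl; exact hr hq
      filter_upwards [isOpen_ne.eventually_mem hu, hq.near hP hu] with u' hu' hq'
      exact ⟨hu', fun hp' => hqp (hq'.unique hP hu' hp')⟩
    obtain ⟨u, _, h1, h2⟩ := hconn _ _ o1 o2
      (fun u hu => (em (Refl S u p)).imp (fun h => ⟨hu, h⟩) (fun h => ⟨hu, h⟩))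
      ⟨u0, hu0, hu0, hp⟩ ⟨u1, hu1, hu1, hn1⟩
    exact h2.2 h1.2
  -- A point of `S` reflected outside `S` would be separated from `S` by a line, contradicting the
  -- reflection of the faces parallel to it.
  have key : ∀ x ∈ S, p - x ∈ S := by
    intro x hx
    by_contra hpx
    obtain ⟨f, t, h1, h2⟩ := geometric_hahn_banach_point_closed hP.conv hP.closed hpx
    obtain ⟨w, hw⟩ := clm_cr f
    have hw0 : w ≠ 0 := by
      rintro rfl
      have := h2 x hx
      rw [hw] at this h1
      simp only [cr, Pi.zero_apply, zero_mul, sub_zero] at this h1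
      linarith
    obtain ⟨y, hy⟩ := fc_nonempty hP hw0
    have h3 : p - y ∈ fc S (-w) := (hall w hw0 _).2 (by rwa [sub_sub_cancel])
    have h4 := h3.2 x hx
    have h5 := h2 y hy.1
    rw [hw] at h1 h5
    rw [cr_neg_left, cr_neg_left, cr_sub] at h4
    rw [cr_sub] at h1
    linarith
  refine ⟨(2⁻¹ : ℝ) • p, fun x => ?_⟩
  rw [smul_smul, mul_inv_cancel₀ two_ne_zero, one_smul]
  exact ⟨key x, fun hx => by simpa using key _ hx⟩

/-! ### The characterization -/

/-- The two arithmetic conditions for a pair of parallel edges. -/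
def Cond (α a b a' b' : Fin 2 → ℝ) : Prop :=
  (∃ p ∈ segment ℝ a b, ∃ p' ∈ segment ℝ a' b', p' - p ∈ lat α) ∧
    (midpoint ℝ a' b' - midpoint ℝ a b ∉ lat α → b - a ∈ lat α ∧ b' - a' ∈ lat α)

lemma Cond.swap_left {α a b a' b' : Fin 2 → ℝ} (h : Cond α b a a' b') : Cond α a b a' b' := by
  unfold Cond at *
  rw [segment_symm, midpoint_comm (x := a), ← neg_sub a b, lat_neg_iff]
  exact h

lemma Cond.swap_right {α a b a' b' : Fin 2 → ℝ} (h : Cond α a b b' a') : Cond α a b a' b' := by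
  unfold Cond at *
  rw [segment_symm ℝ a' b', midpoint_comm (x := a'), ← neg_sub a' b', lat_neg_iff]
  exact h

/-- For a bounded remainder polygon, distinct parallel edges are opposite and satisfy the
arithmetic conditions. -/
lemma cond_of_brs {V : Finset (Fin 2 → ℝ)} {S : Set (Fin 2 → ℝ)} (hP : PolyHull V S)
    {α : Fin 2 → ℝ} (hα : IsIrrationalVector α) (hB : IsBRS α S) {a b a' b' : Fin 2 → ℝ}
    (he : OEdge S a b) (he' : OEdge S a' b') (hne : segment ℝ a b ≠ segment ℝ a' b')
    (hc : ∃ c : ℝ, b' - a' = c • (b - a)) : Cond α a b a' b' := by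
  obtain ⟨c, hc⟩ := hc
  obtain ⟨a1, b1, he1, hd, h1, h2⟩ := opposite hP hα hB he
  rcases lt_trichotomy c 0 with h | h | h
  · obtain ⟨rfl, rfl⟩ := OEdge.eq_of_par he1 he' (neg_pos.2 h) (by rw [hc, hd]; module)
    refine ⟨h1, fun hm => ⟨h2 hm, ?_⟩⟩
    rw [hd]; exact lat_neg (h2 hm)
  · exact (he'.ne (by rw [hc, h, zero_smul])).elim
  · obtain ⟨rfl, rfl⟩ := OEdge.eq_of_par he he' h hc
    exact (hne rfl).elim

/-- Opposite edges do not coincide, because the polygon has interior points. -/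
lemma OEdge.seg_ne {V : Finset (Fin 2 → ℝ)} {S : Set (Fin 2 → ℝ)} (hP : PolyHull V S)
    {a b a' b' : Fin 2 → ℝ} (he : OEdge S a b) (he' : OEdge S a' b') (hd : b' - a' = -(b - a)) :
    segment ℝ a b ≠ segment ℝ a' b' := by
  intro h
  obtain ⟨w, hw⟩ := hP.int
  have h1 := he.lt hw
  have h2 := he'.lt hw
  have h3 : cr (b - a) (a' - a) = 0 := cr_seg (h ▸ left_mem_segment ℝ a' b')
  rw [hd, cr_neg_left] at h2
  rw [cr_sub] at h1 h2 h3
  linarith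

/-- characterization of the convex polygons in `ℝ²` of bounded remainder. -/
theorem stmt5 (α : Fin 2 → ℝ) (hα : IsIrrationalVector α)
    (V : Finset (Fin 2 → ℝ)) (S : Set (Fin 2 → ℝ))
    (hS : S = convexHull ℝ (V : Set (Fin 2 → ℝ))) (hint : (interior S).Nonempty) :
    IsBRS α S ↔ IsCentrallySymmetric S ∧
      ∀ a b a' b' : Fin 2 → ℝ, IsEdgeOf S a b → IsEdgeOf S a' b' →
        segment ℝ a b ≠ segment ℝ a' b' → (∃ c : ℝ, b' - a' = c • (b - a)) →
        ((∃ p ∈ segment ℝ a b, ∃ p' ∈ segment ℝ a' b', p' - p ∈ lat α) ∧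
          (midpoint ℝ a' b' - midpoint ℝ a b ∉ lat α →
            b - a ∈ lat α ∧ b' - a' ∈ lat α)) := by
  have hP : PolyHull V S := ⟨hS, hint⟩
  constructor
  · intro hB
    refine ⟨symm_of_opposite hP fun a b he => ?_, ?_⟩
    · obtain ⟨a', b', he', hd, _⟩ := opposite hP hα hB he
      exact ⟨a', b', he', hd⟩
    · intro a b a' b' he he' hne ⟨c, hc⟩
      change Cond α a b a' b'
      rcases (isEdgeOf_iff hP a b).1 he with h1 | h1 <;>
        rcases (isEdgeOf_iff hP a' b').1 he' with h2 | h2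
      · exact cond_of_brs hP hα hB h1 h2 hne ⟨c, hc⟩
      · rw [segment_symm ℝ a' b'] at hne
        exact (cond_of_brs hP hα hB h1 h2 hne
          ⟨-c, by rw [← neg_sub b' a', hc]; module⟩).swap_right
      · rw [segment_symm ℝ a b] at hne
        exact (cond_of_brs hP hα hB h1 h2 hne
          ⟨-c, by rw [hc]; module⟩).swap_left
      · rw [segment_symm ℝ a b, segment_symm ℝ a' b'] at hne
        exact (cond_of_brs hP hα hB h1 h2 hne
          ⟨c, by rw [← neg_sub b' a', hc]; module⟩).swap_right.swap_left
  · rintro ⟨⟨c, hc⟩, hE⟩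
    obtain ⟨C, hC⟩ := bs_var hP (α := α) hc fun a b a' b' he he' hd => by
      obtain ⟨h1, h2⟩ := hE a b a' b' ((isEdgeOf_iff hP a b).2 (Or.inl he))
        ((isEdgeOf_iff hP a' b').2 (Or.inl he')) (he.seg_ne hP he' hd) ⟨-1, by rw [hd]; module⟩
      exact ⟨h1, fun hm => (h2 hm).1⟩
    exact brs_of_var hP hC
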